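/- Sobolev–Poincaré inequalities: let p ∈ [1, 2n/(n−2)] if n ≥ 3, or p ∈ [1, ∞) if n = 2. There is a constant C > 0, depending only on n, d, C₀, and p, such that for every u ∈ W, every x ∈ ℝⁿ, and every r > 0, with B = B(x,r) and u_B = ⨍_B u dy, one has ( m(B)^{−1} ∫_B |u − u_B|^p dm )^{1/p} ≤ C r ( m(B)^{−1} ∫_B |∇u|² dm )^{1/2}. If in addition x ∈ Γ and Tu = 0 σ-almost everywhere on Γ ∩ B(x,r), then ( r^{−d−1} ∫_B |u|^p dm )^{1/p} ≤ C r ( r^{−d−1} ∫_B |∇u|² dm )^{1/2}. -/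

import Mathlib

open MeasureTheory Metric Set Filter
open scoped ENNReal NNReal Topology

noncomputable section

/-- Euclidean space `ℝⁿ`. -/
abbrev Euc (n : ℕ) := EuclideanSpace ℝ (Fin n)

/-- `Γ ⊆ ℝⁿ` is `d`-Ahlfors regular with constant `C₀`. -/
def AhlforsRegular (n : ℕ) (d C₀ : ℝ) (Γ : Set (Euc n)) : Prop :=
  ∀ x ∈ Γ, ∀ r : ℝ, 0 < r →
    ENNReal.ofReal (C₀⁻¹ * r ^ d) ≤ μH[d] (Γ ∩ ball x r) ∧
      μH[d] (Γ ∩ ball x r) ≤ ENNReal.ofReal (C₀ * r ^ d)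

/-- The weight `w(x) = dist(x, Γ) ^ (d + 1 - n)`. -/
def weightW (n : ℕ) (d : ℝ) (Γ : Set (Euc n)) (x : Euc n) : ℝ :=
  infDist x Γ ^ (d + 1 - (n : ℝ))

/-- The measure `m` with density `w` with respect to Lebesgue measure. -/
def measW (n : ℕ) (d : ℝ) (Γ : Set (Euc n)) : Measure (Euc n) :=
  volume.withDensity fun x => ENNReal.ofReal (weightW n d Γ x)

/-- `v` is a distributional gradient of `u` on the open set `E`: for every smooth
compactly supported test function `φ` with support in `E`, `∫_E u ∇φ = -∫_E φ v`. -/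
def IsDistribGradOn {n : ℕ} (u : Euc n → ℝ) (v : Euc n → Euc n) (E : Set (Euc n)) : Prop :=
  ∀ φ : Euc n → ℝ, ContDiff ℝ (⊤ : ℕ∞) φ → HasCompactSupport φ → tsupport φ ⊆ E →
    ∫ x in E, u x • gradient φ x = -∫ x in E, φ x • v x

/-- The averages of `u` over small balls centered at `x` converge to `t`. -/
def HasTraceAt {n : ℕ} (u : Euc n → ℝ) (x : Euc n) (t : ℝ) : Prop :=
  Tendsto (fun ρ : ℝ => ⨍ y in ball x ρ, u y) (𝓝[>] (0 : ℝ)) (𝓝 t)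

/-- `u` belongs to the weighted Sobolev space `W = Ẇ^{1,2}_w(Ω)`, `Ω = Γᶜ`, with
distributional gradient `v` on `Ω` lying in `L²(Ω, m)`. -/
structure MemW (n : ℕ) (d : ℝ) (Γ : Set (Euc n)) (u : Euc n → ℝ) (v : Euc n → Euc n) :
    Prop where
  locInt : LocallyIntegrableOn u Γᶜ volume
  gradLocInt : LocallyIntegrableOn v Γᶜ volume
  isGrad : IsDistribGradOn u v Γᶜ
  l2 : ∫⁻ x in Γᶜ, ENNReal.ofReal (‖v x‖ ^ 2) ∂(measW n d Γ) < ⊤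

/-- `u` belongs to the local space `W_r(E)`: `u ∈ L¹_loc(E)` and `φ u` (extended by `0`)
belongs to `W` for every smooth compactly supported `φ` with support in `E`. -/
def MemWrOn (n : ℕ) (d : ℝ) (Γ : Set (Euc n)) (E : Set (Euc n)) (u : Euc n → ℝ) : Prop :=
  LocallyIntegrableOn u E volume ∧
    ∀ φ : Euc n → ℝ, ContDiff ℝ (⊤ : ℕ∞) φ → HasCompactSupport φ → tsupport φ ⊆ E →
      ∃ vφ : Euc n → Euc n, MemW n d Γ (fun x => φ x * u x) vφ

/-- Degenerate ellipticity and boundedness conditions for the matrix `A`. -/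
def EllipticOn (n : ℕ) (d : ℝ) (Γ : Set (Euc n)) (A : Euc n → Euc n →L[ℝ] Euc n)
    (C₁ : ℝ) : Prop :=
  ∀ x, x ∉ Γ →
    (∀ ξ ζ : Euc n, |∑ i, A x ξ i * ζ i| ≤ C₁ * weightW n d Γ x * ‖ξ‖ * ‖ζ‖) ∧
      ∀ ξ : Euc n, C₁⁻¹ * weightW n d Γ x * ‖ξ‖ ^ 2 ≤ ∑ i, A x ξ i * ξ i

/-- `u`, with gradient `v`, is a weak subsolution of `- div A ∇u = 0` on `U ⊆ Ω = Γᶜ`. -/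
def SubsolOn {n : ℕ} (Γ : Set (Euc n)) (A : Euc n → Euc n →L[ℝ] Euc n)
    (v : Euc n → Euc n) (U : Set (Euc n)) : Prop :=
  ∀ φ : Euc n → ℝ, ContDiff ℝ (⊤ : ℕ∞) φ → HasCompactSupport φ → tsupport φ ⊆ U →
    (∀ x, 0 ≤ φ x) → ∫ x in Γᶜ, ∑ i, A x (v x) i * gradient φ x i ≤ 0

/-- `u`, with gradient `v`, is a weak supersolution of `- div A ∇u = 0` on `U ⊆ Ω = Γᶜ`. -/
def SupersolOn {n : ℕ} (Γ : Set (Euc n)) (A : Euc n → Euc n →L[ℝ] Euc n)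
    (v : Euc n → Euc n) (U : Set (Euc n)) : Prop :=
  ∀ φ : Euc n → ℝ, ContDiff ℝ (⊤ : ℕ∞) φ → HasCompactSupport φ → tsupport φ ⊆ U →
    (∀ x, 0 ≤ φ x) → 0 ≤ ∫ x in Γᶜ, ∑ i, A x (v x) i * gradient φ x i

/-- `u`, with gradient `v`, is a weak solution of `- div A ∇u = 0` on `U ⊆ Ω = Γᶜ`. -/
def SolOn {n : ℕ} (Γ : Set (Euc n)) (A : Euc n → Euc n →L[ℝ] Euc n)
    (v : Euc n → Euc n) (U : Set (Euc n)) : Prop :=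
  ∀ φ : Euc n → ℝ, ContDiff ℝ (⊤ : ℕ∞) φ → HasCompactSupport φ → tsupport φ ⊆ U →
    ∫ x in Γᶜ, ∑ i, A x (v x) i * gradient φ x i = 0

lemma enn_rpow_anti {a b : ℝ≥0∞} {s : ℝ} (hs : s ≤ 0) (h : a ≤ b) : b ^ s ≤ a ^ s := by
  rw [← neg_neg s, ENNReal.rpow_neg, ENNReal.rpow_neg a]
  exact ENNReal.inv_le_inv.2 (ENNReal.rpow_le_rpow h (by linarith))

lemma aux_geom (s : ℝ) (hs : 0 < s) : ∑' j : ℕ, ((2:ℝ≥0∞) ^ (-s)) ^ j ≠ ⊤ := by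
  rw [ENNReal.tsum_geometric]
  apply ENNReal.inv_ne_top.2
  have : (2:ℝ≥0∞) ^ (-s) < 1 := ENNReal.rpow_lt_one_of_one_lt_of_neg (by norm_num) (by linarith)
  exact (tsub_pos_of_lt this).ne'

lemma aux_ofReal_two_pow (j : ℕ) (t : ℝ) : (ENNReal.ofReal ((2:ℝ)^j)) ^ t = ((2:ℝ≥0∞) ^ t) ^ j := by
  rw [ENNReal.ofReal_pow (by norm_num), ENNReal.ofReal_ofNat, ← ENNReal.rpow_natCast,
    ← ENNReal.rpow_mul, mul_comm, ENNReal.rpow_mul, ENNReal.rpow_natCast]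

/-- local kernel bound -/
lemma kernel_local (β κ : ℝ) (hκ : 0 ≤ κ) (hβ : κ < β) : ∃ C : ℝ≥0∞, C ≠ ⊤ ∧
    ∀ {X : Type} [PseudoMetricSpace X] [MeasurableSpace X] [OpensMeasurableSpace X]
      (μ : Measure X) (a : X) (A : ℝ≥0∞) (R : ℝ), 0 < R →
      (∀ s, 0 < s → s ≤ R → μ (ball a s) ≤ A * ENNReal.ofReal s ^ β) →
      ∫⁻ y in ball a R, edist y a ^ (-κ) ∂μ ≤ C * A * ENNReal.ofReal R ^ (β - κ) := by
  refine ⟨2 ^ κ * ∑' j : ℕ, ((2:ℝ≥0∞) ^ (-(β - κ))) ^ j, ENNReal.mul_ne_top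
    (ENNReal.rpow_ne_top_of_nonneg hκ (by norm_num)) (aux_geom _ (by linarith)), ?_⟩
  intro X _ _ _ μ a A R hR h
  set ρ : ℕ → ℝ := fun j => R / 2 ^ j with hρ
  have hρ0 : ∀ j, 0 < ρ j := fun j => by positivity
  have hR0 : ENNReal.ofReal R ≠ 0 := by simpa using hR
  have hRt : ENNReal.ofReal R ≠ ⊤ := ENNReal.ofReal_ne_top
  have hρe : ∀ (j : ℕ) (t : ℝ), ENNReal.ofReal (ρ j) ^ t = ENNReal.ofReal R ^ t * ((2:ℝ≥0∞) ^ (-t)) ^ j := by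
    intro j t
    rw [hρ]; simp only
    rw [div_eq_mul_inv, ENNReal.ofReal_mul hR.le, ENNReal.mul_rpow_of_ne_top hRt ENNReal.ofReal_ne_top,
      ENNReal.ofReal_inv_of_pos (by positivity), ENNReal.inv_rpow, ← ENNReal.rpow_neg,
      aux_ofReal_two_pow]
  have key : ∀ y ∈ ball a R, edist y a ^ (-κ) ≤
      ∑' j : ℕ, (ball a (ρ j)).indicator (fun _ => ENNReal.ofReal (ρ (j+1)) ^ (-κ)) y := by
    intro y hy
    by_cases h0 : dist y a = 0
    · have : ∀ j, y ∈ ball a (ρ j) := fun j => by rw [mem_ball, h0]; exact hρ0 j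
      have h2 : ∀ j, ENNReal.ofReal (ρ 1) ^ (-κ) ≤
          (ball a (ρ j)).indicator (fun _ => ENNReal.ofReal (ρ (j+1)) ^ (-κ)) y := by
        intro j
        rw [indicator_of_mem (this j)]
        apply enn_rpow_anti (by linarith)
        apply ENNReal.ofReal_le_ofReal
        simp only [hρ]
        gcongr
        · norm_num
        · omega
      have h3 : ∑' j : ℕ, ENNReal.ofReal (ρ 1) ^ (-κ) = ⊤ := by
        apply ENNReal.tsum_const_eq_top_of_ne_zero
        exact (ENNReal.rpow_pos (by simpa using hρ0 1) ENNReal.ofReal_ne_top).ne'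
      have h4 := ENNReal.tsum_le_tsum h2
      rw [h3] at h4
      rw [top_le_iff.1 h4]; exact le_top
    · have hd : 0 < dist y a := lt_of_le_of_ne dist_nonneg (Ne.symm h0)
      have hy' : dist y a < R := hy
      obtain ⟨j, h1, h2⟩ := exists_nat_pow_near_of_lt_one (x := dist y a / R) (y := (1/2:ℝ))
        (by positivity) (by rw [div_le_one hR]; exact hy'.le) (by norm_num) (by norm_num)
      -- (1/2)^(j+1) < x ≤ (1/2)^j
      have h1' : ρ (j+1) < dist y a := by
        rw [lt_div_iff₀ hR] at h1
        have : ρ (j+1) = (1/2:ℝ)^(j+1) * R := by simp [hρ]; ring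
        linarith
      have h2' : dist y a ≤ ρ j := by
        rw [div_le_iff₀ hR] at h2
        have : ρ j = (1/2:ℝ)^(j) * R := by simp [hρ]; ring
        linarith
      -- choose strict
      rcases lt_or_eq_of_le h2' with h3 | h3
      · refine le_trans ?_ (ENNReal.le_tsum j)
        rw [indicator_of_mem (show y ∈ ball a (ρ j) from h3)]
        apply enn_rpow_anti (by linarith)
        rw [edist_dist]; exact ENNReal.ofReal_le_ofReal h1'.le
      · rcases j with _ | j
        · simp [hρ] at h3; linarith
        refine le_trans ?_ (ENNReal.le_tsum j)
        have : y ∈ ball a (ρ j) := by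
          rw [mem_ball, h3]; simp only [hρ, pow_succ]
          rw [div_lt_div_iff_of_pos_left hR (by positivity) (by positivity)]
          have : (0:ℝ) < 2^j := by positivity
          linarith
        rw [indicator_of_mem this]
        apply enn_rpow_anti (by linarith)
        rw [edist_dist, h3]
  calc ∫⁻ y in ball a R, edist y a ^ (-κ) ∂μ
      ≤ ∫⁻ y in ball a R, ∑' j : ℕ, (ball a (ρ j)).indicator
          (fun _ => ENNReal.ofReal (ρ (j+1)) ^ (-κ)) y ∂μ :=
        setLIntegral_mono' measurableSet_ball key
    _ ≤ ∫⁻ y, ∑' j : ℕ, (ball a (ρ j)).indicator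
          (fun _ => ENNReal.ofReal (ρ (j+1)) ^ (-κ)) y ∂μ := setLIntegral_le_lintegral _ _
    _ = ∑' j : ℕ, ∫⁻ y, (ball a (ρ j)).indicator
          (fun _ => ENNReal.ofReal (ρ (j+1)) ^ (-κ)) y ∂μ :=
        lintegral_tsum fun j => (measurable_const.indicator measurableSet_ball).aemeasurable
    _ = ∑' j : ℕ, ENNReal.ofReal (ρ (j+1)) ^ (-κ) * μ (ball a (ρ j)) := by
        congr 1; ext j
        rw [lintegral_indicator measurableSet_ball, setLIntegral_const]
    _ ≤ ∑' j : ℕ, (2 ^ κ * A * ENNReal.ofReal R ^ (β - κ)) * ((2:ℝ≥0∞) ^ (-(β - κ))) ^ j := by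
        apply ENNReal.tsum_le_tsum; intro j
        have hj : ρ j ≤ R := by
          simp only [hρ]; exact div_le_self hR.le (one_le_pow₀ (by norm_num))
        refine (mul_le_mul_right (h _ (hρ0 j) hj) _).trans (le_of_eq ?_)
        rw [hρe, hρe, neg_neg, pow_succ]
        rw [sub_eq_add_neg β κ, ENNReal.rpow_add _ _ hR0 hRt, neg_add, neg_neg,
          ENNReal.rpow_add _ _ (by norm_num) (by norm_num), mul_pow]
        ring
    _ = _ := by rw [ENNReal.tsum_mul_left]; ring

/-- far kernel bound -/
lemma kernel_far (β κ : ℝ) (hβ0 : 0 ≤ β) (hβ : β < κ) : ∃ C : ℝ≥0∞, C ≠ ⊤ ∧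
    ∀ {X : Type} [PseudoMetricSpace X] [MeasurableSpace X] [OpensMeasurableSpace X]
      (μ : Measure X) (a : X) (A : ℝ≥0∞) (R : ℝ), 0 < R →
      (∀ s, R ≤ s → μ (ball a s) ≤ A * ENNReal.ofReal s ^ β) →
      ∫⁻ y in (ball a R)ᶜ, edist y a ^ (-κ) ∂μ ≤ C * A * ENNReal.ofReal R ^ (β - κ) := by
  refine ⟨2 ^ β * ∑' j : ℕ, ((2:ℝ≥0∞) ^ (-(κ - β))) ^ j, ENNReal.mul_ne_top
    (ENNReal.rpow_ne_top_of_nonneg hβ0 (by norm_num)) (aux_geom _ (by linarith)), ?_⟩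
  intro X _ _ _ μ a A R hR h
  set ρ : ℕ → ℝ := fun j => R * 2 ^ j with hρ
  have hρ0 : ∀ j, 0 < ρ j := fun j => by positivity
  have hR0 : ENNReal.ofReal R ≠ 0 := by simpa using hR
  have hRt : ENNReal.ofReal R ≠ ⊤ := ENNReal.ofReal_ne_top
  have hρe : ∀ (j : ℕ) (t : ℝ), ENNReal.ofReal (ρ j) ^ t = ENNReal.ofReal R ^ t * ((2:ℝ≥0∞) ^ t) ^ j := by
    intro j t
    rw [hρ]; simp only
    rw [ENNReal.ofReal_mul hR.le, ENNReal.mul_rpow_of_ne_top hRt ENNReal.ofReal_ne_top,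
      aux_ofReal_two_pow]
  have key : ∀ y ∈ (ball a R)ᶜ, edist y a ^ (-κ) ≤
      ∑' j : ℕ, (ball a (ρ (j+1))).indicator (fun _ => ENNReal.ofReal (ρ j) ^ (-κ)) y := by
    intro y hy
    have hy' : R ≤ dist y a := by simpa using hy
    obtain ⟨j, h1, h2⟩ := exists_nat_pow_near (x := dist y a / R) (y := (2:ℝ))
      (by rwa [one_le_div hR]) (by norm_num)
    rw [le_div_iff₀ hR] at h1
    rw [div_lt_iff₀ hR] at h2
    refine le_trans ?_ (ENNReal.le_tsum j)
    rw [indicator_of_mem (show y ∈ ball a (ρ (j+1)) by rw [mem_ball]; simp only [hρ]; linarith)]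
    apply enn_rpow_anti (by linarith)
    rw [edist_dist]; apply ENNReal.ofReal_le_ofReal; simp only [hρ]; linarith
  calc ∫⁻ y in (ball a R)ᶜ, edist y a ^ (-κ) ∂μ
      ≤ ∫⁻ y in (ball a R)ᶜ, ∑' j : ℕ, (ball a (ρ (j+1))).indicator
          (fun _ => ENNReal.ofReal (ρ j) ^ (-κ)) y ∂μ :=
        setLIntegral_mono' measurableSet_ball.compl key
    _ ≤ ∫⁻ y, ∑' j : ℕ, (ball a (ρ (j+1))).indicator
          (fun _ => ENNReal.ofReal (ρ j) ^ (-κ)) y ∂μ := setLIntegral_le_lintegral _ _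
    _ = ∑' j : ℕ, ∫⁻ y, (ball a (ρ (j+1))).indicator
          (fun _ => ENNReal.ofReal (ρ j) ^ (-κ)) y ∂μ :=
        lintegral_tsum fun j => (measurable_const.indicator measurableSet_ball).aemeasurable
    _ = ∑' j : ℕ, ENNReal.ofReal (ρ j) ^ (-κ) * μ (ball a (ρ (j+1))) := by
        congr 1; ext j
        rw [lintegral_indicator measurableSet_ball, setLIntegral_const]
    _ ≤ ∑' j : ℕ, (2 ^ β * A * ENNReal.ofReal R ^ (β - κ)) * ((2:ℝ≥0∞) ^ (-(κ - β))) ^ j := by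
        apply ENNReal.tsum_le_tsum; intro j
        have hj : R ≤ ρ (j+1) := by
          simp only [hρ]; exact le_mul_of_one_le_right hR.le (one_le_pow₀ (by norm_num))
        refine (mul_le_mul_right (h _ hj) _).trans (le_of_eq ?_)
        rw [hρe, hρe, pow_succ]
        rw [sub_eq_add_neg β κ, ENNReal.rpow_add _ _ hR0 hRt, neg_sub, sub_eq_add_neg β κ,
          ENNReal.rpow_add _ _ (by norm_num) (by norm_num), mul_pow]
        ring
    _ = _ := by rw [ENNReal.tsum_mul_left]; ring

/-- volume of the unit ball -/
def VB (n : ℕ) : ℝ≥0∞ := volume (ball (0 : Euc n) 1)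

lemma VB_ne_top (n : ℕ) : VB n ≠ ⊤ := measure_ball_lt_top.ne
lemma VB_ne_zero (n : ℕ) : VB n ≠ 0 := (measure_ball_pos _ _ one_pos).ne'

lemma vol_ball (n : ℕ) (x : Euc n) (s : ℝ) (hs : 0 < s) :
    volume (ball x s) = VB n * ENNReal.ofReal s ^ (n:ℝ) := by
  rw [Measure.addHaar_ball_of_pos _ _ hs, finrank_euclideanSpace_fin, mul_comm, VB,
    ENNReal.ofReal_pow hs.le, ENNReal.rpow_natCast]

lemma avg_kernel (n : ℕ) (hn : 2 ≤ n) : ∃ C : ℝ≥0∞, C ≠ ⊤ ∧ ∀ (z t : Euc n) (ρ : ℝ), 0 < ρ →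
    ∫⁻ y in ball z ρ, edist y t ^ (-((n:ℝ)-1)) ≤
      C * ENNReal.ofReal ρ ^ (n:ℝ) * edist z t ^ (-((n:ℝ)-1)) := by
  have hn' : (2:ℝ) ≤ n := by exact_mod_cast hn
  obtain ⟨C, hC, h⟩ := kernel_local (n:ℝ) ((n:ℝ)-1) (by linarith) (by linarith)
  refine ⟨2 ^ ((n:ℝ)-1) * VB n + C * VB n * 3 ^ (1:ℝ) * 2 ^ ((n:ℝ)-1), ?_, ?_⟩
  · apply ENNReal.add_ne_top.2 ⟨?_, ?_⟩
    · exact ENNReal.mul_ne_top (ENNReal.rpow_ne_top_of_nonneg (by linarith) (by norm_num)) (VB_ne_top n)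
    · exact ENNReal.mul_ne_top (ENNReal.mul_ne_top (ENNReal.mul_ne_top hC (VB_ne_top n))
        (ENNReal.rpow_ne_top_of_nonneg (by linarith) (by norm_num)))
        (ENNReal.rpow_ne_top_of_nonneg (by linarith) (by norm_num))
  intro z t ρ hρ
  have hr0 : ENNReal.ofReal ρ ≠ 0 := by simpa using hρ
  have hrt : ENNReal.ofReal ρ ≠ ⊤ := ENNReal.ofReal_ne_top
  rw [add_mul, add_mul]
  rcases le_or_gt (2 * ρ) (dist z t) with hd | hd
  · refine le_trans ?_ le_self_add
    calc ∫⁻ y in ball z ρ, edist y t ^ (-((n:ℝ)-1))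
        ≤ ∫⁻ y in ball z ρ, (2 ^ ((n:ℝ)-1) * edist z t ^ (-((n:ℝ)-1))) := by
          apply setLIntegral_mono' measurableSet_ball
          intro y hy
          have h1 : dist z t ≤ 2 * dist y t := by
            have := dist_triangle z y t
            rw [mem_ball, dist_comm] at hy
            linarith
          have h2 : edist z t / 2 ≤ edist y t := by
            rw [edist_dist, edist_dist]
            apply ENNReal.div_le_of_le_mul'
            have := ENNReal.ofReal_le_ofReal h1
            rwa [ENNReal.ofReal_mul (by norm_num), ENNReal.ofReal_ofNat] at this
          refine (enn_rpow_anti (by linarith) h2).trans (le_of_eq ?_)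
          rw [div_eq_mul_inv, ENNReal.mul_rpow_of_ne_top (edist_ne_top _ _) (by simp),
            ENNReal.inv_rpow, ← ENNReal.rpow_neg, neg_neg, mul_comm]
      _ = _ := by rw [setLIntegral_const, vol_ball _ _ _ hρ]; ring
  · refine le_trans ?_ le_add_self
    have hsub : ball z ρ ⊆ ball t (3 * ρ) := by
      apply ball_subset_ball'; linarith
    calc ∫⁻ y in ball z ρ, edist y t ^ (-((n:ℝ)-1))
        ≤ ∫⁻ y in ball t (3 * ρ), edist y t ^ (-((n:ℝ)-1)) := lintegral_mono_set hsub
      _ ≤ C * VB n * ENNReal.ofReal (3 * ρ) ^ ((n:ℝ) - ((n:ℝ)-1)) :=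
          h volume t (VB n) (3 * ρ) (by positivity) (fun s hs _ => (vol_ball n t s hs).le)
      _ = C * VB n * 3 ^ (1:ℝ) * (2 ^ ((n:ℝ)-1) * (ENNReal.ofReal ρ ^ (n:ℝ) *
            ENNReal.ofReal (2 * ρ) ^ (-((n:ℝ)-1)))) := by
          rw [ENNReal.ofReal_mul (by norm_num), ENNReal.ofReal_mul (by norm_num),
            ENNReal.mul_rpow_of_ne_top (by simp) hrt, ENNReal.mul_rpow_of_ne_top (by simp) hrt]
          have : (n:ℝ) - ((n:ℝ)-1) = 1 := by ring
          rw [this]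
          have h1 : (2:ℝ≥0∞) ^ ((n:ℝ)-1) * 2 ^ (-((n:ℝ)-1)) = 1 := by
            rw [← ENNReal.rpow_add _ _ (by norm_num) (by norm_num)]; simp
          have h2 : ENNReal.ofReal ρ ^ (n:ℝ) * ENNReal.ofReal ρ ^ (-((n:ℝ)-1)) =
              ENNReal.ofReal ρ ^ (1:ℝ) := by
            rw [← ENNReal.rpow_add _ _ hr0 hrt]; simp
          rw [← h2]
          simp only [ENNReal.ofReal_ofNat]
          calc _ = C * VB n * (3 ^ (1:ℝ) * (ENNReal.ofReal ρ ^ (n:ℝ) *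
                ENNReal.ofReal ρ ^ (-((n:ℝ)-1)))) * 1 := by ring
            _ = _ := by rw [← h1]; ring
      _ ≤ C * VB n * 3 ^ (1:ℝ) * (2 ^ ((n:ℝ)-1) * (ENNReal.ofReal ρ ^ (n:ℝ) *
            edist z t ^ (-((n:ℝ)-1)))) := by
          gcongr _ * (_ * (_ * ?_))
          apply enn_rpow_anti (by linarith)
          rw [edist_dist]; exact ENNReal.ofReal_le_ofReal hd.le
      _ = _ := by ring

/-! maximal function -/

def MF {n : ℕ} (g : Euc n → ℝ≥0∞) (x : Euc n) : ℝ≥0∞ :=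
  ⨆ s : {s : ℝ // 0 < s}, ENNReal.ofReal s ^ (-(n:ℝ)) * ∫⁻ y in ball x s, g y

lemma lint_ball_le_MF {n : ℕ} (g : Euc n → ℝ≥0∞) (x : Euc n) (s : ℝ) (hs : 0 < s) :
    ∫⁻ y in ball x s, g y ≤ MF g x * ENNReal.ofReal s ^ (n:ℝ) := by
  have h := le_iSup (fun s : {s : ℝ // 0 < s} =>
    ENNReal.ofReal s ^ (-(n:ℝ)) * ∫⁻ y in ball x s, g y) ⟨s, hs⟩
  have h0 : ENNReal.ofReal s ≠ 0 := by simpa using hs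
  have ht : ENNReal.ofReal s ≠ ⊤ := ENNReal.ofReal_ne_top
  calc ∫⁻ y in ball x s, g y = (ENNReal.ofReal s ^ (-(n:ℝ)) * ∫⁻ y in ball x s, g y) *
        ENNReal.ofReal s ^ (n:ℝ) := by
        rw [mul_right_comm, ← ENNReal.rpow_add _ _ h0 ht]; simp
    _ ≤ _ := by gcongr; exact h

lemma MF_weak {n : ℕ} (hn : 1 ≤ n) (g : Euc n → ℝ≥0∞) (l : ℝ≥0∞) (hl0 : l ≠ 0) (hlt : l ≠ ⊤) :
    volume {x | l < MF g x} ≤ VB n * 4 ^ (n:ℝ) * l⁻¹ * ∫⁻ y, g y := by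
  have hn0 : (0:ℝ) < n := by exact_mod_cast hn
  by_cases hg : ∫⁻ y, g y = ⊤
  · rw [hg, ENNReal.mul_top]; · exact le_top
    refine mul_ne_zero (mul_ne_zero (VB_ne_zero n) ?_) (ENNReal.inv_ne_zero.2 hlt)
    exact (ENNReal.rpow_pos (by norm_num) (by norm_num)).ne'
  have hex : ∀ x, ∃ s : ℝ, x ∈ {x | l < MF g x} →
      0 < s ∧ l * ENNReal.ofReal s ^ (n:ℝ) ≤ ∫⁻ y in ball x s, g y := by
    intro x
    by_cases hx : l < MF g x
    · obtain ⟨⟨s, hs⟩, h⟩ := lt_iSup_iff.1 hx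
      refine ⟨s, fun _ => ⟨hs, ?_⟩⟩
      have h0 : ENNReal.ofReal s ≠ 0 := by simpa using hs
      have ht : ENNReal.ofReal s ≠ ⊤ := ENNReal.ofReal_ne_top
      calc l * ENNReal.ofReal s ^ (n:ℝ) ≤ (ENNReal.ofReal s ^ (-(n:ℝ)) * ∫⁻ y in ball x s, g y) *
            ENNReal.ofReal s ^ (n:ℝ) := by gcongr
        _ = _ := by rw [mul_right_comm, ← ENNReal.rpow_add _ _ h0 ht]; simp
    · exact ⟨0, fun h => absurd h hx⟩
  choose s hs using hex
  have hbd : ∀ x ∈ {x | l < MF g x}, s x ≤ ((l⁻¹ * ∫⁻ y, g y) ^ (1/(n:ℝ))).toReal := by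
    intro x hx
    have h1 : ENNReal.ofReal (s x) ^ (n:ℝ) ≤ l⁻¹ * ∫⁻ y, g y := by
      rw [← ENNReal.mul_le_iff_le_inv hl0 hlt]
      exact (hs x hx).2.trans (setLIntegral_le_lintegral _ _)
    have h2 : ENNReal.ofReal (s x) ≤ (l⁻¹ * ∫⁻ y, g y) ^ (1/(n:ℝ)) := by
      rw [one_div, ENNReal.le_rpow_inv_iff hn0]; exact h1
    rw [← ENNReal.ofReal_le_iff_le_toReal]; · exact h2
    apply ENNReal.rpow_ne_top_of_nonneg (by positivity)
    exact ENNReal.mul_ne_top (ENNReal.inv_ne_top.2 hl0) hg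
  obtain ⟨u, hut, hdis, hcov⟩ := Vitali.exists_disjoint_subfamily_covering_enlargement_ball
    {x | l < MF g x} id s _ hbd 4 (by norm_num)
  simp only [id] at hdis hcov
  have hcount : u.Countable := hdis.countable_of_isOpen (fun _ _ => isOpen_ball)
    (fun a ha => ⟨a, mem_ball_self (hs a (hut ha)).1⟩)
  have hsub : {x | l < MF g x} ⊆ ⋃ b ∈ u, ball b (4 * s b) := by
    intro x hx
    obtain ⟨b, hb, h⟩ := hcov x hx
    exact mem_biUnion hb (h (mem_ball_self (hs x hx).1))
  have := hcount.to_subtype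
  calc volume {x | l < MF g x} ≤ volume (⋃ b ∈ u, ball b (4 * s b)) := measure_mono hsub
    _ ≤ ∑' b : u, volume (ball (b:Euc n) (4 * s b)) := measure_biUnion_le _ hcount _
    _ ≤ ∑' b : u, VB n * 4 ^ (n:ℝ) * l⁻¹ * ∫⁻ y in ball (b:Euc n) (s b), g y := by
        apply ENNReal.tsum_le_tsum
        rintro ⟨b, hb⟩
        have h1 := hs b (hut hb)
        simp only
        rw [vol_ball _ _ _ (by linarith [h1.1]), ENNReal.ofReal_mul (by norm_num),
          ENNReal.mul_rpow_of_ne_top (by simp) (by simp), ENNReal.ofReal_ofNat]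
        have h2 : ENNReal.ofReal (s b) ^ (n:ℝ) ≤ l⁻¹ * ∫⁻ y in ball b (s b), g y := by
          rw [← ENNReal.mul_le_iff_le_inv hl0 hlt]; exact h1.2
        calc _ ≤ VB n * (4 ^ (n:ℝ) * (l⁻¹ * ∫⁻ y in ball b (s b), g y)) := by gcongr
          _ = _ := by ring
    _ = VB n * 4 ^ (n:ℝ) * l⁻¹ * ∫⁻ y in ⋃ b ∈ u, ball b (s b), g y := by
        rw [ENNReal.tsum_mul_left, lintegral_biUnion hcount (fun _ _ => measurableSet_ball) hdis]
    _ ≤ _ := mul_le_mul_right (setLIntegral_le_lintegral _ _) _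

lemma dy1 (x : ℝ≥0∞) : x ^ 2 ≤ ∑' k : ℤ, (2:ℝ≥0∞) ^ (2*(k+1)) * (if (2:ℝ≥0∞) ^ k < x then 1 else 0) := by
  by_cases h0 : x = 0
  · simp [h0]
  by_cases ht : x = ⊤
  · have h1 : ∑' k : ℕ, (1:ℝ≥0∞) ≤
      ∑' k : ℤ, (2:ℝ≥0∞) ^ (2*(k+1)) * (if (2:ℝ≥0∞) ^ k < x then 1 else 0) := by
      refine le_trans ?_ (ENNReal.tsum_comp_le_tsum_of_injective (f := fun k : ℕ => (k:ℤ))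
        Nat.cast_injective _)
      apply ENNReal.tsum_le_tsum
      intro k
      have : (2:ℝ≥0∞) ^ (k:ℤ) < x := by
        rw [ht]; exact ENNReal.zpow_lt_top (by norm_num) (by norm_num) _
      rw [if_pos this, mul_one]
      have : (2 * ((k:ℤ) + 1)) = ((2 * (k+1) : ℕ) : ℤ) := by push_cast; ring
      rw [this, zpow_natCast]
      exact one_le_pow₀ (by norm_num)
    rw [ENNReal.tsum_const_eq_top_of_ne_zero one_ne_zero] at h1
    rw [top_le_iff.1 h1]; exact le_top
  · obtain ⟨k, hk1, hk2⟩ := ENNReal.exists_mem_Ioc_zpow h0 ht (y := 2) (by norm_num) (by norm_num)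
    refine le_trans ?_ (ENNReal.le_tsum k)
    rw [if_pos hk1, mul_one]
    calc x ^ 2 ≤ ((2:ℝ≥0∞) ^ (k+1)) ^ 2 := by gcongr
      _ = _ := by 
          rw [two_mul, ENNReal.zpow_add (by norm_num) (by norm_num) (k+1) (k+1), sq]

lemma dy2 (x : ℝ≥0∞) : ∑' k : ℤ, (2:ℝ≥0∞) ^ k * (if (2:ℝ≥0∞) ^ k < x then 1 else 0) ≤ 2 * x := by
  by_cases h0 : x = 0
  · simp [h0]
  by_cases ht : x = ⊤
  · rw [ht, ENNReal.mul_top (by norm_num)]; exact le_top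
  obtain ⟨m, hk1, hk2⟩ := ENNReal.exists_mem_Ioc_zpow h0 ht (y := 2) (by norm_num) (by norm_num)
  have hinj : Function.Injective (fun j : ℕ => m - (j:ℤ)) := by intro a b h; simp at h; exact h
  rw [← hinj.tsum_eq]
  · calc ∑' j : ℕ, (2:ℝ≥0∞) ^ (m - (j:ℤ)) * (if (2:ℝ≥0∞) ^ (m - (j:ℤ)) < x then 1 else 0)
        ≤ ∑' j : ℕ, (2:ℝ≥0∞) ^ m * (2⁻¹) ^ j := by
          apply ENNReal.tsum_le_tsum; intro j
          calc _ ≤ (2:ℝ≥0∞) ^ (m - (j:ℤ)) * 1 := by gcongr; split_ifs <;> simp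
            _ = _ := by
              rw [mul_one, ENNReal.zpow_sub (by norm_num) (by norm_num), zpow_natCast,
                ENNReal.inv_pow]
      _ = (2:ℝ≥0∞) ^ m * 2 := by rw [ENNReal.tsum_mul_left, ENNReal.tsum_geometric,
            ENNReal.one_sub_inv_two, inv_inv]
      _ ≤ 2 * x := by rw [mul_comm]; gcongr
  · intro k hk
    have : (2:ℝ≥0∞) ^ k < x := by
      by_contra h
      simp [h] at hk
    have h2 : (2:ℝ≥0∞) ^ k < 2 ^ (m+1) := this.trans_le hk2
    have h3 : k < m + 1 := by
      by_contra h
      push Not at h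
      exact absurd h2 (not_lt.2 (ENNReal.zpow_le_of_le (by norm_num) h))
    exact ⟨(m - k).toNat, by simp; omega⟩

lemma MF_strong (n : ℕ) (hn : 1 ≤ n) : ∃ C : ℝ≥0∞, C ≠ ⊤ ∧ ∀ g : Euc n → ℝ≥0∞, Measurable g →
    ∫⁻ x, MF g x ^ 2 ≤ C * ∫⁻ x, g x ^ 2 := by
  set C₁ := VB n * 4 ^ (n:ℝ) with hC₁
  have hC₁t : C₁ ≠ ⊤ := ENNReal.mul_ne_top (VB_ne_top n)
    (ENNReal.rpow_ne_top_of_nonneg (by positivity) (by norm_num))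
  refine ⟨4 * (2 * C₁) * (2 * (2 * VB n)), ?_, ?_⟩
  · have := VB_ne_top n
    exact ENNReal.mul_ne_top (ENNReal.mul_ne_top (by norm_num) (ENNReal.mul_ne_top (by norm_num) hC₁t))
      (ENNReal.mul_ne_top (by norm_num) (ENNReal.mul_ne_top (by norm_num) this))
  intro g hg
  have hmg : ∀ k : ℤ, MeasurableSet {y | (2:ℝ≥0∞) ^ k < 2 * VB n * g y} := fun k =>
    measurableSet_lt measurable_const (hg.const_mul _)
  have hweak : ∀ k : ℤ, volume {x | (2:ℝ≥0∞) ^ k < MF g x} ≤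
      2 * C₁ * (2 ^ k)⁻¹ * ∫⁻ y, ({y | (2:ℝ≥0∞) ^ k < 2 * VB n * g y}).indicator g y := by
    intro k
    set l : ℝ≥0∞ := 2 ^ k with hl
    have hl0 : l ≠ 0 := (ENNReal.zpow_pos (by norm_num) (by norm_num) _).ne'
    have hlt : l ≠ ⊤ := (ENNReal.zpow_lt_top (by norm_num) (by norm_num) _).ne
    set g' := ({y | l < 2 * VB n * g y}).indicator g with hg'
    have hsub : {x | l < MF g x} ⊆ {x | l / 2 < MF g' x} := by
      intro x hx
      have h1 : MF g x ≤ MF g' x + l / 2 := by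
        apply iSup_le
        rintro ⟨s, hs⟩
        have h0 : ENNReal.ofReal s ≠ 0 := by simpa using hs
        have ht : ENNReal.ofReal s ≠ ⊤ := ENNReal.ofReal_ne_top
        have h2 : ∀ y, g y ≤ g' y + l / (2 * VB n) := by
          intro y
          by_cases hy : l < 2 * VB n * g y
          · rw [hg', indicator_of_mem (show y ∈ {y | l < 2 * VB n * g y} from hy)]; exact le_self_add
          · refine le_trans ?_ le_add_self
            rw [ENNReal.le_div_iff_mul_le (Or.inl (mul_ne_zero (by norm_num) (VB_ne_zero n)))
              (Or.inl (ENNReal.mul_ne_top (by norm_num) (VB_ne_top n)))]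
            rw [mul_comm]; exact not_lt.1 hy
        simp only
        calc ENNReal.ofReal s ^ (-(n:ℝ)) * ∫⁻ y in ball x s, g y
            ≤ ENNReal.ofReal s ^ (-(n:ℝ)) * ∫⁻ y in ball x s, (g' y + l / (2 * VB n)) := by
              gcongr; exact h2 _
          _ = ENNReal.ofReal s ^ (-(n:ℝ)) * (∫⁻ y in ball x s, g' y) +
              (ENNReal.ofReal s ^ (-(n:ℝ)) * ENNReal.ofReal s ^ (n:ℝ)) *
                (l / (2 * VB n) * VB n) := by
              rw [lintegral_add_right _ measurable_const, setLIntegral_const, vol_ball _ _ _ hs]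
              ring
          _ ≤ MF g' x + l / 2 := by
              apply add_le_add
              · exact le_iSup (fun s : {s : ℝ // 0 < s} =>
                  ENNReal.ofReal s ^ (-(n:ℝ)) * ∫⁻ y in ball x s, g' y) ⟨s, hs⟩
              · rw [← ENNReal.rpow_add _ _ h0 ht]
                simp only [neg_add_cancel, ENNReal.rpow_zero, one_mul]
                rw [div_eq_mul_inv, ENNReal.mul_inv (Or.inl (by norm_num)) (Or.inl (by norm_num)),
                  mul_assoc, mul_assoc, ENNReal.inv_mul_cancel (VB_ne_zero n) (VB_ne_top n), mul_one,
                  ← div_eq_mul_inv]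
      by_contra hx2
      have h3 : MF g' x ≤ l / 2 := not_lt.1 hx2
      have h4 : MF g x ≤ l := by
        calc _ ≤ l / 2 + l / 2 := h1.trans (by gcongr)
          _ = l := ENNReal.add_halves l
      exact absurd hx (not_lt.2 h4)
    calc _ ≤ volume {x | l / 2 < MF g' x} := measure_mono hsub
      _ ≤ C₁ * (l/2)⁻¹ * ∫⁻ y, g' y := MF_weak hn g' _ (by simp [hl0])
          (ENNReal.div_ne_top hlt (by norm_num))
      _ = _ := by
          rw [ENNReal.inv_div (Or.inl (by norm_num)) (Or.inl (by norm_num)), div_eq_mul_inv]; ring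
  calc ∫⁻ x, MF g x ^ 2
      ≤ ∫⁻ x, ∑' k : ℤ, (toMeasurable volume {x | (2:ℝ≥0∞) ^ k < MF g x}).indicator
          (fun _ => (2:ℝ≥0∞) ^ (2*(k+1))) x := by
        apply lintegral_mono; intro x
        refine (dy1 _).trans (ENNReal.tsum_le_tsum fun k => ?_)
        split_ifs with h
        · have h' : x ∈ toMeasurable volume {x | (2:ℝ≥0∞) ^ k < MF g x} := subset_toMeasurable _ _ h
          rw [indicator_of_mem h', mul_one]
        · simp
    _ = ∑' k : ℤ, (2:ℝ≥0∞) ^ (2*(k+1)) * volume {x | (2:ℝ≥0∞) ^ k < MF g x} := by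
        rw [lintegral_tsum fun k => (measurable_const.indicator
          (measurableSet_toMeasurable _ _)).aemeasurable]
        congr 1; ext k
        rw [lintegral_indicator (measurableSet_toMeasurable _ _), setLIntegral_const,
          measure_toMeasurable]
    _ ≤ ∑' k : ℤ, ∫⁻ y, (4 * (2 * C₁)) * (g y * ((2:ℝ≥0∞) ^ k *
          (if (2:ℝ≥0∞) ^ k < 2 * VB n * g y then 1 else 0))) := by
        apply ENNReal.tsum_le_tsum; intro k
        refine (mul_le_mul_right (hweak k) _).trans ?_
        rw [← mul_assoc, ← lintegral_const_mul' _ _]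
        · apply lintegral_mono; intro y
          simp only [indicator, mem_ofPred_eq]
          split_ifs
          · have : (2:ℝ≥0∞) ^ (2*(k+1)) = 4 * (2 ^ k * 2 ^ k) := by
              have : 2 * (k+1) = 2 + (k + k) := by ring
              rw [this, ENNReal.zpow_add (by norm_num) (by norm_num),
                ENNReal.zpow_add (by norm_num) (by norm_num)]; norm_num
            rw [this]
            apply le_of_eq
            have h2 : (2:ℝ≥0∞) ^ k * (2 ^ k)⁻¹ = 1 := ENNReal.mul_inv_cancel
              (ENNReal.zpow_pos (by norm_num) (by norm_num) _).ne'
              (ENNReal.zpow_lt_top (by norm_num) (by norm_num) _).ne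
            calc _ = 4 * (2 * C₁) * (g y * (2 ^ k * ((2:ℝ≥0∞) ^ k * (2 ^ k)⁻¹))) := by ring
              _ = _ := by rw [h2]
          · simp
        · refine ENNReal.mul_ne_top (ENNReal.zpow_lt_top (by norm_num) (by norm_num) _).ne
            (ENNReal.mul_ne_top (ENNReal.mul_ne_top (by norm_num) hC₁t) (ENNReal.inv_ne_top.2
            (ENNReal.zpow_pos (by norm_num) (by norm_num) _).ne'))
    _ = ∫⁻ y, ∑' k : ℤ, (4 * (2 * C₁)) * (g y * ((2:ℝ≥0∞) ^ k *
          (if (2:ℝ≥0∞) ^ k < 2 * VB n * g y then 1 else 0))) := by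
        rw [lintegral_tsum]
        intro k
        exact ((hg.mul (measurable_const.mul (Measurable.ite (hmg k) measurable_const
          measurable_const))).const_mul _).aemeasurable
    _ ≤ ∫⁻ y, (4 * (2 * C₁) * (2 * (2 * VB n))) * g y ^ 2 := by
        apply lintegral_mono; intro y
        simp only
        rw [ENNReal.tsum_mul_left, ENNReal.tsum_mul_left]
        calc _ ≤ 4 * (2 * C₁) * (g y * (2 * (2 * VB n * g y))) := by gcongr; exact dy2 _
          _ = _ := by ring
    _ = _ := by rw [lintegral_const_mul _ (hg.pow_const 2)]

lemma meas_ker {n : ℕ} (κ : ℝ) : Measurable (fun q : Euc n × Euc n => edist q.1 q.2 ^ κ) :=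
  (measurable_edist).pow_const κ

lemma meas_ker' {n : ℕ} (κ : ℝ) (x : Euc n) : Measurable (fun z : Euc n => edist z x ^ κ) :=
  (measurable_edist_left).pow_const κ

lemma schur (n : ℕ) (β κ p : ℝ) (hp : 2 ≤ p) (hκ : 0 < κ) (hβ : 0 < β) (hn : 1 ≤ n)
    (h : p * (κ - n/2) < β) : ∃ C : ℝ≥0∞, C ≠ ⊤ ∧
    ∀ (μ : Measure (Euc n)) [SFinite μ] (A : ℝ≥0∞) (c : Euc n) (r : ℝ), 0 < r →
      (∀ x s, 0 < s → μ (ball x s) ≤ A * ENNReal.ofReal s ^ β) →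
      ∀ g : Euc n → ℝ≥0∞, Measurable g →
      ∫⁻ x in ball c r, (∫⁻ z in ball c r, edist z x ^ (-κ) * g z) ^ p ∂μ ≤
        C * A * ENNReal.ofReal r ^ (β - p * κ + p * n / 2) *
          (∫⁻ z in ball c r, g z ^ 2) ^ (p/2) := by
  have hn0 : (0:ℝ) < n := by exact_mod_cast hn
  have hp0 : 0 < p := by linarith
  obtain ⟨θ, hθ1, hθ2⟩ : ∃ θ : ℝ, max 0 (1 - n/(2*κ)) < θ ∧ θ < min 1 (β/(p*κ)) := by
    apply exists_between
    apply max_lt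
    · apply lt_min one_pos; positivity
    · apply lt_min
      · have : 0 < n/(2*κ) := by positivity
        linarith
      · rw [lt_div_iff₀ (by positivity)]
        have : (1 - n/(2*κ)) * (p*κ) = p * (κ - n/2) := by field_simp
        linarith
  have hθ0 : 0 < θ := lt_of_le_of_lt (le_max_left _ _) hθ1
  have hθ1' : θ < 1 := lt_of_lt_of_le hθ2 (min_le_left _ _)
  have hk1 : 2 * κ * (1-θ) < n := by
    have h1 : 1 - n/(2*κ) < θ := lt_of_le_of_lt (le_max_right _ _) hθ1
    have h2 : (n:ℝ)/(2*κ) * (2 * κ) = n := by field_simp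
    nlinarith
  have hk2 : κ * θ * p < β := by
    have h1 : θ < β/(p*κ) := lt_of_lt_of_le hθ2 (min_le_right _ _)
    rw [lt_div_iff₀ (by positivity)] at h1
    linarith
  have hk1' : 0 ≤ 2 * κ * (1-θ) := by
    have : 0 < 1 - θ := by linarith
    positivity
  have hk2' : 0 ≤ κ * θ * p := by positivity
  obtain ⟨C1, hC1, H1⟩ := kernel_local (n:ℝ) (2 * κ * (1-θ)) hk1' hk1
  obtain ⟨C2, hC2, H2⟩ := kernel_local β (κ * θ * p) hk2' hk2
  refine ⟨(C1 * VB n) ^ (p/2) * C2 * 2 ^ (β - p * κ + p * n / 2), ?_, ?_⟩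
  · have h1 := VB_ne_top n
    refine ENNReal.mul_ne_top (ENNReal.mul_ne_top (ENNReal.rpow_ne_top_of_nonneg (by positivity)
      (ENNReal.mul_ne_top hC1 h1)) hC2) ?_
    exact ENNReal.rpow_ne_top_of_ne_zero (by norm_num) (by norm_num)
  intro μ _ A c r hr hμ g hg
  set B := ball c r with hB
  set N := ∫⁻ z in B, g z ^ 2 with hN
  have h2r : 0 < 2 * r := by positivity
  have hsub : ∀ x ∈ B, B ⊆ ball x (2*r) := by
    intro x hx
    apply ball_subset_ball'
    rw [hB, mem_ball, dist_comm] at hx; linarith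
  have hpt : ∀ x ∈ B, (∫⁻ z in B, edist z x ^ (-κ) * g z) ^ p ≤
      (∫⁻ z in B, edist z x ^ (-(κ * θ * p)) * g z ^ 2) * (N ^ (p/2 - 1) *
        (C1 * VB n * ENNReal.ofReal (2*r) ^ ((n:ℝ) - 2 * κ * (1-θ))) ^ (p/2)) := by
    intro x hx
    have h3 : ∫⁻ z in B, edist z x ^ (-(2 * κ * (1-θ))) ≤
        C1 * VB n * ENNReal.ofReal (2*r) ^ ((n:ℝ) - 2 * κ * (1-θ)) :=
      (lintegral_mono_set (hsub x hx)).trans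
        (H1 volume x (VB n) (2*r) h2r (fun s hs _ => (vol_ball n x s hs).le))
    have hol := ENNReal.lintegral_prod_norm_pow_le (μ := volume.restrict B) (Finset.univ : Finset (Fin 3))
      (f := ![fun z => edist z x ^ (-(κ * θ * p)) * g z ^ 2, fun z => g z ^ 2,
        fun z => edist z x ^ (-(2 * κ * (1-θ)))])
      (p := ![1/p, 1/2 - 1/p, 1/2]) ?_ ?_ ?_
    · simp only [Fin.prod_univ_three, Matrix.cons_val_zero, Matrix.cons_val_one, Matrix.cons_val] at hol
      have hle : ∫⁻ z in B, edist z x ^ (-κ) * g z ≤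
          (∫⁻ z in B, edist z x ^ (-(κ * θ * p)) * g z ^ 2) ^ (1/p) * N ^ (1/2 - 1/p) *
           (C1 * VB n * ENNReal.ofReal (2*r) ^ ((n:ℝ) - 2 * κ * (1-θ))) ^ ((1:ℝ)/2) := by
        refine le_trans ?_ (hol.trans ?_)
        · apply lintegral_mono
          intro z
          apply le_of_eq
          simp only
          set L := (edist z x)⁻¹ with hL
          have e1 : ∀ a : ℝ, edist z x ^ (-a) = L ^ a := fun a => by
            rw [hL, ENNReal.inv_rpow, ENNReal.rpow_neg]
          rw [e1, e1, e1, ENNReal.mul_rpow_of_nonneg _ _ (by positivity : 0 ≤ 1/p)]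
          rw [← ENNReal.rpow_mul, ← ENNReal.rpow_mul]
          have e2 : L ^ κ = L ^ (κ * θ * p * (1/p)) * L ^ (2 * κ * (1-θ) * (1/2)) := by
            rw [← ENNReal.rpow_add_of_nonneg _ _ (by positivity) (by positivity)]
            congr 1; field_simp; ring
          have e3 : g z = (g z ^ 2) ^ (1/p) * (g z ^ 2) ^ (1/2 - 1/p) := by
            rw [← ENNReal.rpow_add_of_nonneg _ _ (by positivity)
              (sub_nonneg.2 (one_div_le_one_div_of_le (by norm_num) hp))]
            rw [show 1/p + (1/2 - 1/p) = (1/2:ℝ) by ring, ← ENNReal.rpow_natCast, ← ENNReal.rpow_mul]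
            norm_num
          rw [e2]
          nth_rewrite 1 [e3]
          ring
        · gcongr
      calc _ ≤ ((∫⁻ z in B, edist z x ^ (-(κ * θ * p)) * g z ^ 2) ^ (1/p) * N ^ (1/2 - 1/p) *
           (C1 * VB n * ENNReal.ofReal (2*r) ^ ((n:ℝ) - 2 * κ * (1-θ))) ^ ((1:ℝ)/2)) ^ p := by
            gcongr
        _ = _ := by
            rw [ENNReal.mul_rpow_of_nonneg _ _ hp0.le, ENNReal.mul_rpow_of_nonneg _ _ hp0.le,
              ← ENNReal.rpow_mul, ← ENNReal.rpow_mul, ← ENNReal.rpow_mul,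
              show 1/p*p = 1 by field_simp, show (1/2-1/p)*p = p/2-1 by field_simp,
              show (1:ℝ)/2*p = p/2 by ring, ENNReal.rpow_one]
            ring
    · intro i _
      fin_cases i
      · exact ((meas_ker' _ x).mul (hg.pow_const 2)).aemeasurable
      · exact (hg.pow_const 2).aemeasurable
      · exact (meas_ker' _ x).aemeasurable
    · simp [Fin.sum_univ_three]; ring
    · intro i _
      fin_cases i
      · simp; positivity
      · simp; rw [inv_le_inv₀ hp0 (by norm_num)]; exact hp
      · simp
  have hmeas2 : Measurable (fun q : Euc n × Euc n => edist q.2 q.1 ^ (-(κ * θ * p)) * g q.2 ^ 2) :=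
    ((meas_ker _).comp measurable_swap).mul ((hg.comp measurable_snd).pow_const 2)
  set D := (N ^ (p/2 - 1) *
        (C1 * VB n * ENNReal.ofReal (2*r) ^ ((n:ℝ) - 2 * κ * (1-θ))) ^ (p/2)) with hD
  have h20 : ENNReal.ofReal (2*r) ≠ 0 := by simpa using h2r
  have h2t : ENNReal.ofReal (2*r) ≠ ⊤ := ENNReal.ofReal_ne_top
  calc ∫⁻ x in B, (∫⁻ z in B, edist z x ^ (-κ) * g z) ^ p ∂μ
      ≤ ∫⁻ x in B, (∫⁻ z in B, edist z x ^ (-(κ * θ * p)) * g z ^ 2) * D ∂μ :=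
        setLIntegral_mono' measurableSet_ball hpt
    _ = (∫⁻ x in B, (∫⁻ z in B, edist z x ^ (-(κ * θ * p)) * g z ^ 2) ∂μ) * D := by
        rw [lintegral_mul_const]
        exact hmeas2.lintegral_prod_right'
    _ = (∫⁻ z in B, (∫⁻ x in B, edist z x ^ (-(κ * θ * p)) * g z ^ 2 ∂μ)) * D := by
        rw [lintegral_lintegral_swap hmeas2.aemeasurable]
    _ ≤ (∫⁻ z in B, (C2 * A * ENNReal.ofReal (2*r) ^ (β - κ * θ * p)) * g z ^ 2) * D := by
        refine mul_le_mul_left (setLIntegral_mono' measurableSet_ball fun z hz => ?_) _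
        rw [lintegral_mul_const _ (by simpa only [edist_comm z] using meas_ker' _ z)]
        gcongr
        calc _ ≤ ∫⁻ x in ball z (2*r), edist x z ^ (-(κ * θ * p)) ∂μ := by
              simp only [edist_comm z]; exact lintegral_mono_set (hsub z hz)
          _ ≤ _ := H2 μ z A (2*r) h2r (fun s hs _ => hμ z s hs)
    _ = (C1 * VB n) ^ (p/2) * C2 * A * (ENNReal.ofReal (2*r) ^ (β - κ * θ * p) *
          (ENNReal.ofReal (2*r) ^ ((n:ℝ) - 2 * κ * (1-θ))) ^ (p/2)) * (N * N ^ (p/2 - 1)) := by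
        rw [lintegral_const_mul _ (hg.pow_const 2), hD, ENNReal.mul_rpow_of_nonneg _ _ (by positivity)]
        ring
    _ = (C1 * VB n) ^ (p/2) * C2 * A * (ENNReal.ofReal (2*r) ^ (β - p * κ + p * n / 2))
          * N ^ (p/2) := by
        congr 1
        · rw [← ENNReal.rpow_mul, ← ENNReal.rpow_add _ _ h20 h2t]; congr 2; ring
        · nth_rewrite 1 [← ENNReal.rpow_one N]
          rw [← ENNReal.rpow_add_of_nonneg _ _ (by norm_num) (by linarith)]; congr 1; ring
    _ = _ := by
        rw [ENNReal.ofReal_mul (by norm_num), ENNReal.mul_rpow_of_ne_top (ENNReal.ofReal_ne_top (r := 2)) (ENNReal.ofReal_ne_top (r := r)),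
          ENNReal.ofReal_ofNat]; ring

lemma hedberg (n : ℕ) (hn : 3 ≤ n) : ∃ C : ℝ≥0∞, C ≠ ⊤ ∧
    ∀ g : Euc n → ℝ≥0∞, Measurable g →
      ∫⁻ x, (∫⁻ z, edist z x ^ (-((n:ℝ)-1)) * g z) ^ (2*(n:ℝ)/((n:ℝ)-2)) ≤
        C * (∫⁻ z, g z ^ 2) ^ ((n:ℝ)/((n:ℝ)-2)) := by
  have hn' : (3:ℝ) ≤ n := by exact_mod_cast hn
  set p := 2*(n:ℝ)/((n:ℝ)-2) with hp
  have hp2 : (n:ℝ)/((n:ℝ)-2) = p/2 := by rw [hp]; ring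
  have hn2 : 0 < (n:ℝ) - 2 := by linarith
  have hp0 : 0 < p := by rw [hp]; positivity
  have hpn : (n:ℝ)/2 * (p - 2) = p := by rw [hp]; field_simp; ring
  have hp22 : 2 < p := by
    have : 0 < p - 2 := by
      by_contra hc
      push Not at hc
      nlinarith
    linarith
  rw [hp2]
  obtain ⟨C1, hC1, H1⟩ := kernel_local (n:ℝ) ((n:ℝ)-1) (by linarith) (by linarith)
  obtain ⟨C2, hC2, H2⟩ := kernel_far (n:ℝ) (2*((n:ℝ)-1)) (by linarith) (by linarith)
  obtain ⟨CM, hCM, HM⟩ := MF_strong n (by omega)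
  set K := C1 + (C2 * VB n) ^ ((1:ℝ)/2) with hK
  have hKt : K ≠ ⊤ := ENNReal.add_ne_top.2 ⟨hC1, ENNReal.rpow_ne_top_of_nonneg (by norm_num)
    (ENNReal.mul_ne_top hC2 (VB_ne_top n))⟩
  refine ⟨K ^ p * CM + 1, ENNReal.add_ne_top.2 ⟨ENNReal.mul_ne_top
    (ENNReal.rpow_ne_top_of_nonneg hp0.le hKt) hCM, by norm_num⟩, ?_⟩
  intro g hg
  set N := ∫⁻ z, g z ^ 2 with hN
  by_cases hN0 : N = 0
  · have h1 : ∀ᵐ z, g z = 0 := by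
      rw [hN, lintegral_eq_zero_iff (hg.pow_const 2)] at hN0
      filter_upwards [hN0] with z hz
      simpa using hz
    have h2 : ∀ x : Euc n, ∫⁻ z, edist z x ^ (-((n:ℝ)-1)) * g z = 0 := by
      intro x
      refine (lintegral_congr_ae (g := fun _ => 0) ?_).trans (by simp)
      filter_upwards [h1] with z hz
      simp [hz]
    simp only [h2]
    rw [ENNReal.zero_rpow_of_pos hp0]; simp
  by_cases hNt : N = ⊤
  · rw [hNt, ENNReal.top_rpow_of_pos (by positivity), ENNReal.mul_top (by simp)]; exact le_top
  set b := N ^ ((1:ℝ)/2) with hb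
  have hb0 : b ≠ 0 := by rw [hb]; exact (ENNReal.rpow_pos (pos_iff_ne_zero.2 hN0) hNt).ne'
  have hbt : b ≠ ⊤ := ENNReal.rpow_ne_top_of_nonneg (by norm_num) hNt
  have hR : ∀ (x : Euc n) (R : ℝ), 0 < R → ∫⁻ z, edist z x ^ (-((n:ℝ)-1)) * g z ≤
      C1 * (MF g x * ENNReal.ofReal R) +
        (C2 * VB n) ^ ((1:ℝ)/2) * (b * ENNReal.ofReal R ^ (1 - (n:ℝ)/2)) := by
    intro x R hR
    rw [← lintegral_add_compl _ (measurableSet_ball (x := x) (ε := R))]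
    apply add_le_add
    · have := H1 (volume.withDensity g) x (MF g x) R hR (fun s hs _ => by
        rw [withDensity_apply _ measurableSet_ball]; exact lint_ball_le_MF g x s hs)
      rw [restrict_withDensity measurableSet_ball, lintegral_withDensity_eq_lintegral_mul _ hg
        (meas_ker' _ x)] at this
      refine le_trans (le_of_eq ?_) (this.trans (le_of_eq ?_))
      · refine lintegral_congr fun z => ?_
        simp only [Pi.mul_apply]; exact mul_comm _ _
      rw [show (n:ℝ) - ((n:ℝ)-1) = 1 by ring, ENNReal.rpow_one]; ring
    · have h1 := ENNReal.lintegral_mul_le_Lp_mul_Lq (volume.restrict (ball x R)ᶜ)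
        (p := 2) (q := 2) (Real.HolderConjugate.two_two)
        (f := fun z => edist z x ^ (-((n:ℝ)-1))) (g := g) (meas_ker' _ x).aemeasurable hg.aemeasurable
      refine h1.trans ?_
      have h2 := H2 volume x (VB n) R hR (fun s hs => (vol_ball n x s (by linarith)).le)
      have h3 : ∫⁻ z in (ball x R)ᶜ, (edist z x ^ (-((n:ℝ)-1))) ^ (2:ℝ) ≤
          C2 * VB n * ENNReal.ofReal R ^ ((n:ℝ) - 2 * ((n:ℝ)-1)) := by
        refine le_trans (le_of_eq ?_) h2
        congr 1; ext z
        rw [← ENNReal.rpow_mul]; congr 1; ring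
      calc _ ≤ (C2 * VB n * ENNReal.ofReal R ^ ((n:ℝ) - 2 * ((n:ℝ)-1))) ^ ((1:ℝ)/2) *
            (∫⁻ z, g z ^ (2:ℝ)) ^ ((1:ℝ)/2) := by
            gcongr
            exact Measure.restrict_le_self
        _ = _ := by
            rw [ENNReal.mul_rpow_of_nonneg _ _ (by norm_num), ← ENNReal.rpow_mul, hb, hN]
            simp only [ENNReal.rpow_two]
            rw [show ((n:ℝ) - 2 * ((n:ℝ)-1)) * (1/2) = 1 - (n:ℝ)/2 by ring]; ring
  have hpt : ∀ x : Euc n, (∫⁻ z, edist z x ^ (-((n:ℝ)-1)) * g z) ^ p ≤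
      K ^ p * (b ^ (p-2)) * MF g x ^ 2 := by
    intro x
    by_cases hK0 : K = 0
    · have h1 := hR x 1 one_pos
      rw [hK, add_eq_zero] at hK0
      rw [hK0.1, hK0.2, zero_mul, zero_mul, add_zero] at h1
      rw [le_zero_iff.1 h1, ENNReal.zero_rpow_of_pos hp0]; exact bot_le
    set a := MF g x with ha
    by_cases hat : a = ⊤
    · rw [hat]
      have : K ^ p * b ^ (p-2) ≠ 0 := mul_ne_zero
        (ENNReal.rpow_pos (pos_iff_ne_zero.2 hK0) hKt).ne' (ENNReal.rpow_pos (pos_iff_ne_zero.2 hb0) hbt).ne'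
      rw [ENNReal.top_pow (by norm_num), ENNReal.mul_top this]; exact le_top
    by_cases ha0 : a = 0
    · -- g vanishes on all balls
      exfalso
      have h1 : ∀ R : ℝ, 0 < R → ∫⁻ y in ball x R, g y = 0 := by
        intro R hR'
        have := lint_ball_le_MF g x R hR'
        rw [← ha, ha0, zero_mul] at this
        exact le_zero_iff.1 this
      have h2 : ∀ k : ℕ, ∀ᵐ y, y ∈ ball x ((k:ℝ)+1) → g y = 0 := by
        intro k
        have := h1 ((k:ℝ)+1) (by positivity)
        rw [lintegral_eq_zero_iff hg] at this
        exact (ae_restrict_iff' measurableSet_ball).1 this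
      have h3 : ∀ᵐ y, g y = 0 := by
        filter_upwards [ae_all_iff.2 h2] with y hy
        obtain ⟨k, hk⟩ := exists_nat_gt (dist y x)
        exact hy k (by rw [mem_ball]; linarith)
      apply hN0
      rw [hN, lintegral_eq_zero_iff (hg.pow_const 2)]
      filter_upwards [h3] with y hy
      simp [hy]
    set ρ := (b / a) ^ (2/(n:ℝ)) with hρ
    have hba0 : b / a ≠ 0 := (ENNReal.div_pos hb0 hat).ne'
    have hbat : b / a ≠ ⊤ := ENNReal.div_ne_top hbt ha0
    have hρ0 : ρ ≠ 0 := (ENNReal.rpow_pos (pos_iff_ne_zero.2 hba0) hbat).ne'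
    have hρt : ρ ≠ ⊤ := ENNReal.rpow_ne_top_of_nonneg (by positivity) hbat
    have hbρ : b = a * ρ ^ ((n:ℝ)/2) := by
      rw [hρ, ← ENNReal.rpow_mul, show 2/(n:ℝ) * ((n:ℝ)/2) = 1 by field_simp, ENNReal.rpow_one,
        ENNReal.mul_div_cancel ha0 hat]
    have h1 := hR x ρ.toReal (ENNReal.toReal_pos hρ0 hρt)
    rw [ENNReal.ofReal_toReal hρt, ← ha] at h1
    have h2 : b * ρ ^ (1 - (n:ℝ)/2) = a * ρ := by
      rw [hbρ, mul_assoc, ← ENNReal.rpow_add _ _ hρ0 hρt]; simp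
    rw [h2, ← add_mul, ← hK] at h1
    calc _ ≤ (K * (a * ρ)) ^ p := by gcongr
      _ = K ^ p * (a ^ (p-2) * ρ ^ p) * a ^ 2 := by
          rw [ENNReal.mul_rpow_of_nonneg _ _ hp0.le, ENNReal.mul_rpow_of_nonneg _ _ hp0.le]
          have : a ^ p = a ^ (p-2) * a ^ 2 := by
            rw [← ENNReal.rpow_two, ← ENNReal.rpow_add _ _ ha0 hat]; congr 1; ring
          rw [this]; ring
      _ = _ := by
          rw [hbρ, ENNReal.mul_rpow_of_nonneg _ _ (by linarith), ← ENNReal.rpow_mul ρ, hpn]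
  calc _ ≤ ∫⁻ x, K ^ p * (b ^ (p-2)) * MF g x ^ 2 := lintegral_mono hpt
    _ = K ^ p * (b ^ (p-2)) * ∫⁻ x, MF g x ^ 2 := by
        rw [lintegral_const_mul']
        exact ENNReal.mul_ne_top (ENNReal.rpow_ne_top_of_nonneg hp0.le hKt)
          (ENNReal.rpow_ne_top_of_nonneg (by linarith) hbt)
    _ ≤ K ^ p * (b ^ (p-2)) * (CM * N) := by gcongr; exact HM g hg
    _ = K ^ p * CM * N ^ (p/2) := by
        have : N ^ (p/2) = b ^ (p-2) * N := by
          nth_rewrite 2 [← ENNReal.rpow_one N]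
          rw [hb, ← ENNReal.rpow_mul, ← ENNReal.rpow_add _ _ hN0 hNt]; congr 1; ring
        rw [this]; ring
    _ ≤ _ := by gcongr; exact le_self_add

structure GR (n : ℕ) (d C₀ : ℝ) (Γ : Set (Euc n)) : Prop where
  ne : Γ.Nonempty
  cl : IsClosed Γ
  ah : AhlforsRegular n d C₀ Γ
  hd : 0 < d
  hdn : d < (n:ℝ) - 1
  hC : 1 ≤ C₀

def sigG (n : ℕ) (d : ℝ) (Γ : Set (Euc n)) : Measure (Euc n) := μH[d].restrict Γ

lemma sig_ball {n : ℕ} {d C₀ : ℝ} {Γ : Set (Euc n)} (x : Euc n) (s : ℝ) :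
    sigG n d Γ (ball x s) = μH[d] (Γ ∩ ball x s) := by
  rw [sigG, Measure.restrict_apply measurableSet_ball, inter_comm]

def AU (d C₀ : ℝ) : ℝ≥0∞ := ENNReal.ofReal (C₀ * 2 ^ d)

lemma AU_ne_top (d C₀ : ℝ) : AU d C₀ ≠ ⊤ := ENNReal.ofReal_ne_top

lemma sig_up {n : ℕ} {d C₀ : ℝ} {Γ : Set (Euc n)} (h : GR n d C₀ Γ) (x : Euc n) (s : ℝ)
    (hs : 0 < s) : sigG n d Γ (ball x s) ≤ AU d C₀ * ENNReal.ofReal s ^ d := by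
  rw [sig_ball (C₀ := C₀)]
  by_cases he : (Γ ∩ ball x s).Nonempty
  · obtain ⟨z, hz, hzx⟩ := he
    have hsub : Γ ∩ ball x s ⊆ Γ ∩ ball z (2*s) := by
      refine inter_subset_inter_right _ (ball_subset_ball' ?_)
      rw [dist_comm]; have := mem_ball.1 hzx; linarith
    refine (measure_mono hsub).trans ((h.ah z hz (2*s) (by linarith)).2.trans (le_of_eq ?_))
    have hC := h.hC
    rw [AU, ENNReal.ofReal_rpow_of_pos hs, ← ENNReal.ofReal_mul (by positivity),
      Real.mul_rpow (by norm_num) hs.le, mul_assoc]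
  · rw [not_nonempty_iff_eq_empty.1 he]; simp

lemma sig_lo {n : ℕ} {d C₀ : ℝ} {Γ : Set (Euc n)} (h : GR n d C₀ Γ) (x : Euc n) (hx : x ∈ Γ)
    (s : ℝ) (hs : 0 < s) : ENNReal.ofReal C₀⁻¹ * ENNReal.ofReal s ^ d ≤ sigG n d Γ (ball x s) := by
  rw [sig_ball (C₀ := C₀)]
  refine le_trans (le_of_eq ?_) (h.ah x hx s hs).1
  have hC := h.hC
  rw [ENNReal.ofReal_rpow_of_pos hs, ← ENNReal.ofReal_mul (by positivity)]

lemma vol_G {n : ℕ} {d C₀ : ℝ} {Γ : Set (Euc n)} (h : GR n d C₀ Γ) : volume Γ = 0 := by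
  obtain ⟨x, hx⟩ := h.ne
  have hd := h.hd
  have h1 : ∀ k : ℕ, (μH[(n:ℝ)] : Measure (Euc n)) (Γ ∩ ball x (k+1)) = 0 := by
    intro k
    have h2 := (h.ah x hx (k+1) (by positivity)).2
    rcases Measure.hausdorffMeasure_zero_or_top (show d < (n:ℝ) by linarith [h.hdn])
      (Γ ∩ ball x (k+1)) with h3 | h3
    · exact h3
    · rw [h3] at h2; simp at h2
  have h2 : (μH[(n:ℝ)] : Measure (Euc n)) Γ = 0 := by
    have : Γ ⊆ ⋃ k : ℕ, Γ ∩ ball x (k+1) := by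
      intro y hy
      obtain ⟨k, hk⟩ := exists_nat_gt (dist y x)
      exact mem_iUnion.2 ⟨k, hy, by rw [mem_ball]; linarith⟩
    exact measure_mono_null this (measure_iUnion_null h1)
  have h3 : Measure.IsAddHaarMeasure (μH[(n:ℝ)] : Measure (Euc n)) := by
    have := MeasureTheory.isAddHaarMeasure_hausdorffMeasure (E := Euc n)
    rwa [finrank_euclideanSpace_fin] at this
  exact Measure.absolutelyContinuous_isAddHaarMeasure volume (μH[(n:ℝ)] : Measure (Euc n)) h2

lemma ae_notG {n : ℕ} {d C₀ : ℝ} {Γ : Set (Euc n)} (h : GR n d C₀ Γ) : ∀ᵐ y : Euc n, y ∉ Γ :=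
  measure_eq_zero_iff_ae_notMem.1 (vol_G h)

lemma D_top {n : ℕ} {d C₀ : ℝ} {Γ : Set (Euc n)} (h : GR n d C₀ Γ) (x : Euc n) :
    infEDist x Γ ≠ ⊤ := infEDist_ne_top h.ne

lemma D_ne {n : ℕ} {d C₀ : ℝ} {Γ : Set (Euc n)} (h : GR n d C₀ Γ) (x : Euc n) (hx : x ∉ Γ) :
    infEDist x Γ ≠ 0 := fun h0 => hx ((mem_iff_infEDist_zero_of_closed h.cl).2 h0)

lemma D_eq {n : ℕ} {d C₀ : ℝ} {Γ : Set (Euc n)} (h : GR n d C₀ Γ) (x : Euc n) :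
    infEDist x Γ = ENNReal.ofReal (infDist x Γ) := by
  rw [infDist, ENNReal.ofReal_toReal (D_top h x)]

lemma meas_D {n : ℕ} (Γ : Set (Euc n)) (κ : ℝ) : Measurable (fun y : Euc n => infEDist y Γ ^ κ) :=
  measurable_infEDist.pow_const κ

lemma D_rep {n : ℕ} {d C₀ : ℝ} {Γ : Set (Euc n)} (h : GR n d C₀ Γ) (κ : ℝ) (hκ : 0 ≤ κ)
    (y : Euc n) (hy : y ∉ Γ) (s : Set (Euc n)) (hs : ball y (2 * infDist y Γ) ⊆ s) :
    infEDist y Γ ^ (-κ) ≤ ENNReal.ofReal C₀ * 2 ^ (κ + d) *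
      ∫⁻ z in s, edist y z ^ (-(κ+d)) ∂(sigG n d Γ) := by
  have hC := h.hC
  have hd := h.hd
  set δ := infDist y Γ with hδ
  have hD := D_eq h y
  have hδ0 : 0 < δ := by
    have := D_ne h y hy
    rw [hD] at this
    simpa using this
  obtain ⟨z, hz, hyz⟩ := h.cl.exists_infDist_eq_dist h.ne y
  have hsub : ball z δ ⊆ ball y (2 * δ) := ball_subset_ball' (by rw [dist_comm, ← hyz]; linarith)
  have h1 : (2 * infEDist y Γ) ^ (-(κ+d)) * (ENNReal.ofReal C₀⁻¹ * infEDist y Γ ^ d) ≤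
      ∫⁻ z in s, edist y z ^ (-(κ+d)) ∂(sigG n d Γ) := by
    calc _ ≤ (2 * infEDist y Γ) ^ (-(κ+d)) * sigG n d Γ (ball y (2*δ)) := by
          refine mul_le_mul_right ?_ _
          rw [hD]
          exact (sig_lo h z hz δ hδ0).trans (measure_mono hsub)
      _ = ∫⁻ z in ball y (2*δ), (2 * infEDist y Γ) ^ (-(κ+d)) ∂(sigG n d Γ) := by
          rw [setLIntegral_const]
      _ ≤ ∫⁻ z in ball y (2*δ), edist y z ^ (-(κ+d)) ∂(sigG n d Γ) := by
          refine setLIntegral_mono' measurableSet_ball fun z hz => ?_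
          refine enn_rpow_anti (by linarith) ?_
          rw [hD, edist_comm, edist_dist]
          refine (ENNReal.ofReal_le_ofReal (mem_ball.1 hz).le).trans (le_of_eq ?_)
          rw [ENNReal.ofReal_mul (by norm_num), ENNReal.ofReal_ofNat]
      _ ≤ _ := lintegral_mono_set hs
  have hD0 := D_ne h y hy
  have hDt := D_top h y
  calc infEDist y Γ ^ (-κ) = ENNReal.ofReal C₀ * 2 ^ (κ + d) *
      ((2 * infEDist y Γ) ^ (-(κ+d)) * (ENNReal.ofReal C₀⁻¹ * infEDist y Γ ^ d)) := by
        rw [ENNReal.mul_rpow_of_ne_top (by norm_num) hDt]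
        have e1 : ENNReal.ofReal C₀ * ENNReal.ofReal C₀⁻¹ = 1 := by
          rw [← ENNReal.ofReal_mul (by linarith), mul_inv_cancel₀ (by linarith)]; simp
        have e2 : (2:ℝ≥0∞) ^ (κ + d) * 2 ^ (-(κ+d)) = 1 := by
          rw [← ENNReal.rpow_add _ _ (by norm_num) (by norm_num)]; simp
        have e3 : infEDist y Γ ^ (-(κ+d)) * infEDist y Γ ^ d = infEDist y Γ ^ (-κ) := by
          rw [← ENNReal.rpow_add _ _ hD0 hDt]; congr 1; ring
        calc _ = (ENNReal.ofReal C₀ * ENNReal.ofReal C₀⁻¹) * ((2:ℝ≥0∞) ^ (κ + d) * 2 ^ (-(κ+d))) *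
              (infEDist y Γ ^ (-(κ+d)) * infEDist y Γ ^ d) := by rw [e1, e2, e3]; simp
          _ = _ := by ring
    _ ≤ _ := mul_le_mul_right h1 _

lemma int_D (n : ℕ) (d C₀ κ : ℝ) (hκ : 0 < κ) (hκ2 : κ < n - d) (hd : 0 < d) : ∃ C : ℝ≥0∞, C ≠ ⊤ ∧
    ∀ Γ : Set (Euc n), GR n d C₀ Γ → ∀ (x : Euc n) (ρ : ℝ), 0 < ρ →
      ∫⁻ y in ball x ρ, infEDist y Γ ^ (-κ) ≤ C * ENNReal.ofReal ρ ^ ((n:ℝ) - κ) := by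
  obtain ⟨C1, hC1, H1⟩ := kernel_local (n:ℝ) (κ+d) (by linarith) (by linarith)
  set K := ENNReal.ofReal C₀ * 2 ^ (κ + d) * (C1 * VB n * 8 ^ ((n:ℝ) - (κ+d))) * (AU d C₀ * 7 ^ d) with hK
  have hKt : K ≠ ⊤ := by
    refine ENNReal.mul_ne_top (ENNReal.mul_ne_top (ENNReal.mul_ne_top ENNReal.ofReal_ne_top ?_)
      (ENNReal.mul_ne_top (ENNReal.mul_ne_top hC1 (VB_ne_top n)) ?_))
      (ENNReal.mul_ne_top (AU_ne_top _ _) ?_)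
    all_goals exact ENNReal.rpow_ne_top_of_nonneg (by linarith) (by norm_num)
  refine ⟨VB n + K, ENNReal.add_ne_top.2 ⟨VB_ne_top n, hKt⟩, ?_⟩
  intro Γ h x ρ hρ
  have hρ0 : ENNReal.ofReal ρ ≠ 0 := by simpa using hρ
  have hρt : ENNReal.ofReal ρ ≠ ⊤ := ENNReal.ofReal_ne_top
  by_cases hx : 2 * ρ ≤ infDist x Γ
  · calc _ ≤ ∫⁻ y in ball x ρ, ENNReal.ofReal ρ ^ (-κ) := by
          refine setLIntegral_mono' measurableSet_ball fun y hy => ?_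
          refine enn_rpow_anti (by linarith) ?_
          rw [D_eq h]
          refine ENNReal.ofReal_le_ofReal ?_
          have h1 := infDist_le_infDist_add_dist (s := Γ) (x := x) (y := y)
          have h2 := mem_ball'.1 hy
          linarith
      _ = VB n * ENNReal.ofReal ρ ^ ((n:ℝ) - κ) := by
          rw [setLIntegral_const, vol_ball n x ρ hρ, sub_eq_neg_add, ENNReal.rpow_add _ _ hρ0 hρt]
          ring
      _ ≤ _ := by gcongr; exact le_self_add
  push Not at hx
  have hfin : IsFiniteMeasure ((sigG n d Γ).restrict (ball x (7*ρ))) := by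
    refine ⟨?_⟩
    rw [Measure.restrict_apply_univ]
    refine (sig_up h x (7*ρ) (by linarith)).trans_lt ?_
    exact ENNReal.mul_lt_top (AU_ne_top _ _).lt_top
      (ENNReal.rpow_ne_top_of_nonneg hd.le ENNReal.ofReal_ne_top).lt_top
  calc _ ≤ ∫⁻ y in ball x ρ, ENNReal.ofReal C₀ * 2 ^ (κ + d) *
      ∫⁻ z in ball x (7*ρ), edist y z ^ (-(κ+d)) ∂(sigG n d Γ) := by
        refine lintegral_mono_ae ?_
        filter_upwards [ae_restrict_of_ae (ae_notG h), ae_restrict_mem measurableSet_ball] with y hy hyx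
        refine D_rep h κ hκ.le y hy _ (ball_subset_ball' ?_)
        have h1 := infDist_le_infDist_add_dist (s := Γ) (x := y) (y := x)
        have h2 := mem_ball.1 hyx
        linarith
    _ = ENNReal.ofReal C₀ * 2 ^ (κ + d) * ∫⁻ y in ball x ρ,
      ∫⁻ z in ball x (7*ρ), edist y z ^ (-(κ+d)) ∂(sigG n d Γ) := by
        rw [lintegral_const_mul']
        exact ENNReal.mul_ne_top ENNReal.ofReal_ne_top
          (ENNReal.rpow_ne_top_of_nonneg (by linarith) (by norm_num))
    _ = ENNReal.ofReal C₀ * 2 ^ (κ + d) * ∫⁻ z in ball x (7*ρ),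
      (∫⁻ y in ball x ρ, edist y z ^ (-(κ+d))) ∂(sigG n d Γ) := by
        rw [lintegral_lintegral_swap]
        exact (meas_ker _).aemeasurable
    _ ≤ ENNReal.ofReal C₀ * 2 ^ (κ + d) * ∫⁻ z in ball x (7*ρ),
      (C1 * VB n * ENNReal.ofReal (8*ρ) ^ ((n:ℝ) - (κ+d))) ∂(sigG n d Γ) := by
        refine mul_le_mul_right ?_ _
        refine setLIntegral_mono' measurableSet_ball fun z hz => ?_
        refine le_trans (lintegral_mono_set (ball_subset_ball' ?_))
          (H1 volume z (VB n) (8*ρ) (by linarith) fun s hs _ => (vol_ball n z s hs).le)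
        have := mem_ball'.1 hz
        linarith
    _ ≤ ENNReal.ofReal C₀ * 2 ^ (κ + d) * ((C1 * VB n * ENNReal.ofReal (8*ρ) ^ ((n:ℝ) - (κ+d))) *
          (AU d C₀ * ENNReal.ofReal (7*ρ) ^ d)) := by
        rw [setLIntegral_const]
        exact mul_le_mul_right (mul_le_mul_right (sig_up h x (7*ρ) (by linarith)) _) _
    _ = K * ENNReal.ofReal ρ ^ ((n:ℝ) - κ) := by
        have e1 : ENNReal.ofReal ρ ^ ((n:ℝ) - κ) =
          ENNReal.ofReal ρ ^ ((n:ℝ) - (κ+d)) * ENNReal.ofReal ρ ^ d := by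
          rw [← ENNReal.rpow_add _ _ hρ0 hρt]; congr 1; ring
        rw [e1, ENNReal.ofReal_mul (by norm_num), ENNReal.ofReal_mul (by norm_num),
          ENNReal.mul_rpow_of_ne_top ENNReal.ofReal_ne_top hρt,
          ENNReal.mul_rpow_of_ne_top ENNReal.ofReal_ne_top hρt, hK, ENNReal.ofReal_ofNat,
          ENNReal.ofReal_ofNat]
        ring
    _ ≤ _ := by gcongr; exact le_add_self

lemma measW_eq {n : ℕ} {d C₀ : ℝ} {Γ : Set (Euc n)} (h : GR n d C₀ Γ) :
    measW n d Γ = volume.withDensity (fun y => infEDist y Γ ^ (-((n:ℝ)-1-d))) := by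
  rw [measW]
  refine withDensity_congr_ae ?_
  filter_upwards [ae_notG h] with y hy
  have h0 := D_ne h y hy
  rw [D_eq h] at h0 ⊢
  rw [weightW, ENNReal.ofReal_rpow_of_pos (by simpa using h0)]
  congr 2; ring

lemma measW_sfinite {n : ℕ} {d C₀ : ℝ} {Γ : Set (Euc n)} (h : GR n d C₀ Γ) :
    SFinite (measW n d Γ) := by
  rw [measW_eq h]; infer_instance

lemma measW_lint {n : ℕ} {d C₀ : ℝ} {Γ : Set (Euc n)} (h : GR n d C₀ Γ) (f : Euc n → ℝ≥0∞)
    (s : Set (Euc n)) (hs : MeasurableSet s) :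
    ∫⁻ y in s, f y ∂(measW n d Γ) = ∫⁻ y in s, infEDist y Γ ^ (-((n:ℝ)-1-d)) * f y := by
  rw [measW_eq h, restrict_withDensity hs,
    lintegral_withDensity_eq_lintegral_mul_non_measurable₀ _ (meas_D Γ _).aemeasurable]
  · rfl
  · filter_upwards [ae_restrict_of_ae (ae_notG h)] with y hy
    exact lt_top_iff_ne_top.2 (ENNReal.rpow_ne_top_of_ne_zero (D_ne h y hy) (D_top h y))

lemma measW_up (n : ℕ) (d C₀ : ℝ) (hd : 0 < d) (hdn : d < (n:ℝ) - 1) : ∃ C : ℝ≥0∞, C ≠ ⊤ ∧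
    ∀ Γ : Set (Euc n), GR n d C₀ Γ → ∀ (x : Euc n) (s : ℝ), 0 < s →
      measW n d Γ (ball x s) ≤ C * ENNReal.ofReal s ^ (d + 1) := by
  obtain ⟨C, hC, H⟩ := int_D n d C₀ ((n:ℝ)-1-d) (by linarith) (by linarith) hd
  refine ⟨C, hC, fun Γ h x s hs => ?_⟩
  have := H Γ h x s hs
  rw [measW_eq h, withDensity_apply _ measurableSet_ball]
  convert this using 3; ring

lemma measW_lo {n : ℕ} {d C₀ : ℝ} {Γ : Set (Euc n)} (h : GR n d C₀ Γ) (x : Euc n) (r R : ℝ)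
    (hr : 0 < r) (hR : infDist x Γ + r ≤ R) :
    ENNReal.ofReal R ^ (-((n:ℝ)-1-d)) * (VB n * ENNReal.ofReal r ^ (n:ℝ)) ≤
      measW n d Γ (ball x r) := by
  rw [measW_eq h, withDensity_apply _ measurableSet_ball, ← vol_ball n x r hr, ← setLIntegral_const]
  refine setLIntegral_mono' measurableSet_ball fun y hy => ?_
  refine enn_rpow_anti (by linarith [h.hdn]) ?_
  rw [D_eq h]
  refine ENNReal.ofReal_le_ofReal ?_
  have h1 := infDist_le_infDist_add_dist (s := Γ) (x := y) (y := x)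
  have h2 := mem_ball.1 hy
  linarith

lemma lint_homothety {n : ℕ} (G : Euc n → ℝ≥0∞) (hG : Measurable G) (x : Euc n) (t : ℝ) (ht : 0 < t) :
    ∫⁻ y, G (x + t • (y - x)) = ENNReal.ofReal t ^ (-(n:ℝ)) * ∫⁻ z, G z := by
  have hm : Measurable (fun w : Euc n => G (x + w)) := hG.comp (measurable_const_add x)
  calc _ = ∫⁻ y, G (x + t • y) := lintegral_sub_right_eq_self (fun y => G (x + t • y)) x
    _ = ∫⁻ w, G (x + w) ∂(Measure.map (fun y : Euc n => t • y) volume) := by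
        rw [lintegral_map hm (measurable_const_smul t)]
    _ = _ := by
        rw [Measure.map_addHaar_smul volume ht.ne', lintegral_smul_measure,
          lintegral_add_left_eq_self G x, finrank_euclideanSpace_fin, smul_eq_mul]
        congr 1
        rw [abs_of_pos (by positivity), ENNReal.ofReal_inv_of_pos (by positivity),
          ENNReal.rpow_neg, ENNReal.rpow_natCast, ENNReal.ofReal_pow ht.le]

def QG {n : ℕ} (c : Euc n) (r : ℝ) (x : Euc n) (h : Euc n → ℝ≥0∞) (t : ℝ) (z : Euc n) : ℝ≥0∞ :=
  if edist z x < ENNReal.ofReal (2*r*t) then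
    (ENNReal.ofReal t ^ (-(1:ℝ)) * (edist z x * (ball c r).indicator h z)) else 0

lemma QG_meas {n : ℕ} (c : Euc n) (r : ℝ) (x : Euc n) (h : Euc n → ℝ≥0∞) (hh : Measurable h) :
    Measurable (fun q : ℝ × Euc n => QG c r x h q.1 q.2) := by
  refine Measurable.ite (measurableSet_lt ?_ ?_) ?_ measurable_const
  · exact measurable_edist_left.comp measurable_snd
  · exact (measurable_fst.const_mul _).ennreal_ofReal
  · refine Measurable.mul ?_ (Measurable.mul ?_ ?_)
    · exact (measurable_fst.ennreal_ofReal).pow_const _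
    · exact measurable_edist_left.comp measurable_snd
    · exact (hh.indicator measurableSet_ball).comp measurable_snd

lemma QG_meas2 {n : ℕ} (c : Euc n) (r : ℝ) (x : Euc n) (h : Euc n → ℝ≥0∞) (hh : Measurable h)
    (t : ℝ) : Measurable (QG c r x h t) := by
  unfold QG
  refine Measurable.ite (measurableSet_lt measurable_edist_left measurable_const) ?_ measurable_const
  exact (measurable_edist_left.mul (hh.indicator measurableSet_ball)).const_mul _

lemma lemQa {n : ℕ} (c : Euc n) (r : ℝ) (hr : 0 < r) (x : Euc n) (hx : x ∈ ball c r)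
    (h : Euc n → ℝ≥0∞) (hh : Measurable h) (t : ℝ) (ht : t ∈ Ioc (0:ℝ) 1) :
    ∫⁻ y in ball c r, edist y x * h (x + t • (y - x)) ≤
      ENNReal.ofReal t ^ (-(n:ℝ)) * ∫⁻ z, QG c r x h t z := by
  have hQm := QG_meas2 c r x h hh t
  rw [← lint_homothety (QG c r x h t) hQm x t ht.1]
  refine le_trans (setLIntegral_mono' (g := fun y => QG c r x h t (x + t • (y - x)))
    measurableSet_ball fun y hy => ?_) (setLIntegral_le_lintegral (ball c r) _)
  have hz : x + t • (y - x) ∈ ball c r :=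
    (convex_ball c r).add_smul_sub_mem hx hy ⟨ht.1.le, ht.2⟩
  have he : edist (x + t • (y - x)) x = ENNReal.ofReal t * edist y x := by
    rw [edist_eq_enorm_sub, add_sub_cancel_left, enorm_smul, edist_eq_enorm_sub,
      Real.enorm_eq_ofReal ht.1.le]
  have ht0 : ENNReal.ofReal t ≠ 0 := by simpa using ht.1
  have hlt : edist (x + t • (y - x)) x < ENNReal.ofReal (2*r*t) := by
    rw [he, mul_comm (2*r), ENNReal.ofReal_mul ht.1.le]
    refine ENNReal.mul_lt_mul_right ht0 ENNReal.ofReal_ne_top ?_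
    rw [edist_dist]
    refine ENNReal.ofReal_lt_ofReal_iff (by linarith) |>.2 ?_
    have h1 := mem_ball.1 hy
    have h2 := mem_ball'.1 hx
    linarith [dist_triangle y c x]
  simp only [QG]
  rw [if_pos hlt, he, indicator_of_mem hz, ← mul_assoc, ← mul_assoc, ENNReal.rpow_neg_one,
    ENNReal.inv_mul_cancel ht0 ENNReal.ofReal_ne_top, one_mul]

lemma lemQb (n : ℕ) (hn : 2 ≤ n) : ∃ C : ℝ≥0∞, C ≠ ⊤ ∧ ∀ (c : Euc n) (r : ℝ), 0 < r →
    ∀ x ∈ ball c r, ∀ h : Euc n → ℝ≥0∞, ∀ z : Euc n,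
      ∫⁻ t in Ioc (0:ℝ) 1, ENNReal.ofReal t ^ (-(n:ℝ)) * QG c r x h t z ≤
        (C * ENNReal.ofReal r ^ (n:ℝ)) * (ball c r).indicator (fun z => edist z x ^ (-((n:ℝ)-1)) * h z) z := by
  have hn' : (2:ℝ) ≤ n := by exact_mod_cast hn
  obtain ⟨C1, hC1, H1⟩ := kernel_far 1 ((n:ℝ)+1) (by norm_num) (by linarith)
  refine ⟨C1 * 2 * 2 ^ (n:ℝ), ENNReal.mul_ne_top (ENNReal.mul_ne_top hC1 (by norm_num))
    (ENNReal.rpow_ne_top_of_nonneg (by linarith) (by norm_num)), ?_⟩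
  intro c r hr x hx h z
  have hr0 : ENNReal.ofReal r ≠ 0 := by simpa using hr
  by_cases hzx : z = x
  · simp [QG, hzx]
  by_cases hzB : z ∈ ball c r
  swap
  · simp only [QG, indicator_of_notMem hzB]; simp
  have hd : 0 < dist z x := dist_pos.2 hzx
  have he0 : edist z x ≠ 0 := by simpa using hzx
  have het : edist z x ≠ ⊤ := edist_ne_top _ _
  obtain ⟨R, hR⟩ : ∃ R, R = dist z x / (2*r) := ⟨_, rfl⟩
  have hR0 : 0 < R := by rw [hR]; positivity
  have hE : ENNReal.ofReal R ^ (1 - ((n:ℝ)+1)) * edist z x =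
      2 ^ (n:ℝ) * ENNReal.ofReal r ^ (n:ℝ) * edist z x ^ (-((n:ℝ)-1)) := by
    rw [hR, ENNReal.ofReal_div_of_pos (by positivity), ← edist_dist,
      ENNReal.ofReal_mul (by norm_num), ENNReal.ofReal_ofNat, div_eq_mul_inv,
      ENNReal.mul_rpow_of_ne_top het (by simp [hr]), ← ENNReal.rpow_neg_one,
      ← ENNReal.rpow_mul, show -1 * (1 - ((n:ℝ)+1)) = n by ring,
      ENNReal.mul_rpow_of_nonneg _ _ (by linarith),
      show -((n:ℝ)-1) = 1 - ((n:ℝ)+1) + 1 by ring, ENNReal.rpow_add _ 1 he0 het,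
      ENNReal.rpow_one]
    ring
  calc _ ≤ ∫⁻ t in Ioc (0:ℝ) 1, (ball (0:ℝ) R)ᶜ.indicator (fun t => edist t 0 ^ (-((n:ℝ)+1)) * (edist z x * h z)) t := by
        refine setLIntegral_mono' measurableSet_Ioc fun t ht => ?_
        have ht0 : ENNReal.ofReal t ≠ 0 := by simpa using ht.1
        simp only [QG]
        split_ifs with hlt
        · rw [edist_dist, ENNReal.ofReal_lt_ofReal_iff (by have := ht.1; positivity)] at hlt
          have : t ∈ (ball (0:ℝ) R)ᶜ := by
            rw [mem_compl_iff, mem_ball, not_lt, Real.dist_eq, sub_zero, abs_of_pos ht.1, hR,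
              div_le_iff₀ (by positivity)]
            linarith
          rw [indicator_of_mem this, indicator_of_mem hzB, edist_dist t, Real.dist_eq, sub_zero,
            abs_of_pos ht.1, ← mul_assoc, ← ENNReal.rpow_add _ _ ht0 ENNReal.ofReal_ne_top]
          refine le_of_eq ?_
          congr 2; ring
        · rw [mul_zero]; exact bot_le
    _ ≤ ∫⁻ t, (ball (0:ℝ) R)ᶜ.indicator (fun t => edist t 0 ^ (-((n:ℝ)+1)) * (edist z x * h z)) t :=
        setLIntegral_le_lintegral _ _
    _ = (∫⁻ t in (ball (0:ℝ) R)ᶜ, edist t 0 ^ (-((n:ℝ)+1))) * (edist z x * h z) := by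
        rw [lintegral_indicator measurableSet_ball.compl, lintegral_mul_const]
        exact measurable_edist_left.pow_const _
    _ ≤ (C1 * 2 * ENNReal.ofReal R ^ (1 - ((n:ℝ)+1))) * (edist z x * h z) := by
        refine mul_le_mul_left (H1 volume 0 2 R hR0 fun s hs => ?_) _
        rw [Real.volume_ball, ENNReal.rpow_one, ENNReal.ofReal_mul (by norm_num), ENNReal.ofReal_ofNat]
    _ = C1 * 2 * (ENNReal.ofReal R ^ (1 - ((n:ℝ)+1)) * edist z x) * h z := by ring
    _ = _ := by
        rw [indicator_of_mem hzB, hE]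
        ring

lemma lemQ (n : ℕ) (hn : 2 ≤ n) : ∃ C : ℝ≥0∞, C ≠ ⊤ ∧ ∀ (c : Euc n) (r : ℝ), 0 < r →
    ∀ x ∈ ball c r, ∀ h : Euc n → ℝ≥0∞, Measurable h →
      ∫⁻ y in ball c r, (edist y x * ∫⁻ t in Ioc (0:ℝ) 1, h (x + t • (y - x))) ≤
        C * ENNReal.ofReal r ^ (n:ℝ) * ∫⁻ z in ball c r, edist z x ^ (-((n:ℝ)-1)) * h z := by
  obtain ⟨C, hC, H⟩ := lemQb n hn
  refine ⟨C, hC, ?_⟩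
  intro c r hr x hx h hh
  have hGm := QG_meas c r x h hh
  have hFm : Measurable (fun q : Euc n × ℝ => edist q.1 x * h (x + q.2 • (q.1 - x))) := by
    refine Measurable.mul (measurable_edist_left.comp measurable_fst) (hh.comp ?_)
    fun_prop
  calc _ = ∫⁻ y in ball c r, ∫⁻ t in Ioc (0:ℝ) 1, edist y x * h (x + t • (y - x)) := by
        refine lintegral_congr fun y => ?_
        rw [lintegral_const_mul]
        exact hh.comp (by fun_prop)
    _ = ∫⁻ t in Ioc (0:ℝ) 1, ∫⁻ y in ball c r, edist y x * h (x + t • (y - x)) := by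
        rw [lintegral_lintegral_swap]; exact hFm.aemeasurable
    _ ≤ ∫⁻ t in Ioc (0:ℝ) 1, ENNReal.ofReal t ^ (-(n:ℝ)) * ∫⁻ z, QG c r x h t z :=
        setLIntegral_mono' measurableSet_Ioc fun t ht => lemQa c r hr x hx h hh t ht
    _ = ∫⁻ t in Ioc (0:ℝ) 1, ∫⁻ z, ENNReal.ofReal t ^ (-(n:ℝ)) * QG c r x h t z := by
        refine lintegral_congr fun t => ?_
        have hQm := QG_meas2 c r x h hh t
        rw [lintegral_const_mul _ hQm]
    _ = ∫⁻ z, ∫⁻ t in Ioc (0:ℝ) 1, ENNReal.ofReal t ^ (-(n:ℝ)) * QG c r x h t z := by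
        rw [lintegral_lintegral_swap]
        exact ((measurable_fst.ennreal_ofReal.pow_const _).mul hGm).aemeasurable
    _ ≤ ∫⁻ z, (C * ENNReal.ofReal r ^ (n:ℝ)) * (ball c r).indicator (fun z => edist z x ^ (-((n:ℝ)-1)) * h z) z :=
        lintegral_mono fun z => H c r hr x hx h z
    _ = _ := by
        have hm : Measurable (fun z : Euc n => edist z x ^ (-((n:ℝ)-1)) * h z) := (meas_ker' _ x).mul hh
        rw [lintegral_const_mul _ (hm.indicator measurableSet_ball),
          lintegral_indicator measurableSet_ball]

lemma seg_avoid {n : ℕ} (Γ : Set (Euc n)) (x y : Euc n) (hx : x ∉ Γ)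
    (h : ∫⁻ t in Ioc (0:ℝ) 1, infEDist (x + t • (y - x)) Γ ^ (-(1:ℝ)) < ⊤) :
    ∀ t ∈ Icc (0:ℝ) 1, x + t • (y - x) ∉ Γ := by
  intro t₀ ht₀ hmem
  have h1 : ∫⁻ t in Ioc (0:ℝ) 1, ‖(t - t₀)⁻¹‖ₑ < ⊤ := by
    have h2 : ∀ t : ℝ, ‖(t - t₀)⁻¹‖ₑ ≤ edist y x * infEDist (x + t • (y - x)) Γ ^ (-(1:ℝ)) := by
      intro t
      by_cases ht : t - t₀ = 0
      · simp [ht]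
      have hyx : edist y x ≠ 0 := by
        intro h0
        have h0 : y = x := edist_eq_zero.1 h0
        rw [h0] at hmem; simp at hmem; exact hx hmem
      have hle : infEDist (x + t • (y - x)) Γ ≤ edist y x * ‖t - t₀‖ₑ := by
        refine (infEDist_le_edist_of_mem hmem).trans (le_of_eq ?_)
        rw [edist_eq_enorm_sub, edist_eq_enorm_sub, add_sub_add_left_eq_sub, ← sub_smul, enorm_smul, mul_comm]
      calc ‖(t - t₀)⁻¹‖ₑ = edist y x * (edist y x * ‖t - t₀‖ₑ) ^ (-(1:ℝ)) := by
            rw [enorm_inv ht, ENNReal.rpow_neg_one, ENNReal.mul_inv (Or.inl hyx) (Or.inl (edist_ne_top _ _)),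
              ← mul_assoc, ENNReal.mul_inv_cancel hyx (edist_ne_top _ _), one_mul]
        _ ≤ _ := mul_le_mul_right (enn_rpow_anti (by norm_num) hle) _
    refine (lintegral_mono h2).trans_lt ?_
    rw [lintegral_const_mul' _ _ (edist_ne_top _ _)]
    exact ENNReal.mul_lt_top (edist_ne_top _ _).lt_top h
  have h3 : IntervalIntegrable (fun t : ℝ => (t - t₀)⁻¹) volume 0 1 := by
    rw [intervalIntegrable_iff_integrableOn_Ioc_of_le zero_le_one]
    exact ⟨by fun_prop, h1⟩
  rw [intervalIntegrable_sub_inv_iff] at h3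
  rcases h3 with h3 | h3
  · norm_num at h3
  · rw [uIcc_of_le zero_le_one] at h3; exact h3 ht₀

lemma pot_fin {n : ℕ} (hn : 2 ≤ n) (c : Euc n) (R : ℝ) (hR : 0 < R) (g : Euc n → ℝ≥0∞)
    (hg : Measurable g) (h : ∫⁻ z in ball c R, g z < ⊤) :
    ∀ᵐ x ∂(volume.restrict (ball c R)), ∫⁻ z in ball c R, edist z x ^ (-((n:ℝ)-1)) * g z < ⊤ := by
  have hn' : (2:ℝ) ≤ n := by exact_mod_cast hn
  obtain ⟨C1, hC1, H1⟩ := kernel_local (n:ℝ) ((n:ℝ)-1) (by linarith) (by linarith)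
  have hm : Measurable (fun q : Euc n × Euc n => edist q.2 q.1 ^ (-((n:ℝ)-1)) * g q.2) :=
    ((meas_ker _).comp measurable_swap).mul (hg.comp measurable_snd)
  refine ae_lt_top hm.lintegral_prod_right' (lt_top_iff_ne_top.1 ?_)
  rw [lintegral_lintegral_swap hm.aemeasurable]
  calc _ ≤ ∫⁻ z in ball c R, (C1 * VB n * ENNReal.ofReal (2*R) ^ ((n:ℝ) - ((n:ℝ)-1))) * g z := by
        refine setLIntegral_mono' measurableSet_ball fun z hz => ?_
        simp only [edist_comm z]
        rw [lintegral_mul_const _ (meas_ker' _ z)]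
        refine mul_le_mul_left (le_trans (lintegral_mono_set (ball_subset_ball' ?_))
          (H1 volume z (VB n) (2*R) (by linarith) fun s hs _ => (vol_ball n z s hs).le)) _
        have := mem_ball'.1 hz
        linarith
    _ < ⊤ := by
        rw [lintegral_const_mul _ hg]
        refine ENNReal.mul_lt_top (ENNReal.mul_lt_top (ENNReal.mul_lt_top hC1.lt_top (VB_ne_top n).lt_top)
          (ENNReal.rpow_ne_top_of_nonneg (by linarith) ENNReal.ofReal_ne_top).lt_top) h

def mol {n : ℕ} (φ : ContDiffBump (0 : Euc n)) (u : Euc n → ℝ) : Euc n → ℝ :=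
  MeasureTheory.convolution (φ.normed volume) u (ContinuousLinearMap.lsmul ℝ ℝ) volume

lemma mol_cd {n : ℕ} (φ : ContDiffBump (0 : Euc n)) (u : Euc n → ℝ) (hu : LocallyIntegrable u volume) :
    ContDiff ℝ 1 (mol φ u) :=
  (φ.hasCompactSupport_normed).contDiff_convolution_left _ (n := 1) φ.contDiff_normed hu

lemma mol_grad {n : ℕ} (φ : ContDiffBump (0 : Euc n)) (u : Euc n → ℝ) (v : Euc n → Euc n)
    (Γ : Set (Euc n)) (hΓ : volume Γ = 0) (hΓc : IsClosed Γ) (hu : LocallyIntegrable u volume)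
    (hg : IsDistribGradOn u v Γᶜ) (f : Euc n → ℝ≥0∞) (hf : ∀ᵐ z, ‖v z‖ₑ = f z) (x : Euc n)
    (hx : closedBall x φ.rOut ⊆ Γᶜ) :
    ‖fderiv ℝ (mol φ u) x‖ₑ ≤ (volume (ball (0:Euc n) φ.rIn))⁻¹ * ∫⁻ y in ball x φ.rOut, f y := by
  have hres : (volume : Measure (Euc n)).restrict Γᶜ = volume :=
    Measure.restrict_eq_self_of_ae_mem (measure_eq_zero_iff_ae_notMem.1 hΓ)
  obtain ⟨Φ, hΦ⟩ : ∃ Φ, Φ = φ.normed (volume : Measure (Euc n)) := ⟨_, rfl⟩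
  have hΦc : HasCompactSupport Φ := by rw [hΦ]; exact φ.hasCompactSupport_normed
  have hΦd : ∀ m : ℕ∞, ContDiff ℝ m Φ := fun m => by rw [hΦ]; exact φ.contDiff_normed
  have hΦ1 : ContDiff ℝ 1 Φ := hΦd 1
  have hder := hΦc.hasFDerivAt_convolution_left (ContinuousLinearMap.lsmul ℝ ℝ) hΦ1 hu x
  rw [show mol φ u = MeasureTheory.convolution Φ u (ContinuousLinearMap.lsmul ℝ ℝ) volume by
    rw [hΦ]; rfl, hder.fderiv]
  set L := MeasureTheory.convolution (fderiv ℝ Φ) u ((ContinuousLinearMap.lsmul ℝ ℝ).precompL (Euc n)) volume x with hL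
  have hex := (hΦc.fderiv ℝ).convolutionExists_left
    ((ContinuousLinearMap.lsmul ℝ ℝ).precompL (Euc n)) (hΦ1.continuous_fderiv (by norm_num)) hu x
  have hLw : ∀ w, L w = ∫ y, fderiv ℝ Φ (x - y) w * u y := by
    intro w
    rw [hL, MeasureTheory.convolution, ContinuousLinearMap.integral_apply hex]
    rw [← integral_sub_left_eq_self _ volume x]
    simp [ContinuousLinearMap.precompL]
  set ψ : Euc n → ℝ := fun y => Φ (x - y) with hψ
  have hψd : ∀ m : ℕ∞, ContDiff ℝ m ψ := fun m => (hΦd m).comp (contDiff_const.sub contDiff_id)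
  have hψsub : Function.support ψ ⊆ ball x φ.rOut := by
    intro y hy
    have : x - y ∈ Function.support Φ := hy
    rw [hΦ, φ.support_normed_eq, mem_ball_zero_iff] at this
    rwa [mem_ball', dist_eq_norm]
  have hψt : tsupport ψ ⊆ closedBall x φ.rOut :=
    closure_minimal (hψsub.trans ball_subset_closedBall) isClosed_closedBall
  have hψc : HasCompactSupport ψ :=
    (isCompact_closedBall x φ.rOut).of_isClosed_subset (isClosed_tsupport _) hψt
  have hψf : ∀ y w, fderiv ℝ ψ y w = - fderiv ℝ Φ (x - y) w := by
    intro y w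
    have h1 : HasFDerivAt ψ ((fderiv ℝ Φ (x - y)).comp (-(ContinuousLinearMap.id ℝ (Euc n)))) y :=
      ((hΦ1.differentiable (by norm_num) (x-y)).hasFDerivAt).comp y ((hasFDerivAt_id y).const_sub x)
    rw [h1.fderiv]; simp
  have hG := hg ψ (hψd ⊤) hψc (hψt.trans hx)
  rw [hres] at hG
  have hgradc : Continuous (gradient ψ) := by
    have h1 : Continuous (fderiv ℝ ψ) := (hψd 1).continuous_fderiv (by norm_num)
    exact (InnerProductSpace.toDual ℝ (Euc n)).symm.continuous.comp h1
  have hgcs : HasCompactSupport (gradient ψ) :=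
    (hψc.fderiv ℝ).comp_left (g := (InnerProductSpace.toDual ℝ (Euc n)).symm) (by simp)
  have hint : Integrable (fun y => u y • gradient ψ y) volume :=
    hu.integrable_smul_right_of_hasCompactSupport hgradc hgcs
  set V := ∫ y, ψ y • v y with hV
  have hLV : ∀ w, L w = inner ℝ w V := by
    intro w
    have h1 : V = - ∫ y, u y • gradient ψ y := by rw [hG, neg_neg]
    rw [h1, inner_neg_right, ← integral_inner hint, hLw, ← integral_neg]
    refine integral_congr_ae (Eventually.of_forall fun y => ?_)
    simp only
    rw [inner_smul_right, real_inner_comm, inner_gradient_left, hψf]; ring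
  have hLV2 : ‖L‖ₑ ≤ ‖V‖ₑ := by
    rw [enorm_le_iff_norm_le]
    refine ContinuousLinearMap.opNorm_le_bound _ (norm_nonneg _) fun w => ?_
    rw [hLV, mul_comm]; exact norm_inner_le_norm w V
  refine hLV2.trans ((enorm_integral_le_lintegral_enorm _).trans ?_)
  rw [← lintegral_const_mul' _ _ (ENNReal.inv_ne_top.2 (measure_ball_pos _ _ φ.rIn_pos).ne'),
    ← lintegral_indicator measurableSet_ball]
  refine lintegral_mono_ae ?_
  filter_upwards [hf] with y hy
  by_cases hyb : y ∈ ball x φ.rOut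
  · rw [indicator_of_mem hyb, enorm_smul, hy]
    refine mul_le_mul_left ?_ _
    simp only [hψ, hΦ]
    rw [Real.enorm_eq_ofReal (φ.nonneg_normed _)]
    refine (ENNReal.ofReal_le_ofReal (φ.normed_le_div_measure_closedBall_rIn volume _)).trans ?_
    rw [one_div, ENNReal.ofReal_inv_of_pos, Measure.real, ENNReal.ofReal_toReal]
    · exact ENNReal.inv_le_inv.2 (measure_mono ball_subset_closedBall)
    · exact measure_closedBall_lt_top.ne
    · exact ENNReal.toReal_pos (measure_closedBall_pos _ _ φ.rIn_pos).ne' measure_closedBall_lt_top.ne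
  · have : ψ y = 0 := by
      by_contra hc
      exact hyb (hψsub hc)
    rw [this]; simp

lemma mol_seg {n : ℕ} (φ : ContDiffBump (0 : Euc n)) (u : Euc n → ℝ) (v : Euc n → Euc n)
    (Γ : Set (Euc n)) (hΓ : volume Γ = 0) (hΓc : IsClosed Γ) (hu : LocallyIntegrable u volume)
    (hg : IsDistribGradOn u v Γᶜ) (f : Euc n → ℝ≥0∞) (hf : ∀ᵐ z, ‖v z‖ₑ = f z) (x y : Euc n)
    (hxy : ∀ t ∈ Icc (0:ℝ) 1, closedBall (x + t • (y - x)) φ.rOut ⊆ Γᶜ) :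
    ‖mol φ u y - mol φ u x‖ₑ ≤ edist y x * ∫⁻ t in Ioc (0:ℝ) 1,
      (volume (ball (0:Euc n) φ.rIn))⁻¹ * ∫⁻ s in ball (x + t • (y - x)) φ.rOut, f s := by
  set F : ℝ → ℝ := fun t => mol φ u (x + t • (y - x)) with hF
  have hU := mol_cd φ u hu
  have hFc : ContDiff ℝ 1 F := hU.comp (contDiff_const.add (contDiff_id.smul contDiff_const))
  have h1 := enorm_sub_le_lintegral_deriv_of_contDiffOn_Icc (hFc.contDiffOn (s := Icc 0 1)) zero_le_one
  have e1 : F 1 = mol φ u y := by simp [hF]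
  have e0 : F 0 = mol φ u x := by simp [hF]
  rw [e1, e0] at h1
  refine h1.trans ?_
  rw [← lintegral_const_mul' _ _ (edist_ne_top _ _), ← restrict_Ioc_eq_restrict_Icc]
  refine setLIntegral_mono' measurableSet_Ioc fun t ht => ?_
  have hd : HasDerivAt F (fderiv ℝ (mol φ u) (x + t • (y - x)) (y - x)) t := by
    have h2 : HasDerivAt (fun t : ℝ => x + t • (y - x)) (y - x) t := by
      simpa using ((hasDerivAt_id t).smul_const (y - x)).const_add x
    exact ((hU.differentiable (by norm_num) _).hasFDerivAt).comp_hasDerivAt t h2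
  rw [hd.deriv, edist_eq_enorm_sub, mul_comm]
  refine (ContinuousLinearMap.le_opNorm_enorm _ _).trans (mul_le_mul_left ?_ _)
  exact mol_grad φ u v Γ hΓ hΓc hu hg f hf _ (hxy t ⟨ht.1.le, ht.2⟩)

lemma seg_room {n : ℕ} (Γ : Set (Euc n)) (hΓc : IsClosed Γ) (x y : Euc n)
    (h : ∀ t ∈ Icc (0:ℝ) 1, x + t • (y - x) ∉ Γ) :
    ∃ ε > 0, ∀ ρ, ρ ≤ ε → ∀ t ∈ Icc (0:ℝ) 1, closedBall (x + t • (y - x)) ρ ⊆ Γᶜ := by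
  have hK : IsCompact ((fun t : ℝ => x + t • (y - x)) '' Icc 0 1) :=
    isCompact_Icc.image (by fun_prop)
  have hdis : Disjoint ((fun t : ℝ => x + t • (y - x)) '' Icc 0 1) Γ := by
    rw [Set.disjoint_left]
    rintro _ ⟨t, ht, rfl⟩
    exact h t ht
  obtain ⟨ε, hε, hd⟩ := hdis.exists_cthickenings hK hΓc
  refine ⟨ε, hε, fun ρ hρ t ht z hz hzΓ => ?_⟩
  refine Set.disjoint_left.1 hd ?_ (self_subset_cthickening Γ hzΓ)
  exact mem_cthickening_of_dist_le z (x + t • (y - x)) ε _ ⟨t, ht, rfl⟩ ((mem_closedBall.1 hz).trans hρ)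

def bI {n : ℕ} (f : Euc n → ℝ≥0∞) (ρ : ℝ) (z s : Euc n) : ℝ≥0∞ := if dist s z < ρ then f s else 0

lemma bI_meas {n : ℕ} (f : Euc n → ℝ≥0∞) (hf : Measurable f) (ρ : ℝ) :
    Measurable (fun q : Euc n × Euc n => bI f ρ q.1 q.2) := by
  unfold bI
  refine Measurable.ite (measurableSet_lt ?_ measurable_const) (hf.comp measurable_snd) measurable_const
  exact measurable_snd.dist measurable_fst

lemma bI_eq {n : ℕ} (f : Euc n → ℝ≥0∞) (ρ : ℝ) (z : Euc n) :
    ∫⁻ s in ball z ρ, f s = ∫⁻ s, bI f ρ z s := by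
  rw [← lintegral_indicator measurableSet_ball]
  refine lintegral_congr fun s => ?_
  by_cases h : dist s z < ρ <;> simp [bI, indicator, h]

lemma bint_meas {n : ℕ} (f : Euc n → ℝ≥0∞) (hf : Measurable f) (ρ : ℝ) :
    Measurable (fun z => ∫⁻ s in ball z ρ, f s) := by
  simp only [bI_eq]
  exact (bI_meas f hf ρ).lintegral_prod_right'

lemma avg_pot (n : ℕ) (hn : 2 ≤ n) : ∃ C : ℝ≥0∞, C ≠ ⊤ ∧ ∀ (c : Euc n) (r ρ : ℝ), 0 < ρ →
    ∀ (x : Euc n) (f : Euc n → ℝ≥0∞), Measurable f →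
    ∫⁻ z in ball c r, edist z x ^ (-((n:ℝ)-1)) *
        ((volume (ball (0:Euc n) (ρ/2)))⁻¹ * ∫⁻ s in ball z ρ, f s) ≤
      C * ∫⁻ s in ball c (r+ρ), edist s x ^ (-((n:ℝ)-1)) * f s := by
  obtain ⟨C, hC, H⟩ := avg_kernel n hn
  refine ⟨(VB n)⁻¹ * 2 ^ (n:ℝ) * C, ENNReal.mul_ne_top (ENNReal.mul_ne_top
    (ENNReal.inv_ne_top.2 (VB_ne_zero n)) (ENNReal.rpow_ne_top_of_nonneg (by positivity) (by norm_num))) hC, ?_⟩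
  intro c r ρ hρ x f hf
  set M := (volume (ball (0:Euc n) (ρ/2)))⁻¹ with hM
  have hMt : M ≠ ⊤ := ENNReal.inv_ne_top.2 (measure_ball_pos _ _ (by positivity)).ne'
  have hρ0 : ENNReal.ofReal ρ ≠ 0 := by simpa using hρ
  have hMρ : M * ENNReal.ofReal ρ ^ (n:ℝ) = (VB n)⁻¹ * 2 ^ (n:ℝ) := by
    have h1 : ENNReal.ofReal ρ ^ (n:ℝ) = ENNReal.ofReal (ρ/2) ^ (n:ℝ) * 2 ^ (n:ℝ) := by
      rw [← ENNReal.mul_rpow_of_nonneg _ _ (by positivity)]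
      congr 1
      have : (2:ℝ≥0∞) = ENNReal.ofReal 2 := by simp
      rw [this, ← ENNReal.ofReal_mul (by positivity)]
      congr 1; ring
    have h2 : ENNReal.ofReal (ρ/2) ^ (n:ℝ) ≠ 0 :=
      (ENNReal.rpow_pos (by simpa using hρ) ENNReal.ofReal_ne_top).ne'
    have h3 : ENNReal.ofReal (ρ/2) ^ (n:ℝ) ≠ ⊤ :=
      ENNReal.rpow_ne_top_of_nonneg (by positivity) ENNReal.ofReal_ne_top
    rw [hM, vol_ball n 0 (ρ/2) (by positivity), h1, ENNReal.mul_inv (Or.inl (VB_ne_zero n)) (Or.inl (VB_ne_top n))]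
    rw [mul_assoc, ← mul_assoc _ _ ((2:ℝ≥0∞)^(n:ℝ)), ENNReal.inv_mul_cancel h2 h3, one_mul]
  have hbm := bI_meas f hf ρ
  have hm : Measurable (fun q : Euc n × Euc n => edist q.1 x ^ (-((n:ℝ)-1)) * bI f ρ q.1 q.2) :=
    ((meas_ker' _ x).comp measurable_fst).mul hbm
  calc _ = ∫⁻ z in ball c r, M * ∫⁻ s, edist z x ^ (-((n:ℝ)-1)) * bI f ρ z s := by
        refine lintegral_congr fun z => ?_
        rw [bI_eq, lintegral_const_mul]
        · ring
        · exact hbm.of_uncurry_left (x := z)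
    _ = M * ∫⁻ s, ∫⁻ z in ball c r, edist z x ^ (-((n:ℝ)-1)) * bI f ρ z s := by
        rw [lintegral_const_mul' _ _ hMt, lintegral_lintegral_swap hm.aemeasurable]
    _ ≤ M * ∫⁻ s, (C * ENNReal.ofReal ρ ^ (n:ℝ)) * (ball c (r+ρ)).indicator (fun s => edist s x ^ (-((n:ℝ)-1)) * f s) s := by
        refine mul_le_mul_right (lintegral_mono fun s => ?_) _
        by_cases hs : s ∈ ball c (r+ρ)
        · rw [indicator_of_mem hs]
          calc _ ≤ ∫⁻ z in ball c r, (ball s ρ).indicator (fun z => edist z x ^ (-((n:ℝ)-1)) * f s) z := by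
                refine lintegral_mono fun z => ?_
                by_cases hz : dist s z < ρ
                · rw [indicator_of_mem (mem_ball'.2 hz)]; simp [bI, hz]
                · simp [bI, hz]
            _ ≤ ∫⁻ z, (ball s ρ).indicator (fun z => edist z x ^ (-((n:ℝ)-1)) * f s) z :=
                setLIntegral_le_lintegral _ _
            _ = (∫⁻ z in ball s ρ, edist z x ^ (-((n:ℝ)-1))) * f s := by
                rw [lintegral_indicator measurableSet_ball, lintegral_mul_const _ (meas_ker' _ x)]
            _ ≤ (C * ENNReal.ofReal ρ ^ (n:ℝ) * edist s x ^ (-((n:ℝ)-1))) * f s :=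
                mul_le_mul_left (H s x ρ hρ) _
            _ = _ := by ring
        · rw [indicator_of_notMem hs, mul_zero]
          refine le_of_eq ?_
          rw [setLIntegral_congr_fun (g := fun _ => 0) measurableSet_ball]
          · simp
          · intro z hz
            have : ¬ dist s z < ρ := by
              intro h1
              apply hs
              rw [mem_ball] at hz ⊢
              linarith [dist_triangle s z c]
            simp [bI, this]
    _ = _ := by
        have hm2 : Measurable (fun s : Euc n => edist s x ^ (-((n:ℝ)-1)) * f s) := (meas_ker' _ x).mul hf
        rw [lintegral_const_mul _ (hm2.indicator measurableSet_ball), lintegral_indicator measurableSet_ball,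
          ← mul_assoc, ← mul_assoc, mul_right_comm M C, hMρ]

/-- standing data for a function in `W` -/
structure Dat (n : ℕ) (d C₀ : ℝ) (Γ : Set (Euc n)) (u : Euc n → ℝ) (v : Euc n → Euc n)
    (f : Euc n → ℝ≥0∞) : Prop where
  gr : GR n d C₀ Γ
  n2 : 2 ≤ n
  mw : MemW n d Γ u v
  li : LocallyIntegrable u volume
  fm : Measurable f
  fv : ∀ᵐ z, ‖v z‖ₑ = f z

lemma Dat.fin_f {n : ℕ} {d C₀ : ℝ} {Γ : Set (Euc n)} {u : Euc n → ℝ} {v : Euc n → Euc n}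
    {f : Euc n → ℝ≥0∞} (h : Dat n d C₀ Γ u v f) (c : Euc n) (r : ℝ) (hr : 0 < r) :
    ∫⁻ z in ball c r, f z < ⊤ := by
  have hγ : 0 < (n:ℝ)-1-d := by linarith [h.gr.hdn]
  have hres : (volume : Measure (Euc n)).restrict Γᶜ = volume :=
    Measure.restrict_eq_self_of_ae_mem (ae_notG h.gr)
  have h1 : ∫⁻ z, infEDist z Γ ^ (-((n:ℝ)-1-d)) * f z ^ 2 < ⊤ := by
    have := h.mw.l2
    rw [measW_lint h.gr _ _ h.gr.cl.isOpen_compl.measurableSet, hres] at this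
    refine lt_of_le_of_lt (le_of_eq (lintegral_congr_ae ?_)) this
    filter_upwards [h.fv] with z hz
    rw [← hz, ENNReal.ofReal_pow (norm_nonneg _), ofReal_norm]
  set R := infDist c Γ + r with hR
  have hR0 : 0 < R := by have := infDist_nonneg (x := c) (s := Γ); linarith
  have hR1 : ENNReal.ofReal R ^ (-((n:ℝ)-1-d)) ≠ 0 := (ENNReal.rpow_pos (by simpa using hR0) ENNReal.ofReal_ne_top).ne'
  have h2 : ENNReal.ofReal R ^ (-((n:ℝ)-1-d)) * ∫⁻ z in ball c r, f z ^ 2 < ⊤ := by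
    rw [← lintegral_const_mul _ (h.fm.pow_const 2)]
    refine lt_of_le_of_lt ?_ (lt_of_le_of_lt (setLIntegral_le_lintegral (ball c r) _) h1)
    refine setLIntegral_mono' measurableSet_ball fun y hy => ?_
    refine mul_le_mul_left (enn_rpow_anti (by linarith) ?_) _
    rw [D_eq h.gr]
    refine ENNReal.ofReal_le_ofReal ?_
    have h1 := infDist_le_infDist_add_dist (s := Γ) (x := y) (y := c)
    have h2 := mem_ball.1 hy
    linarith
  have h3 : ∫⁻ z in ball c r, f z ^ 2 < ⊤ := by
    by_contra hc
    rw [not_lt, top_le_iff] at hc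
    rw [hc, ENNReal.mul_top hR1] at h2
    exact lt_irrefl _ h2
  calc _ ≤ ∫⁻ z in ball c r, (1 + f z ^ 2) := by
        refine lintegral_mono fun z => ?_
        rcases le_total (f z) 1 with h4 | h4
        · exact h4.trans le_self_add
        · refine le_trans ?_ le_add_self
          rw [pow_two]; exact le_mul_of_one_le_left' h4
    _ < ⊤ := by
        rw [lintegral_add_left measurable_const]
        refine ENNReal.add_lt_top.2 ⟨?_, h3⟩
        rw [setLIntegral_one]; exact measure_ball_lt_top

lemma tends_ball {n : ℕ} (c : Euc n) (r : ℝ) (hr : 0 < r) (g : Euc n → ℝ≥0∞) (hg : Measurable g)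
    (h : ∫⁻ z in ball c (r+1), g z < ⊤) :
    Tendsto (fun k : ℕ => ∫⁻ z in ball c (r + 1/((k:ℝ)+1)), g z) atTop (𝓝 (∫⁻ z in ball c r, g z)) := by
  have h1 : ∫⁻ z in ball c r, g z = (volume.withDensity g) (⋂ k : ℕ, ball c (r + 1/((k:ℝ)+1))) := by
    have e : (⋂ k : ℕ, ball c (r + 1/((k:ℝ)+1))) = closedBall c r := by
      ext z
      simp only [mem_iInter, mem_ball, mem_closedBall]
      constructor
      · intro h
        refine ge_of_tendsto' (x := atTop) (f := fun k:ℕ => r + 1/((k:ℝ)+1)) ?_ (fun k => (h k).le)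
        simpa using (tendsto_one_div_add_atTop_nhds_zero_nat (𝕜 := ℝ)).const_add r
      · intro h k
        have : 0 < 1/((k:ℝ)+1) := by positivity
        linarith
    rw [e, withDensity_apply _ measurableSet_closedBall]
    refine setLIntegral_congr ?_
    have h0 : volume (sphere c r) = 0 := Measure.addHaar_sphere_of_ne_zero _ _ hr.ne'
    rw [← ball_union_sphere]
    exact (union_ae_eq_left_of_ae_eq_empty (ae_eq_empty.2 h0)).symm
  simp only [← withDensity_apply g (measurableSet_ball (x := c))] at h ⊢
  rw [withDensity_apply g measurableSet_ball, h1]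
  refine tendsto_measure_iInter_atTop (fun k => measurableSet_ball.nullMeasurableSet) ?_ ⟨0, ?_⟩
  · intro i j hij
    refine ball_subset_ball ?_
    have : (i:ℝ) ≤ j := by exact_mod_cast hij
    gcongr
  · simpa using h.ne

def bmp (n : ℕ) (k : ℕ) : ContDiffBump (0 : Euc n) :=
  ⟨(1/((k:ℝ)+1))/2, 1/((k:ℝ)+1), by positivity, by
    have : 0 < 1/((k:ℝ)+1) := by positivity
    linarith⟩

lemma riesz0 (n : ℕ) (hn : 2 ≤ n) : ∃ C : ℝ≥0∞, C ≠ ⊤ ∧ ∀ (d C₀ : ℝ) (Γ : Set (Euc n))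
    (u : Euc n → ℝ) (v : Euc n → Euc n) (f : Euc n → ℝ≥0∞), Dat n d C₀ Γ u v f →
    ∀ (c : Euc n) (r : ℝ), 0 < r → ∀ᵐ x ∂(volume.restrict (ball c r)),
      ∫⁻ y in ball c r, ‖u y - u x‖ₑ ≤ C * ENNReal.ofReal r ^ (n:ℝ) *
        ∫⁻ z in ball c r, edist z x ^ (-((n:ℝ)-1)) * f z := by
  obtain ⟨C1, hC1, H1⟩ := lemQ n hn
  obtain ⟨C2, hC2, H2⟩ := avg_pot n hn
  refine ⟨C1 * C2, ENNReal.mul_ne_top hC1 hC2, ?_⟩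
  intro d C₀ Γ u v f h c r hr
  have hΓ := vol_G h.gr
  have hΓc := h.gr.cl
  have hconv : ∀ᵐ x : Euc n, Tendsto (fun k => mol (bmp n k) u x) atTop (𝓝 (u x)) := by
    refine ContDiffBump.ae_convolution_tendsto_right_of_locallyIntegrable (K := 2)
      (φ := fun k : ℕ => bmp n k) ?_ (Eventually.of_forall fun k => ?_) h.li
    · exact tendsto_one_div_add_atTop_nhds_zero_nat (𝕜 := ℝ)
    · simp only [bmp]; linarith
  obtain ⟨CD, hCD, HD⟩ := int_D n d C₀ 1 one_pos (by linarith [h.gr.hdn]) h.gr.hd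
  have hpD := pot_fin hn c r hr (fun z => infEDist z Γ ^ (-(1:ℝ))) (meas_D Γ _)
    (lt_of_le_of_lt (HD Γ h.gr c r hr) (ENNReal.mul_lt_top hCD.lt_top
      (ENNReal.rpow_ne_top_of_nonneg (by have : (2:ℝ) ≤ n := by exact_mod_cast hn
                                         linarith) ENNReal.ofReal_ne_top).lt_top))
  have hpf := pot_fin hn c (r+1) (by linarith) f h.fm (h.fin_f c (r+1) (by linarith))
  have hpf' := ae_restrict_of_ae_restrict_of_subset (ball_subset_ball (show r ≤ r+1 by linarith)) hpf
  filter_upwards [hpD, hpf', ae_restrict_of_ae hconv, ae_restrict_of_ae (ae_notG h.gr),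
    ae_restrict_mem measurableSet_ball] with x hxD hxf hxc hxΓ hxB
  set Hk : ℕ → Euc n → ℝ≥0∞ := fun k z =>
    (volume (ball (0:Euc n) ((1/((k:ℝ)+1))/2)))⁻¹ * ∫⁻ s in ball z (1/((k:ℝ)+1)), f s with hHk
  have hHm : ∀ k, Measurable (Hk k) := fun k => (bint_meas f h.fm _).const_mul _
  have hQ := H1 c r hr x hxB (fun z => infEDist z Γ ^ (-(1:ℝ))) (meas_D Γ _)
  have hQt : ∀ᵐ y ∂(volume.restrict (ball c r)),
      edist y x * ∫⁻ t in Ioc (0:ℝ) 1, infEDist (x + t • (y - x)) Γ ^ (-(1:ℝ)) < ⊤ := by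
    refine ae_lt_top ?_ (lt_of_le_of_lt hQ (ENNReal.mul_lt_top (ENNReal.mul_lt_top hC1.lt_top
      (ENNReal.rpow_ne_top_of_nonneg (by positivity) ENNReal.ofReal_ne_top).lt_top) hxD)).ne
    refine measurable_edist_left.mul ?_
    refine Measurable.lintegral_prod_right' (f := fun q : Euc n × ℝ => infEDist (x + q.2 • (q.1 - x)) Γ ^ (-(1:ℝ))) ?_
    exact (meas_D Γ _).comp (by fun_prop)
  have hae : ∀ᵐ y ∂(volume.restrict (ball c r)), ‖u y - u x‖ₑ ≤
      liminf (fun k => edist y x * ∫⁻ t in Ioc (0:ℝ) 1, Hk k (x + t • (y - x))) atTop := by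
    filter_upwards [hQt, ae_restrict_of_ae hconv] with y hy hyc
    by_cases hyx : y = x
    · simp [hyx]
    have hy' : ∫⁻ t in Ioc (0:ℝ) 1, infEDist (x + t • (y - x)) Γ ^ (-(1:ℝ)) < ⊤ := by
      by_contra hc
      rw [not_lt, top_le_iff] at hc
      rw [hc, ENNReal.mul_top (by simpa using hyx)] at hy
      exact lt_irrefl _ hy
    obtain ⟨ε, hε, hroom⟩ := seg_room Γ hΓc x y (seg_avoid Γ x y hxΓ hy')
    have hlim : Tendsto (fun k => ‖mol (bmp n k) u y - mol (bmp n k) u x‖ₑ) atTop (𝓝 ‖u y - u x‖ₑ) :=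
      (continuous_enorm.tendsto _).comp (hyc.sub hxc)
    rw [← hlim.liminf_eq]
    refine liminf_le_liminf ?_
    have hev : ∀ᶠ k : ℕ in atTop, 1/((k:ℝ)+1) < ε :=
      (tendsto_one_div_add_atTop_nhds_zero_nat (𝕜 := ℝ)).eventually (gt_mem_nhds hε)
    filter_upwards [hev] with k hk
    exact mol_seg (bmp n k) u v Γ hΓ hΓc h.li h.mw.isGrad f h.fv x y (hroom _ hk.le)
  have hkm : Measurable (fun z : Euc n => edist z x ^ (-((n:ℝ)-1)) * f z) := (meas_ker' _ x).mul h.fm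
  have hlim2 := tends_ball c r hr _ hkm hxf
  calc _ ≤ ∫⁻ y in ball c r, liminf (fun k => edist y x * ∫⁻ t in Ioc (0:ℝ) 1, Hk k (x + t • (y - x))) atTop :=
        lintegral_mono_ae hae
    _ ≤ liminf (fun k => ∫⁻ y in ball c r, edist y x * ∫⁻ t in Ioc (0:ℝ) 1, Hk k (x + t • (y - x))) atTop := by
        refine lintegral_liminf_le fun k => measurable_edist_left.mul ?_
        refine Measurable.lintegral_prod_right' (f := fun q : Euc n × ℝ => Hk k (x + q.2 • (q.1 - x))) ?_
        exact (hHm k).comp (by fun_prop)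
    _ ≤ liminf (fun k : ℕ => C1 * ENNReal.ofReal r ^ (n:ℝ) * (C2 * ∫⁻ s in ball c (r+1/((k:ℝ)+1)), edist s x ^ (-((n:ℝ)-1)) * f s)) atTop := by
        refine liminf_le_liminf (Eventually.of_forall fun k => ?_)
        refine (H1 c r hr x hxB (Hk k) (hHm k)).trans (mul_le_mul_right ?_ _)
        exact H2 c r (1/((k:ℝ)+1)) (by positivity) x f h.fm
    _ = C1 * ENNReal.ofReal r ^ (n:ℝ) * (C2 * ∫⁻ s in ball c r, edist s x ^ (-((n:ℝ)-1)) * f s) := by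
        refine Tendsto.liminf_eq ?_
        refine ENNReal.Tendsto.const_mul (ENNReal.Tendsto.const_mul hlim2 (Or.inr hC2)) (Or.inr ?_)
        exact ENNReal.mul_ne_top hC1 (ENNReal.rpow_ne_top_of_nonneg (by positivity) ENNReal.ofReal_ne_top)
    _ = _ := by ring

lemma riesz (n : ℕ) (hn : 2 ≤ n) : ∃ C : ℝ≥0∞, C ≠ ⊤ ∧ ∀ (d C₀ : ℝ) (Γ : Set (Euc n))
    (u : Euc n → ℝ) (v : Euc n → Euc n) (f : Euc n → ℝ≥0∞), Dat n d C₀ Γ u v f →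
    ∀ (c : Euc n) (r : ℝ), 0 < r → ∀ᵐ x ∂(volume.restrict (ball c r)),
      ‖u x - ⨍ y in ball c r, u y‖ₑ ≤ C *
        ∫⁻ z in ball c r, edist z x ^ (-((n:ℝ)-1)) * f z := by
  obtain ⟨C, hC, H⟩ := riesz0 n hn
  refine ⟨(VB n)⁻¹ * C, ENNReal.mul_ne_top (ENNReal.inv_ne_top.2 (VB_ne_zero n)) hC, ?_⟩
  intro d C₀ Γ u v f h c r hr
  have hui : IntegrableOn u (ball c r) volume :=
    (h.li.integrableOn_isCompact (isCompact_closedBall c r)).mono_set ball_subset_closedBall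
  have hV0 : volume (ball c r) ≠ 0 := (measure_ball_pos _ _ hr).ne'
  have hVt : volume (ball c r) ≠ ⊤ := measure_ball_lt_top.ne
  filter_upwards [H d C₀ Γ u v f h c r hr] with x hx
  have e : u x - ⨍ y in ball c r, u y = - ⨍ y in ball c r, (u y - u x) := by
    have h1 : ⨍ y in ball c r, (u y - u x) = (⨍ y in ball c r, u y) - u x := by
      rw [setAverage_eq, setAverage_eq, integral_sub hui (integrableOn_const hVt), smul_sub]
      congr 1
      rw [setIntegral_const, smul_smul, inv_mul_cancel₀, one_smul]
      exact (ENNReal.toReal_pos hV0 hVt).ne'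
    rw [h1]; ring
  rw [e, enorm_neg, setAverage_eq, enorm_smul]
  have e2 : ‖(volume.real (ball c r))⁻¹‖ₑ = (volume (ball c r))⁻¹ := by
    rw [Real.enorm_eq_ofReal (by positivity), Measure.real, ENNReal.ofReal_inv_of_pos (ENNReal.toReal_pos hV0 hVt),
      ENNReal.ofReal_toReal hVt]
  rw [e2]
  calc _ ≤ (volume (ball c r))⁻¹ * (C * ENNReal.ofReal r ^ (n:ℝ) *
        ∫⁻ z in ball c r, edist z x ^ (-((n:ℝ)-1)) * f z) :=
        mul_le_mul_right ((enorm_integral_le_lintegral_enorm _).trans hx) _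
    _ = _ := by
        have hr1 : ENNReal.ofReal r ^ (n:ℝ) ≠ 0 := (ENNReal.rpow_pos (by simpa using hr) ENNReal.ofReal_ne_top).ne'
        have hr2 : ENNReal.ofReal r ^ (n:ℝ) ≠ ⊤ := ENNReal.rpow_ne_top_of_nonneg (by positivity) ENNReal.ofReal_ne_top
        rw [vol_ball n c r hr, ENNReal.mul_inv (Or.inl (VB_ne_zero n)) (Or.inl (VB_ne_top n))]
        calc _ = (VB n)⁻¹ * C * ((ENNReal.ofReal r ^ (n:ℝ))⁻¹ * ENNReal.ofReal r ^ (n:ℝ)) *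
              ∫⁻ z in ball c r, edist z x ^ (-((n:ℝ)-1)) * f z := by ring
          _ = _ := by rw [ENNReal.inv_mul_cancel hr1 hr2, mul_one]

lemma ker1 (n : ℕ) (hn : 2 ≤ n) (p : ℝ) (hp : 2 ≤ p)
    (hp2 : n = 2 ∨ p = 2 * (n : ℝ) / ((n : ℝ) - 2)) :
    ∃ C : ℝ≥0∞, C ≠ ⊤ ∧ ∀ (g : Euc n → ℝ≥0∞), Measurable g → ∀ (c : Euc n) (r : ℝ), 0 < r →
      ∫⁻ x in ball c r, (∫⁻ z in ball c r, edist z x ^ (-((n:ℝ)-1)) * g z) ^ p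
      ≤ C * ENNReal.ofReal r ^ ((n:ℝ) + p - p * n / 2) * (∫⁻ z in ball c r, g z ^ (2:ℝ)) ^ (p/2) := by
  have hn' : (2:ℝ) ≤ n := by exact_mod_cast hn
  by_cases h2 : n = 2
  · subst h2
    obtain ⟨C, hC, H⟩ := schur 2 2 1 p hp one_pos two_pos (by norm_num) (by norm_num)
    refine ⟨C * VB 2, ENNReal.mul_ne_top hC (VB_ne_top 2), fun g hg c r hr => ?_⟩
    have := H volume (VB 2) c r hr (fun x s hs => by rw [vol_ball 2 x s hs]; norm_num) g hg
    have e1 : (-(((2:ℕ):ℝ) - 1)) = -1 := by norm_num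
    have e2 : (((2:ℕ):ℝ) + p - p * ((2:ℕ):ℝ) / 2) = 2 - p * 1 + p * ((2:ℕ):ℝ)/2 := by push_cast; ring
    rw [e1, e2]
    exact_mod_cast this
  · have h3 : 3 ≤ n := by omega
    have h3' : (3:ℝ) ≤ n := by exact_mod_cast h3
    have hp' := hp2.resolve_left h2
    obtain ⟨C, hC, H⟩ := hedberg n h3
    refine ⟨C, hC, fun g hg c r hr => ?_⟩
    have hne : (n:ℝ) - 2 ≠ 0 := by linarith
    have e : (n:ℝ) + p - p * n / 2 = 0 := by rw [hp']; field_simp; ring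
    have e2 : p / 2 = (n:ℝ)/((n:ℝ)-2) := by rw [hp']; field_simp
    rw [e, ENNReal.rpow_zero, mul_one, e2]
    have := H ((ball c r).indicator g) (hg.indicator measurableSet_ball)
    rw [← hp'] at this
    have a1 : ∀ x, ∫⁻ z, edist z x ^ (-((n:ℝ)-1)) * (ball c r).indicator g z =
        ∫⁻ z in ball c r, edist z x ^ (-((n:ℝ)-1)) * g z := by
      intro x
      rw [← lintegral_indicator measurableSet_ball]
      congr 1; ext z
      by_cases hz : z ∈ ball c r <;> simp [hz]
    have a2 : ∫⁻ z, (ball c r).indicator g z ^ (2:ℝ) = ∫⁻ z in ball c r, g z ^ (2:ℝ) := by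
      rw [← lintegral_indicator measurableSet_ball]
      congr 1; ext z
      by_cases hz : z ∈ ball c r <;> simp [hz]
    have a2' : ∫⁻ z, (ball c r).indicator g z ^ 2 = ∫⁻ z in ball c r, g z ^ (2:ℝ) := by
      rw [← a2]; congr 1; ext z; exact (ENNReal.rpow_two _).symm
    simp only [a1] at this
    refine (setLIntegral_le_lintegral _ _).trans (this.trans ?_)
    first
    | rw [a2]
    | rw [a2']

lemma rpow_split (a b e : ℝ≥0∞) (s : ℝ) (hs : 0 ≤ s) (h : a ≤ b + e) :
    a ^ s ≤ 2 ^ s * (b ^ s + e ^ s) := by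
  rcases le_total b e with h1 | h1
  · calc a ^ s ≤ (2 * e) ^ s := ENNReal.rpow_le_rpow (h.trans (by rw [two_mul]; gcongr)) hs
      _ = 2 ^ s * e ^ s := ENNReal.mul_rpow_of_nonneg _ _ hs
      _ ≤ _ := by gcongr; exact le_add_self
  · calc a ^ s ≤ (2 * b) ^ s := ENNReal.rpow_le_rpow (h.trans (by rw [two_mul]; gcongr)) hs
      _ = 2 ^ s * b ^ s := ENNReal.mul_rpow_of_nonneg _ _ hs
      _ ≤ _ := by gcongr; exact le_self_add

lemma ker_comb (e : ℝ≥0∞) (he : e ≠ ⊤) (a s : ℝ) (hs : 0 < s) (h : s < a) :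
    e ^ (-a) * e ^ s ≤ e ^ (-(a - s)) := by
  by_cases h0 : e = 0
  · subst h0
    rw [ENNReal.zero_rpow_of_pos hs, mul_zero]; exact bot_le
  · rw [← ENNReal.rpow_add _ _ h0 he]
    apply le_of_eq; congr 1; ring

/-- the rescaled density -/
def gD {n : ℕ} (Γ : Set (Euc n)) (γ : ℝ) (f : Euc n → ℝ≥0∞) (z : Euc n) : ℝ≥0∞ :=
  infEDist z Γ ^ (-(γ/2)) * f z

lemma gD_meas {n : ℕ} (Γ : Set (Euc n)) (γ : ℝ) (f : Euc n → ℝ≥0∞) (hf : Measurable f) :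
    Measurable (gD Γ γ f) := (meas_D Γ _).mul hf

lemma gD_f {n : ℕ} {d C₀ : ℝ} {Γ : Set (Euc n)} (h : GR n d C₀ Γ) (γ : ℝ) (f : Euc n → ℝ≥0∞)
    (z : Euc n) (hz : z ∉ Γ) : f z = infEDist z Γ ^ (γ/2) * gD Γ γ f z := by
  unfold gD
  rw [← mul_assoc, ← ENNReal.rpow_add _ _ (D_ne h z hz) (D_top h z), add_neg_cancel,
    ENNReal.rpow_zero, one_mul]

lemma gD_sq {n : ℕ} {d C₀ : ℝ} {Γ : Set (Euc n)} (h : GR n d C₀ Γ) (f : Euc n → ℝ≥0∞)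
    (c : Euc n) (r : ℝ) :
    ∫⁻ z in ball c r, gD Γ ((n:ℝ)-1-d) f z ^ (2:ℝ) = ∫⁻ z in ball c r, f z ^ (2:ℝ) ∂(measW n d Γ) := by
  rw [measW_lint h _ _ measurableSet_ball]
  congr 1; ext z
  unfold gD
  rw [ENNReal.mul_rpow_of_nonneg _ _ (by norm_num), ← ENNReal.rpow_mul]
  congr 2; ring

lemma pot_near {n : ℕ} {d C₀ : ℝ} {Γ : Set (Euc n)} (h : GR n d C₀ Γ) (f : Euc n → ℝ≥0∞)
    (hf : Measurable f) (c x : Euc n) (r γ : ℝ) (hγ : 0 < γ) (hγn : γ < (n:ℝ)-1) :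
    ∫⁻ z in ball c r, edist z x ^ (-((n:ℝ)-1)) * f z ≤
      2^(γ/2) * (infEDist x Γ ^ (γ/2) * ∫⁻ z in ball c r, edist z x ^ (-((n:ℝ)-1)) * gD Γ γ f z) +
      2^(γ/2) * ∫⁻ z in ball c r, edist z x ^ (-((n:ℝ)-1-γ/2)) * gD Γ γ f z := by
  have hg := gD_meas Γ γ f hf
  have m1 : Measurable (fun z => edist z x ^ (-((n:ℝ)-1)) * gD Γ γ f z) := (meas_ker' _ x).mul hg
  have m2 : Measurable (fun z => edist z x ^ (-((n:ℝ)-1-γ/2)) * gD Γ γ f z) := (meas_ker' _ x).mul hg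
  have m3 : Measurable (fun z => infEDist x Γ ^ (γ/2) * (edist z x ^ (-((n:ℝ)-1)) * gD Γ γ f z)) :=
    m1.const_mul _
  have m4 : Measurable (fun z => infEDist x Γ ^ (γ/2) * (edist z x ^ (-((n:ℝ)-1)) * gD Γ γ f z) +
    edist z x ^ (-((n:ℝ)-1-γ/2)) * gD Γ γ f z) := m3.add m2
  rw [← lintegral_const_mul _ m1, ← mul_add, ← lintegral_add_left m3,
    ← lintegral_const_mul _ m4]
  refine lintegral_mono_ae (ae_restrict_of_ae ?_)
  filter_upwards [ae_notG h] with z hz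
  have e1 : infEDist z Γ ^ (γ/2) ≤ 2 ^ (γ/2) * (infEDist x Γ ^ (γ/2) + edist z x ^ (γ/2)) :=
    rpow_split _ _ _ _ (by positivity) infEDist_le_infEDist_add_edist
  have e2 := ker_comb (edist z x) (edist_ne_top _ _) ((n:ℝ)-1) (γ/2) (by positivity) (by linarith)
  calc edist z x ^ (-((n:ℝ)-1)) * f z
      = edist z x ^ (-((n:ℝ)-1)) * (infEDist z Γ ^ (γ/2) * gD Γ γ f z) := by
        rw [← gD_f h γ f z hz]
    _ ≤ edist z x ^ (-((n:ℝ)-1)) * ((2 ^ (γ/2) * (infEDist x Γ ^ (γ/2) + edist z x ^ (γ/2))) * gD Γ γ f z) := by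
        gcongr
    _ = 2^(γ/2) * (infEDist x Γ ^ (γ/2) * (edist z x ^ (-((n:ℝ)-1)) * gD Γ γ f z) +
        (edist z x ^ (-((n:ℝ)-1)) * edist z x ^ (γ/2)) * gD Γ γ f z) := by ring
    _ ≤ _ := by gcongr

lemma pot_far {n : ℕ} {d C₀ : ℝ} {Γ : Set (Euc n)} (h : GR n d C₀ Γ) (f : Euc n → ℝ≥0∞)
    (hf : Measurable f) (c x : Euc n) (r γ : ℝ) (hγ : 0 < γ)
    (hD : ∀ z ∈ ball c r, infEDist z Γ ≤ 3 * infEDist x Γ) :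
    ∫⁻ z in ball c r, edist z x ^ (-((n:ℝ)-1)) * f z ≤
      3^(γ/2) * (infEDist x Γ ^ (γ/2) * ∫⁻ z in ball c r, edist z x ^ (-((n:ℝ)-1)) * gD Γ γ f z) := by
  have hg := gD_meas Γ γ f hf
  have m1 : Measurable (fun z => edist z x ^ (-((n:ℝ)-1)) * gD Γ γ f z) := (meas_ker' _ x).mul hg
  rw [← lintegral_const_mul _ m1, ← lintegral_const_mul _ (m1.const_mul _)]
  refine lintegral_mono_ae ?_
  filter_upwards [ae_restrict_of_ae (ae_notG h), ae_restrict_mem measurableSet_ball] with z hz hzB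
  have e1 : infEDist z Γ ^ (γ/2) ≤ 3 ^ (γ/2) * infEDist x Γ ^ (γ/2) := by
    rw [← ENNReal.mul_rpow_of_nonneg _ _ (by positivity)]
    exact ENNReal.rpow_le_rpow (hD z hzB) (by positivity)
  calc edist z x ^ (-((n:ℝ)-1)) * f z
      = edist z x ^ (-((n:ℝ)-1)) * (infEDist z Γ ^ (γ/2) * gD Γ γ f z) := by
        rw [← gD_f h γ f z hz]
    _ ≤ edist z x ^ (-((n:ℝ)-1)) * ((3 ^ (γ/2) * infEDist x Γ ^ (γ/2)) * gD Γ γ f z) := by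
        gcongr
    _ = _ := by ring

lemma term1 {n : ℕ} {d C₀ : ℝ} {Γ : Set (Euc n)} (h : GR n d C₀ Γ) (p : ℝ) (hp : 2 ≤ p)
    (F : Euc n → ℝ≥0∞) (hF : Measurable F) (c : Euc n) (r : ℝ) (R : ℝ≥0∞)
    (hR : ∀ x ∈ ball c r, infEDist x Γ ≤ R) :
    ∫⁻ x in ball c r, (infEDist x Γ ^ (((n:ℝ)-1-d)/2) * F x) ^ p ∂(measW n d Γ) ≤
      R ^ (((n:ℝ)-1-d) * (p/2-1)) * ∫⁻ x in ball c r, F x ^ p := by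
  have hγ : 0 < (n:ℝ)-1-d := by linarith [h.hdn]
  rw [measW_lint h _ _ measurableSet_ball, ← lintegral_const_mul _ (hF.pow_const p)]
  refine lintegral_mono_ae ?_
  filter_upwards [ae_restrict_of_ae (ae_notG h), ae_restrict_mem measurableSet_ball] with z hz hzB
  rw [ENNReal.mul_rpow_of_nonneg _ _ (by linarith), ← ENNReal.rpow_mul, ← mul_assoc,
    ← ENNReal.rpow_add _ _ (D_ne h z hz) (D_top h z)]
  have : -((n:ℝ)-1-d) + ((n:ℝ)-1-d)/2*p = ((n:ℝ)-1-d) * (p/2-1) := by ring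
  rw [this]
  gcongr
  · exact mul_nonneg hγ.le (by linarith)
  · exact hR z hzB

lemma Fm {n : ℕ} (κ : ℝ) (g : Euc n → ℝ≥0∞) (hg : Measurable g) (s : Set (Euc n)) :
    Measurable (fun x => ∫⁻ z in s, edist z x ^ κ * g z) := by
  have : Measurable (fun q : Euc n × Euc n => edist q.2 q.1 ^ κ * g q.2) := by
    have h1 : Measurable (fun q : Euc n × Euc n => edist q.2 q.1 ^ κ) :=
      (measurable_snd.edist measurable_fst).pow_const κ
    have h2 : Measurable (fun q : Euc n × Euc n => g q.2) := hg.comp measurable_snd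
    exact h1.mul h2
  exact this.lintegral_prod_right'

lemma sum_pow (a A B : ℝ≥0∞) (p : ℝ) (hp : 2 ≤ p) :
    (a * A + a * B) ^ p ≤ 2^(p-1) * a^p * (A^p + B^p) := by
  refine (ENNReal.rpow_add_le_mul_rpow_add_rpow _ _ (by linarith)).trans ?_
  rw [ENNReal.mul_rpow_of_nonneg _ _ (by linarith), ENNReal.mul_rpow_of_nonneg _ _ (by linarith)]
  apply le_of_eq; ring

lemma cond2 (n : ℕ) (hn : 2 ≤ n) (d p : ℝ) (hd : 0 < d) (hdn : d < (n:ℝ)-1) (hp : 2 ≤ p)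
    (hp2 : n = 2 ∨ p = 2 * (n : ℝ) / ((n : ℝ) - 2)) :
    p * (((n:ℝ)-1-((n:ℝ)-1-d)/2) - n/2) < d + 1 := by
  have e : ((n:ℝ)-1-((n:ℝ)-1-d)/2) - n/2 = (d-1)/2 := by ring
  rw [e]
  by_cases h2 : n = 2
  · subst h2; norm_num at hdn; nlinarith
  · have h3 : (3:ℝ) ≤ n := by exact_mod_cast (by omega : 3 ≤ n)
    rw [hp2.resolve_left h2, div_mul_eq_mul_div, div_lt_iff₀ (by linarith)]
    nlinarith

lemma fin_pow (a : ℝ≥0∞) (h0 : a ≠ 0) (h1 : a ≠ ⊤) (s : ℝ) : a ^ s ≠ ⊤ :=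
  ENNReal.rpow_ne_top_of_ne_zero h0 h1

lemma near_case (n : ℕ) (hn : 2 ≤ n) (d C₀ p : ℝ) (hd : 0 < d) (hdn : d < (n:ℝ)-1) (hp : 2 ≤ p)
    (hp2 : n = 2 ∨ p = 2 * (n : ℝ) / ((n : ℝ) - 2)) :
    ∃ C : ℝ≥0∞, C ≠ ⊤ ∧ ∀ Γ : Set (Euc n), GR n d C₀ Γ → ∀ f : Euc n → ℝ≥0∞, Measurable f →
      ∀ (c : Euc n) (r : ℝ), 0 < r → infEDist c Γ ≤ 2 * ENNReal.ofReal r →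
      ∫⁻ x in ball c r, (∫⁻ z in ball c r, edist z x ^ (-((n:ℝ)-1)) * f z) ^ p ∂(measW n d Γ)
      ≤ C * ENNReal.ofReal r ^ p * measW n d Γ (ball c r) ^ (1 - p/2) *
        (∫⁻ z in ball c r, f z ^ (2:ℝ) ∂(measW n d Γ)) ^ (p/2) := by
  obtain ⟨K1, hK1, H1⟩ := ker1 n hn p hp hp2
  have hn' : (2:ℝ) ≤ n := by exact_mod_cast hn
  obtain ⟨K2, hK2, H2⟩ := schur n (d+1) ((n:ℝ)-1-((n:ℝ)-1-d)/2) p hp (by linarith) (by linarith)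
    (by omega) (cond2 n hn d p hd hdn hp hp2)
  obtain ⟨M, hM, HM⟩ := measW_up n d C₀ hd hdn
  have hγ : 0 < (n:ℝ)-1-d := by linarith
  refine ⟨2^(p-1) * (2^(((n:ℝ)-1-d)/2))^p * (3 ^ (((n:ℝ)-1-d) * (p/2-1)) * K1 + K2 * M) * (M+1)^(p/2-1),
    ?_, ?_⟩
  · have a2 : ∀ s : ℝ, (2:ℝ≥0∞)^s ≠ ⊤ := fun s => fin_pow _ (by norm_num) (by norm_num) s
    have a3 : ∀ s : ℝ, (3:ℝ≥0∞)^s ≠ ⊤ := fun s => fin_pow _ (by norm_num) (by norm_num) s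
    have hM1 : (M+1)^(p/2-1) ≠ ⊤ := fin_pow _ (by simp) (ENNReal.add_ne_top.2 ⟨hM, by simp⟩) _
    refine ENNReal.mul_ne_top (ENNReal.mul_ne_top (ENNReal.mul_ne_top (a2 _) ?_) ?_) hM1
    · rw [← ENNReal.rpow_mul]; exact a2 _
    · exact ENNReal.add_ne_top.2 ⟨ENNReal.mul_ne_top (a3 _) hK1, ENNReal.mul_ne_top hK2 hM⟩
  · intro Γ h f hf c r hr hc
    have hg := gD_meas Γ ((n:ℝ)-1-d) f hf
    have hρ0 : ENNReal.ofReal r ≠ 0 := by simpa using hr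
    have hρt : ENNReal.ofReal r ≠ ⊤ := ENNReal.ofReal_ne_top
    have hG := gD_sq h f c r
    have hG' : ∫⁻ z in ball c r, gD Γ ((n:ℝ)-1-d) f z ^ 2 = ∫⁻ z in ball c r, f z ^ (2:ℝ) ∂(measW n d Γ) := by
      rw [← hG]; congr 1; ext z; exact (ENNReal.rpow_two _).symm
    have b1 := H1 _ hg c r hr
    rw [hG] at b1
    haveI := measW_sfinite h
    have b2 := H2 (measW n d Γ) M c r hr (HM Γ h) _ hg
    rw [hG'] at b2
    have hR : ∀ x ∈ ball c r, infEDist x Γ ≤ 3 * ENNReal.ofReal r := by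
      intro x hx
      calc infEDist x Γ ≤ infEDist c Γ + edist x c := infEDist_le_infEDist_add_edist
        _ ≤ 2 * ENNReal.ofReal r + ENNReal.ofReal r := by
          gcongr
          rw [edist_dist]; exact ENNReal.ofReal_le_ofReal (mem_ball.1 hx).le
        _ = _ := by ring
    have F1 := Fm (-((n:ℝ)-1)) _ hg (ball c r)
    have b3 := (term1 h p hp _ F1 c r _ hR).trans (mul_le_mul_right b1 _)
    have hmB : ENNReal.ofReal r ^ ((d+1) * (1-p/2)) ≤ (M+1)^(p/2-1) * measW n d Γ (ball c r) ^ (1-p/2) := by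
      have q1 : measW n d Γ (ball c r) ≤ (M+1) * ENNReal.ofReal r ^ (d+1) :=
        (HM Γ h c r hr).trans (by gcongr; exact le_self_add)
      have q2 := enn_rpow_anti (s := 1 - p/2) (by linarith) q1
      have hM0 : M + 1 ≠ 0 := by simp
      have hMt : M + 1 ≠ ⊤ := ENNReal.add_ne_top.2 ⟨hM, by simp⟩
      have ht : ENNReal.ofReal r ^ (d+1) ≠ ⊤ := fin_pow _ hρ0 hρt _
      rw [ENNReal.mul_rpow_of_ne_top hMt ht, ← ENNReal.rpow_mul] at q2
      calc ENNReal.ofReal r ^ ((d+1) * (1-p/2)) = (M+1)^(p/2-1) * ((M+1)^(1-p/2) * ENNReal.ofReal r ^ ((d+1) * (1-p/2))) := by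
            rw [← mul_assoc, ← ENNReal.rpow_add _ _ hM0 hMt]
            have : p/2 - 1 + (1-p/2) = 0 := by ring
            rw [this, ENNReal.rpow_zero, one_mul]
        _ ≤ _ := by gcongr
    have F2 : Measurable (fun x => (infEDist x Γ ^ (((n:ℝ)-1-d)/2) *
        ∫⁻ z in ball c r, edist z x ^ (-((n:ℝ)-1)) * gD Γ ((n:ℝ)-1-d) f z)^p) :=
      ((meas_D Γ _).mul F1).pow_const p
    have F3 : Measurable (fun x => (∫⁻ z in ball c r, edist z x ^ (-((n:ℝ)-1-((n:ℝ)-1-d)/2)) * gD Γ ((n:ℝ)-1-d) f z)^p) :=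
      (Fm _ _ hg (ball c r)).pow_const p
    generalize hGG : ∫⁻ z in ball c r, f z ^ (2:ℝ) ∂(measW n d Γ) = G at *
    have s1 : ∫⁻ x in ball c r, (∫⁻ z in ball c r, edist z x ^ (-((n:ℝ)-1)) * f z) ^ p ∂(measW n d Γ)
        ≤ 2^(p-1) * (2^(((n:ℝ)-1-d)/2))^p * (
        ∫⁻ x in ball c r, (infEDist x Γ ^ (((n:ℝ)-1-d)/2) *
        ∫⁻ z in ball c r, edist z x ^ (-((n:ℝ)-1)) * gD Γ ((n:ℝ)-1-d) f z)^p ∂(measW n d Γ) +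
        ∫⁻ x in ball c r, (∫⁻ z in ball c r, edist z x ^ (-((n:ℝ)-1-((n:ℝ)-1-d)/2)) * gD Γ ((n:ℝ)-1-d) f z)^p ∂(measW n d Γ)) := by
      have F4 : Measurable (fun x => (infEDist x Γ ^ (((n:ℝ)-1-d)/2) *
        ∫⁻ z in ball c r, edist z x ^ (-((n:ℝ)-1)) * gD Γ ((n:ℝ)-1-d) f z)^p +
        (∫⁻ z in ball c r, edist z x ^ (-((n:ℝ)-1-((n:ℝ)-1-d)/2)) * gD Γ ((n:ℝ)-1-d) f z)^p) := F2.add F3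
      rw [← lintegral_add_left F2, ← lintegral_const_mul _ F4]
      refine lintegral_mono fun x => ?_
      refine (ENNReal.rpow_le_rpow (pot_near h f hf c x r _ hγ (by linarith)) (by linarith)).trans ?_
      exact sum_pow _ _ _ p hp
    refine s1.trans ?_
    have hE : ∀ a b : ℝ, a = b → ENNReal.ofReal r ^ a = ENNReal.ofReal r ^ b := fun a b h => by rw [h]
    have t1 : (3 * ENNReal.ofReal r) ^ (((n:ℝ)-1-d) * (p/2-1)) * (K1 * ENNReal.ofReal r ^ ((n:ℝ) + p - p * n / 2) * G ^ (p/2))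
        = 3 ^ (((n:ℝ)-1-d) * (p/2-1)) * K1 * (ENNReal.ofReal r ^ p * ENNReal.ofReal r ^ ((d+1) * (1-p/2))) * G^(p/2) := by
      rw [ENNReal.mul_rpow_of_ne_top (by norm_num) hρt, ← ENNReal.rpow_add _ _ hρ0 hρt,
        hE (p + (d+1)*(1-p/2)) (((n:ℝ)-1-d) * (p/2-1) + ((n:ℝ) + p - p * n / 2)) (by ring), ENNReal.rpow_add _ _ hρ0 hρt]
      ring
    have t2 : ENNReal.ofReal r ^ (d + 1 - p * ((n:ℝ)-1-((n:ℝ)-1-d)/2) + p * n / 2) =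
        ENNReal.ofReal r ^ p * ENNReal.ofReal r ^ ((d+1) * (1-p/2)) := by
      rw [← ENNReal.rpow_add _ _ hρ0 hρt]
      apply hE; ring
    rw [t1] at b3
    rw [t2] at b2
    calc _ ≤ 2^(p-1) * (2^(((n:ℝ)-1-d)/2))^p * (
          3 ^ (((n:ℝ)-1-d) * (p/2-1)) * K1 * (ENNReal.ofReal r ^ p * ENNReal.ofReal r ^ ((d+1) * (1-p/2))) * G^(p/2)
          + K2 * M * (ENNReal.ofReal r ^ p * ENNReal.ofReal r ^ ((d+1) * (1-p/2))) * G^(p/2)) := by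
          gcongr
      _ = 2^(p-1) * (2^(((n:ℝ)-1-d)/2))^p * (3 ^ (((n:ℝ)-1-d) * (p/2-1)) * K1 + K2 * M) * ENNReal.ofReal r ^ p * G^(p/2)
          * ENNReal.ofReal r ^ ((d+1) * (1-p/2)) := by ring
      _ ≤ 2^(p-1) * (2^(((n:ℝ)-1-d)/2))^p * (3 ^ (((n:ℝ)-1-d) * (p/2-1)) * K1 + K2 * M) * ENNReal.ofReal r ^ p * G^(p/2)
          * ((M+1)^(p/2-1) * measW n d Γ (ball c r) ^ (1-p/2)) := by gcongr
      _ = _ := by ring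

lemma far_case (n : ℕ) (hn : 2 ≤ n) (d C₀ p : ℝ) (hd : 0 < d) (hdn : d < (n:ℝ)-1) (hp : 2 ≤ p)
    (hp2 : n = 2 ∨ p = 2 * (n : ℝ) / ((n : ℝ) - 2)) :
    ∃ C : ℝ≥0∞, C ≠ ⊤ ∧ ∀ Γ : Set (Euc n), GR n d C₀ Γ → ∀ f : Euc n → ℝ≥0∞, Measurable f →
      ∀ (c : Euc n) (r : ℝ), 0 < r → 2 * ENNReal.ofReal r ≤ infEDist c Γ →
      ∫⁻ x in ball c r, (∫⁻ z in ball c r, edist z x ^ (-((n:ℝ)-1)) * f z) ^ p ∂(measW n d Γ)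
      ≤ C * ENNReal.ofReal r ^ p * measW n d Γ (ball c r) ^ (1 - p/2) *
        (∫⁻ z in ball c r, f z ^ (2:ℝ) ∂(measW n d Γ)) ^ (p/2) := by
  obtain ⟨K1, hK1, H1⟩ := ker1 n hn p hp hp2
  have hn' : (2:ℝ) ≤ n := by exact_mod_cast hn
  have hγ : 0 < (n:ℝ)-1-d := by linarith
  have hV0 := VB_ne_zero n
  have hVt := VB_ne_top n
  refine ⟨(3^(((n:ℝ)-1-d)/2))^p * (3 ^ (((n:ℝ)-1-d) * (p/2-1)) * K1) * VB n ^(p/2-1),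
    ?_, ?_⟩
  · have a3 : ∀ s : ℝ, (3:ℝ≥0∞)^s ≠ ⊤ := fun s => fin_pow _ (by norm_num) (by norm_num) s
    refine ENNReal.mul_ne_top (ENNReal.mul_ne_top ?_ (ENNReal.mul_ne_top (a3 _) hK1)) (fin_pow _ hV0 hVt _)
    rw [← ENNReal.rpow_mul]; exact a3 _
  · intro Γ h f hf c r hr hc
    have hg := gD_meas Γ ((n:ℝ)-1-d) f hf
    have hρ0 : ENNReal.ofReal r ≠ 0 := by simpa using hr
    have hρt : ENNReal.ofReal r ≠ ⊤ := ENNReal.ofReal_ne_top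
    have hG := gD_sq h f c r
    have b1 := H1 _ hg c r hr
    rw [hG] at b1
    obtain ⟨E, hE⟩ : ∃ E : ℝ≥0∞, infEDist c Γ = 2 * E := ⟨infEDist c Γ / 2, by
      rw [ENNReal.mul_div_cancel (by norm_num) (by norm_num)]⟩
    have hEt : E ≠ ⊤ := by
      rintro rfl
      exact D_top h c (by rw [hE]; simp)
    have hrE : ENNReal.ofReal r ≤ E := by
      rw [hE] at hc
      exact (ENNReal.mul_le_mul_iff_right (by norm_num) (by norm_num)).1 hc
    have hE0 : E ≠ 0 := by
      rintro rfl
      exact hρ0 (le_antisymm hrE bot_le)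
    have hed : ∀ x ∈ ball c r, edist x c ≤ ENNReal.ofReal r := fun x hx => by
      rw [edist_dist]; exact ENNReal.ofReal_le_ofReal (mem_ball.1 hx).le
    have hR : ∀ x ∈ ball c r, infEDist x Γ ≤ 3 * E := by
      intro x hx
      calc infEDist x Γ ≤ infEDist c Γ + edist x c := infEDist_le_infEDist_add_edist
        _ ≤ 2 * E + E := by
          rw [hE]; gcongr; exact (hed x hx).trans hrE
        _ = _ := by ring
    have hL : ∀ x ∈ ball c r, E ≤ infEDist x Γ := by
      intro x hx
      have : 2 * E ≤ infEDist x Γ + E := by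
        rw [← hE]
        refine (infEDist_le_infEDist_add_edist (y := x)).trans ?_
        gcongr
        rw [edist_comm]; exact (hed x hx).trans hrE
      rw [two_mul] at this
      exact (ENNReal.add_le_add_iff_right hEt).1 this
    have F1 := Fm (-((n:ℝ)-1)) _ hg (ball c r)
    have b3 := (term1 h p hp _ F1 c r _ hR).trans (mul_le_mul_right b1 _)
    have hmB : E ^ (((n:ℝ)-1-d)*(p/2-1)) * ENNReal.ofReal r ^ ((n:ℝ) * (1-p/2)) ≤ VB n^(p/2-1) * measW n d Γ (ball c r) ^ (1-p/2) := by
      have q1 : measW n d Γ (ball c r) ≤ E ^ (-((n:ℝ)-1-d)) * (VB n * ENNReal.ofReal r ^ (n:ℝ)) := by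
        have := measW_lint h (fun _ => 1) (ball c r) measurableSet_ball
        rw [setLIntegral_one] at this
        rw [this, ← vol_ball n c r hr, ← setLIntegral_const]
        refine setLIntegral_mono measurable_const fun x hx => ?_
        rw [mul_one]
        exact enn_rpow_anti (by linarith) (hL x hx)
      have q2 := enn_rpow_anti (s := 1 - p/2) (by linarith) q1
      have ht : ENNReal.ofReal r ^ (n:ℝ) ≠ ⊤ := fin_pow _ hρ0 hρt _
      have ht2 : E ^ (-((n:ℝ)-1-d)) ≠ ⊤ := fin_pow _ hE0 hEt _
      rw [ENNReal.mul_rpow_of_ne_top ht2 (ENNReal.mul_ne_top hVt ht), ENNReal.mul_rpow_of_ne_top hVt ht, ← ENNReal.rpow_mul, ← ENNReal.rpow_mul] at q2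
      have ee : -((n:ℝ)-1-d) * (1-p/2) = ((n:ℝ)-1-d)*(p/2-1) := by ring
      rw [ee] at q2
      have q3 : VB n ^ (p/2-1) * VB n ^ (1-p/2) = 1 := by
        rw [← ENNReal.rpow_add _ _ hV0 hVt]
        have : p/2 - 1 + (1-p/2) = 0 := by ring
        rw [this, ENNReal.rpow_zero]
      calc _ = (VB n ^ (p/2-1) * VB n ^ (1-p/2)) * (E ^ (((n:ℝ)-1-d)*(p/2-1)) * ENNReal.ofReal r ^ ((n:ℝ) * (1-p/2))) := by
            rw [q3, one_mul]
        _ = VB n ^ (p/2-1) * (E ^ (((n:ℝ)-1-d)*(p/2-1)) * (VB n ^ (1-p/2) * ENNReal.ofReal r ^ ((n:ℝ) * (1-p/2)))) := by ring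
        _ ≤ _ := by gcongr
    have F2 : Measurable (fun x => (infEDist x Γ ^ (((n:ℝ)-1-d)/2) *
        ∫⁻ z in ball c r, edist z x ^ (-((n:ℝ)-1)) * gD Γ ((n:ℝ)-1-d) f z)^p) :=
      ((meas_D Γ _).mul F1).pow_const p
    generalize hGG : ∫⁻ z in ball c r, f z ^ (2:ℝ) ∂(measW n d Γ) = G at *
    have s1 : ∫⁻ x in ball c r, (∫⁻ z in ball c r, edist z x ^ (-((n:ℝ)-1)) * f z) ^ p ∂(measW n d Γ)
        ≤ (3^(((n:ℝ)-1-d)/2))^p * 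
        ∫⁻ x in ball c r, (infEDist x Γ ^ (((n:ℝ)-1-d)/2) *
        ∫⁻ z in ball c r, edist z x ^ (-((n:ℝ)-1)) * gD Γ ((n:ℝ)-1-d) f z)^p ∂(measW n d Γ) := by
      rw [← lintegral_const_mul _ F2]
      refine setLIntegral_mono (F2.const_mul _) fun x hx => ?_
      rw [← ENNReal.mul_rpow_of_nonneg _ _ (by linarith)]
      refine ENNReal.rpow_le_rpow (pot_far h f hf c x r _ hγ ?_) (by linarith)
      exact fun z hz => (hR z hz).trans (by gcongr; exact hL x hx)
    refine s1.trans ?_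
    have t1 : (3 * E) ^ (((n:ℝ)-1-d) * (p/2-1)) * (K1 * ENNReal.ofReal r ^ ((n:ℝ) + p - p * n / 2) * G ^ (p/2))
        = 3 ^ (((n:ℝ)-1-d) * (p/2-1)) * K1 * (ENNReal.ofReal r ^ p * (E ^ (((n:ℝ)-1-d)*(p/2-1)) * ENNReal.ofReal r ^ ((n:ℝ) * (1-p/2)))) * G^(p/2) := by
      have : (n:ℝ) + p - p * n / 2 = p + (n:ℝ) * (1-p/2) := by ring
      rw [ENNReal.mul_rpow_of_ne_top (by norm_num) hEt, this, ENNReal.rpow_add _ _ hρ0 hρt]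
      ring
    rw [t1] at b3
    calc _ ≤ (3^(((n:ℝ)-1-d)/2))^p * (3 ^ (((n:ℝ)-1-d) * (p/2-1)) * K1 * (ENNReal.ofReal r ^ p * (VB n^(p/2-1) * measW n d Γ (ball c r) ^ (1-p/2))) * G^(p/2)) := by
          refine mul_le_mul_right (b3.trans ?_) _
          gcongr
      _ = _ := by ring

lemma potmain (n : ℕ) (hn : 2 ≤ n) (d C₀ p : ℝ) (hd : 0 < d) (hdn : d < (n:ℝ)-1) (hp : 2 ≤ p)
    (hp2 : n = 2 ∨ p = 2 * (n : ℝ) / ((n : ℝ) - 2)) :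
    ∃ C : ℝ≥0∞, C ≠ ⊤ ∧ ∀ Γ : Set (Euc n), GR n d C₀ Γ → ∀ f : Euc n → ℝ≥0∞, Measurable f →
      ∀ (c : Euc n) (r : ℝ), 0 < r →
      ∫⁻ x in ball c r, (∫⁻ z in ball c r, edist z x ^ (-((n:ℝ)-1)) * f z) ^ p ∂(measW n d Γ)
      ≤ C * ENNReal.ofReal r ^ p * measW n d Γ (ball c r) ^ (1 - p/2) *
        (∫⁻ z in ball c r, f z ^ (2:ℝ) ∂(measW n d Γ)) ^ (p/2) := by
  obtain ⟨A, hA, HA⟩ := near_case n hn d C₀ p hd hdn hp hp2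
  obtain ⟨B, hB, HB⟩ := far_case n hn d C₀ p hd hdn hp hp2
  refine ⟨A + B, ENNReal.add_ne_top.2 ⟨hA, hB⟩, fun Γ h f hf c r hr => ?_⟩
  rcases le_total (infEDist c Γ) (2 * ENNReal.ofReal r) with h1 | h1
  · refine (HA Γ h f hf c r hr h1).trans ?_
    gcongr; exact le_self_add
  · refine (HB Γ h f hf c r hr h1).trans ?_
    gcongr; exact le_add_self

lemma jens {X : Type*} [MeasurableSpace X] (μ : Measure X) (p q : ℝ) (hp : 0 < p) (hpq : p ≤ q)
    (F : X → ℝ≥0∞) (hF : Measurable F) (h0 : μ univ ≠ 0) (ht : μ univ ≠ ⊤) :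
    ((∫⁻ x, F x ^ p ∂μ) / μ univ) ^ (1/p) ≤ ((∫⁻ x, F x ^ q ∂μ) / μ univ) ^ (1/q) := by
  have hq : 0 < q := by linarith
  have h := eLpNorm'_le_eLpNorm'_mul_rpow_measure_univ (μ := μ) hp hpq (f := F) hF.aestronglyMeasurable
  simp only [eLpNorm', enorm_eq_self] at h
  have dv : ∀ a b : ℝ≥0∞, a / b = a * b⁻¹ := fun a b => div_eq_mul_inv a b
  rw [dv, dv, ENNReal.mul_rpow_of_nonneg _ _ (by positivity),
    ENNReal.mul_rpow_of_nonneg _ _ (by positivity)]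
  calc _ ≤ ((∫⁻ x, F x ^ q ∂μ) ^ (1/q) * μ univ ^ (1/p - 1/q)) * (μ univ)⁻¹ ^ (1/p) := by gcongr
    _ = _ := by
      rw [mul_assoc]; congr 1
      rw [← ENNReal.rpow_neg_one, ← ENNReal.rpow_mul, ← ENNReal.rpow_mul, ← ENNReal.rpow_add _ _ h0 ht]
      congr 1; ring

lemma norm_alg (C ρ M G : ℝ≥0∞) (q : ℝ) (hq : 0 < q) (h0 : M ≠ 0) (ht : M ≠ ⊤) :
    ((C * ρ ^ q * M ^ (1 - q/2) * G ^ (q/2)) / M) ^ (1/q) = C ^ (1/q) * ρ * (G / M) ^ ((1:ℝ)/2) := by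
  have e1 : M ^ (1 - q/2) * M⁻¹ = M⁻¹ ^ (q/2) := by
    rw [← ENNReal.rpow_neg_one, ← ENNReal.rpow_mul, ← ENNReal.rpow_add _ _ h0 ht]
    congr 1; ring
  have hq1 : (0:ℝ) ≤ 1/q := by positivity
  calc _ = (C * ρ^q * (G / M) ^ (q/2))^(1/q) := by
        have dv : ∀ a b : ℝ≥0∞, a / b = a * b⁻¹ := fun a b => div_eq_mul_inv a b
        rw [dv, dv, ENNReal.mul_rpow_of_nonneg _ _ (by positivity : (0:ℝ) ≤ q/2), ← e1]
        congr 1; ring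
    _ = _ := by
        rw [ENNReal.mul_rpow_of_nonneg _ _ hq1, ENNReal.mul_rpow_of_nonneg _ _ hq1, ← ENNReal.rpow_mul,
          ← ENNReal.rpow_mul]
        have a1 : q * (1/q) = 1 := by field_simp
        have a2 : q/2 * (1/q) = 1/2 := by field_simp
        rw [a1, a2, ENNReal.rpow_one]

lemma mB_ne {n : ℕ} {d C₀ : ℝ} {Γ : Set (Euc n)} (h : GR n d C₀ Γ) (x : Euc n) (r : ℝ) (hr : 0 < r) :
    measW n d Γ (ball x r) ≠ 0 ∧ measW n d Γ (ball x r) ≠ ⊤ := by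
  constructor
  · have h1 := measW_lo h x r (infDist x Γ + r) hr le_rfl
    have hpos : 0 < infDist x Γ + r := by have := infDist_nonneg (x := x) (s := Γ); linarith
    intro h0
    rw [h0] at h1
    have h2 := le_antisymm h1 bot_le
    rcases mul_eq_zero.1 h2 with h3 | h3
    · exact (ENNReal.rpow_pos (by simpa using hpos) ENNReal.ofReal_ne_top).ne' h3
    · rcases mul_eq_zero.1 h3 with h4 | h4
      · exact VB_ne_zero n h4
      · exact (ENNReal.rpow_pos (by simpa using hr) ENNReal.ofReal_ne_top).ne' h4
  · obtain ⟨C, hC, H⟩ := measW_up n d C₀ h.hd h.hdn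
    refine ne_top_of_le_ne_top (ENNReal.mul_ne_top hC ?_) (H Γ h x r hr)
    exact ENNReal.rpow_ne_top_of_nonneg (by linarith [h.hd]) ENNReal.ofReal_ne_top

lemma poin (n : ℕ) (hn : 2 ≤ n) (d C₀ p : ℝ) (hd : 0 < d) (hdn : d < (n:ℝ)-1) (hp : 1 ≤ p)
    (hp2 : n = 2 ∨ p ≤ 2 * (n : ℝ) / ((n : ℝ) - 2)) :
    ∃ C : ℝ≥0∞, C ≠ ⊤ ∧ ∀ (Γ : Set (Euc n))
    (u : Euc n → ℝ) (v : Euc n → Euc n) (f : Euc n → ℝ≥0∞), Dat n d C₀ Γ u v f →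
    ∀ (c : Euc n) (r : ℝ), 0 < r →
      ((∫⁻ x in ball c r, ‖u x - ⨍ y in ball c r, u y‖ₑ ^ p ∂(measW n d Γ)) / measW n d Γ (ball c r)) ^ (1/p) ≤
      C * ENNReal.ofReal r * ((∫⁻ z in ball c r, f z ^ (2:ℝ) ∂(measW n d Γ)) / measW n d Γ (ball c r)) ^ ((1:ℝ)/2) := by
  obtain ⟨q, hq2, hpq, hq⟩ : ∃ q : ℝ, 2 ≤ q ∧ p ≤ q ∧ (n = 2 ∨ q = 2 * (n : ℝ) / ((n : ℝ) - 2)) := by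
    by_cases h2 : n = 2
    · exact ⟨max 2 p, le_max_left _ _, le_max_right _ _, Or.inl h2⟩
    · have h3 : (3:ℝ) ≤ n := by exact_mod_cast (by omega : 3 ≤ n)
      refine ⟨2 * (n : ℝ) / ((n : ℝ) - 2), ?_, hp2.resolve_left h2, Or.inr rfl⟩
      rw [le_div_iff₀ (by linarith)]; linarith
  obtain ⟨K, hK, HK⟩ := riesz n hn
  obtain ⟨L, hL, HL⟩ := potmain n hn d C₀ q hd hdn hq2 hq
  have hq0 : 0 < q := by linarith
  refine ⟨K * L ^ (1/q), ENNReal.mul_ne_top hK (ENNReal.rpow_ne_top_of_nonneg (by positivity) hL), ?_⟩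
  intro Γ u v f h c r hr
  obtain ⟨m0, mt⟩ := mB_ne h.gr c r hr
  have hT := Fm (-((n:ℝ)-1)) f h.fm (ball c r)
  have j := jens ((measW n d Γ).restrict (ball c r)) p q (by linarith) hpq _ hT
    (by rwa [Measure.restrict_apply_univ]) (by rwa [Measure.restrict_apply_univ])
  rw [Measure.restrict_apply_univ] at j
  have hac : (measW n d Γ).restrict (ball c r) ≪ volume.restrict (ball c r) :=
    (withDensity_absolutelyContinuous _ _).restrict _
  have hae := hac.ae_le (HK d C₀ Γ u v f h c r hr)
  have hp1 : (0:ℝ) ≤ 1/p := by positivity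
  calc _ ≤ ((∫⁻ x in ball c r, K^p * (∫⁻ z in ball c r, edist z x ^ (-((n:ℝ)-1)) * f z)^p ∂(measW n d Γ)) / measW n d Γ (ball c r)) ^ (1/p) := by
        refine ENNReal.rpow_le_rpow (ENNReal.div_le_div_right (lintegral_mono_ae ?_) _) hp1
        filter_upwards [hae] with x hx
        rw [← ENNReal.mul_rpow_of_nonneg _ _ (by linarith)]
        exact ENNReal.rpow_le_rpow hx (by linarith)
    _ = K * ((∫⁻ x in ball c r, (∫⁻ z in ball c r, edist z x ^ (-((n:ℝ)-1)) * f z)^p ∂(measW n d Γ)) / measW n d Γ (ball c r)) ^ (1/p) := by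
        rw [lintegral_const_mul _ (hT.pow_const p), mul_div_assoc, ENNReal.mul_rpow_of_nonneg _ _ hp1,
          ← ENNReal.rpow_mul]
        have : p * (1/p) = 1 := by field_simp
        rw [this, ENNReal.rpow_one]
    _ ≤ K * ((L * ENNReal.ofReal r ^ q * measW n d Γ (ball c r) ^ (1 - q/2) *
        (∫⁻ z in ball c r, f z ^ (2:ℝ) ∂(measW n d Γ)) ^ (q/2)) / measW n d Γ (ball c r)) ^ (1/q) := by
        refine mul_le_mul_right (j.trans ?_) _
        exact ENNReal.rpow_le_rpow (ENNReal.div_le_div_right (HL Γ h.gr f h.fm c r hr) _) (by positivity)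
    _ = _ := by
        rw [norm_alg _ _ _ _ q hq0 m0 mt]; ring

lemma avg_sub {n : ℕ} (u : Euc n → ℝ) (hu : LocallyIntegrable u volume) (z : Euc n) (ρ : ℝ) (hρ : 0 < ρ)
    (b : ℝ) : ‖(⨍ y in ball z ρ, u y) - b‖ₑ ≤ (volume (ball z ρ))⁻¹ * ∫⁻ y in ball z ρ, ‖u y - b‖ₑ := by
  have hui : IntegrableOn u (ball z ρ) volume :=
    (hu.integrableOn_isCompact (isCompact_closedBall z ρ)).mono_set ball_subset_closedBall
  have hV0 : volume (ball z ρ) ≠ 0 := (measure_ball_pos _ _ hρ).ne'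
  have hVt : volume (ball z ρ) ≠ ⊤ := measure_ball_lt_top.ne
  have h1 : (⨍ y in ball z ρ, u y) - b = ⨍ y in ball z ρ, (u y - b) := by
    rw [setAverage_eq, setAverage_eq, integral_sub hui (integrableOn_const hVt), smul_sub]
    congr 1
    rw [setIntegral_const, smul_smul, inv_mul_cancel₀, one_smul]
    exact (ENNReal.toReal_pos hV0 hVt).ne'
  rw [h1, setAverage_eq, enorm_smul]
  have e2 : ‖(volume.real (ball z ρ))⁻¹‖ₑ = (volume (ball z ρ))⁻¹ := by
    rw [Real.enorm_eq_ofReal (by positivity), Measure.real, ENNReal.ofReal_inv_of_pos (ENNReal.toReal_pos hV0 hVt),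
      ENNReal.ofReal_toReal hVt]
  rw [e2]
  exact mul_le_mul_right (enorm_integral_le_lintegral_enorm _) _

lemma avg_bd (n : ℕ) (hn : 2 ≤ n) : ∃ C : ℝ≥0∞, C ≠ ⊤ ∧ ∀ (f : Euc n → ℝ≥0∞), Measurable f →
    ∀ (B : Set (Euc n)) (z : Euc n) (ρ : ℝ), 0 < ρ →
    (volume (ball z ρ))⁻¹ * ∫⁻ y in ball z ρ, (∫⁻ t in B, edist t y ^ (-((n:ℝ)-1)) * f t) ≤
      C * ∫⁻ t in B, edist t z ^ (-((n:ℝ)-1)) * f t := by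
  obtain ⟨A, hA, HA⟩ := avg_kernel n hn
  have hV0 := VB_ne_zero n
  have hVt := VB_ne_top n
  refine ⟨(VB n)⁻¹ * A, ENNReal.mul_ne_top (ENNReal.inv_ne_top.2 hV0) hA, ?_⟩
  intro f hf B z ρ hρ
  have hr1 : ENNReal.ofReal ρ ^ (n:ℝ) ≠ 0 := (ENNReal.rpow_pos (by simpa using hρ) ENNReal.ofReal_ne_top).ne'
  have hr2 : ENNReal.ofReal ρ ^ (n:ℝ) ≠ ⊤ := ENNReal.rpow_ne_top_of_nonneg (by positivity) ENNReal.ofReal_ne_top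
  have hm : Measurable (fun q : Euc n × Euc n => edist q.2 q.1 ^ (-((n:ℝ)-1)) * f q.2) := by
    have h1 : Measurable (fun q : Euc n × Euc n => edist q.2 q.1 ^ (-((n:ℝ)-1))) :=
      (measurable_snd.edist measurable_fst).pow_const _
    have h2 : Measurable (fun q : Euc n × Euc n => f q.2) := hf.comp measurable_snd
    exact h1.mul h2
  have hm2 : Measurable (fun t : Euc n => edist t z ^ (-((n:ℝ)-1)) * f t) := (meas_ker' _ z).mul hf
  have hsw : ∫⁻ y in ball z ρ, (∫⁻ t in B, edist t y ^ (-((n:ℝ)-1)) * f t) =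
      ∫⁻ t in B, (∫⁻ y in ball z ρ, edist t y ^ (-((n:ℝ)-1)) * f t) :=
    lintegral_lintegral_swap hm.aemeasurable
  rw [hsw]
  have h1 : ∫⁻ t in B, (∫⁻ y in ball z ρ, edist t y ^ (-((n:ℝ)-1)) * f t) ≤
      ∫⁻ t in B, (A * ENNReal.ofReal ρ ^ (n:ℝ)) * (edist t z ^ (-((n:ℝ)-1)) * f t) := by
    refine lintegral_mono fun t => ?_
    have e : ∀ y, edist t y = edist y t := fun y => edist_comm _ _
    simp only [e]
    rw [lintegral_mul_const _ (meas_ker' _ t), ← mul_assoc]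
    exact mul_le_mul_left (HA z t ρ hρ) _
  rw [lintegral_const_mul _ hm2] at h1
  refine (mul_le_mul_right h1 _).trans (le_of_eq ?_)
  rw [vol_ball n z ρ hρ, ENNReal.mul_inv (Or.inl hV0) (Or.inl hVt)]
  calc _ = (VB n)⁻¹ * A * ((ENNReal.ofReal ρ ^ (n:ℝ))⁻¹ * ENNReal.ofReal ρ ^ (n:ℝ)) *
          ∫⁻ t in B, edist t z ^ (-((n:ℝ)-1)) * f t := by ring
    _ = _ := by rw [ENNReal.inv_mul_cancel hr1 hr2, mul_one]

lemma tr_pt (n : ℕ) (hn : 2 ≤ n) : ∃ C : ℝ≥0∞, C ≠ ⊤ ∧ ∀ (d C₀ : ℝ) (Γ : Set (Euc n))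
    (u : Euc n → ℝ) (v : Euc n → Euc n) (f : Euc n → ℝ≥0∞), Dat n d C₀ Γ u v f →
    ∀ (c : Euc n) (r : ℝ), 0 < r → ∀ z ∈ ball c r, HasTraceAt u z 0 →
      ‖⨍ y in ball c r, u y‖ₑ ≤ C * ∫⁻ t in ball c r, edist t z ^ (-((n:ℝ)-1)) * f t := by
  obtain ⟨K, hK, HK⟩ := riesz n hn
  obtain ⟨A, hA, HA⟩ := avg_bd n hn
  refine ⟨K * A, ENNReal.mul_ne_top hK hA, ?_⟩
  intro d C₀ Γ u v f h c r hr z hz ht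
  have hT := Fm (-((n:ℝ)-1)) f h.fm (ball c r)
  have hlim : Tendsto (fun ρ : ℝ => ‖(⨍ y in ball z ρ, u y) - ⨍ y in ball c r, u y‖ₑ) (𝓝[>] (0:ℝ))
      (𝓝 ‖(0:ℝ) - ⨍ y in ball c r, u y‖ₑ) := (continuous_enorm.tendsto _).comp (ht.sub_const _)
  rw [zero_sub, enorm_neg] at hlim
  refine le_of_tendsto hlim ?_
  have hpos : 0 < r - dist z c := by have := mem_ball.1 hz; linarith
  filter_upwards [Ioo_mem_nhdsGT hpos] with ρ hρ
  have hsub : ball z ρ ⊆ ball c r := ball_subset_ball' (by linarith [hρ.2])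
  refine (avg_sub u h.li z ρ hρ.1 _).trans ?_
  have h1 : ∫⁻ y in ball z ρ, ‖u y - ⨍ y in ball c r, u y‖ₑ ≤
      K * ∫⁻ y in ball z ρ, (∫⁻ t in ball c r, edist t y ^ (-((n:ℝ)-1)) * f t) := by
    rw [← lintegral_const_mul _ hT]
    exact lintegral_mono_ae (ae_restrict_of_ae_restrict_of_subset hsub (HK d C₀ Γ u v f h c r hr))
  calc _ ≤ (volume (ball z ρ))⁻¹ * (K * ∫⁻ y in ball z ρ, (∫⁻ t in ball c r, edist t y ^ (-((n:ℝ)-1)) * f t)) :=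
        mul_le_mul_right h1 _
    _ = K * ((volume (ball z ρ))⁻¹ * ∫⁻ y in ball z ρ, (∫⁻ t in ball c r, edist t y ^ (-((n:ℝ)-1)) * f t)) := by ring
    _ ≤ K * (A * ∫⁻ t in ball c r, edist t z ^ (-((n:ℝ)-1)) * f t) := mul_le_mul_right (HA f h.fm _ z ρ hρ.1) _
    _ = _ := by ring

lemma sig_int (n : ℕ) (d C₀ : ℝ) (hd : 0 < d) (hdn : d < (n:ℝ)-1) : ∃ C : ℝ≥0∞, C ≠ ⊤ ∧
    ∀ Γ : Set (Euc n), GR n d C₀ Γ → ∀ t, t ∉ Γ →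
      ∫⁻ z, edist z t ^ (-((n:ℝ)-1)) ∂(sigG n d Γ) ≤ C * infEDist t Γ ^ (-((n:ℝ)-1-d)) := by
  obtain ⟨C, hC, H⟩ := kernel_far d ((n:ℝ)-1) hd.le hdn
  refine ⟨C * AU d C₀, ENNReal.mul_ne_top hC (AU_ne_top _ _), fun Γ h t ht => ?_⟩
  have hR : 0 < infDist t Γ := (h.cl.notMem_iff_infDist_pos h.ne).1 ht
  have := H (sigG n d Γ) t (AU d C₀) (infDist t Γ) hR (fun s hs => sig_up h t s (by linarith))
  have e : (sigG n d Γ).restrict (ball t (infDist t Γ))ᶜ = sigG n d Γ := by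
    refine Measure.restrict_eq_self_of_ae_mem ?_
    filter_upwards [ae_restrict_mem h.cl.measurableSet] with z hz
    simp only [mem_compl_iff, mem_ball, not_lt]
    rw [dist_comm]; exact infDist_le_dist_of_mem hz
  rw [e] at this
  rw [D_eq h]
  convert this using 3; ring

lemma avg_zero (n : ℕ) (hn : 2 ≤ n) (d C₀ : ℝ) (hd : 0 < d) (hdn : d < (n:ℝ)-1) :
    ∃ C : ℝ≥0∞, C ≠ ⊤ ∧ ∀ (Γ : Set (Euc n))
    (u : Euc n → ℝ) (v : Euc n → Euc n) (f : Euc n → ℝ≥0∞), Dat n d C₀ Γ u v f →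
    ∀ (c : Euc n) (r : ℝ), 0 < r → c ∈ Γ →
      (∀ᵐ z ∂(μH[d].restrict (Γ ∩ ball c r)), HasTraceAt u z 0) →
      ‖⨍ y in ball c r, u y‖ₑ ≤ C * ENNReal.ofReal r *
        ((∫⁻ z in ball c r, f z ^ (2:ℝ) ∂(measW n d Γ)) / ENNReal.ofReal r ^ (d+1)) ^ ((1:ℝ)/2) := by
  obtain ⟨A, hA, HA⟩ := tr_pt n hn
  obtain ⟨S, hS, HS⟩ := sig_int n d C₀ hd hdn
  obtain ⟨M, hM, HM⟩ := measW_up n d C₀ hd hdn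
  refine ⟨ENNReal.ofReal C₀ * (A * S) * M ^ ((1:ℝ)/2), ENNReal.mul_ne_top (ENNReal.mul_ne_top ENNReal.ofReal_ne_top
    (ENNReal.mul_ne_top hA hS)) (ENNReal.rpow_ne_top_of_nonneg (by norm_num) hM), ?_⟩
  intro Γ u v f h c r hr hc htr
  have hρ0 : ENNReal.ofReal r ≠ 0 := by simpa using hr
  have hρt : ENNReal.ofReal r ≠ ⊤ := ENNReal.ofReal_ne_top
  have hC₀ : 0 < C₀ := by linarith [h.gr.hC]
  obtain ⟨m0, mt⟩ := mB_ne h.gr c r hr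
  haveI hfin : IsFiniteMeasure ((sigG n d Γ).restrict (ball c r)) := ⟨by
    rw [Measure.restrict_apply_univ]
    refine lt_of_le_of_lt (sig_up h.gr c r hr) (ENNReal.mul_lt_top (AU_ne_top _ _).lt_top ?_)
    exact (fin_pow _ hρ0 hρt _).lt_top⟩
  have hE : (sigG n d Γ).restrict (ball c r) = μH[d].restrict (Γ ∩ ball c r) := by
    rw [sigG, Measure.restrict_restrict measurableSet_ball, inter_comm]
  have htr' : ∀ᵐ z ∂((sigG n d Γ).restrict (ball c r)), HasTraceAt u z 0 := by rw [hE]; exact htr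
  have hT := Fm (-((n:ℝ)-1)) f h.fm (ball c r)
  have hm : Measurable (fun q : Euc n × Euc n => edist q.2 q.1 ^ (-((n:ℝ)-1)) * f q.2) := by
    have h1 : Measurable (fun q : Euc n × Euc n => edist q.2 q.1 ^ (-((n:ℝ)-1))) :=
      (measurable_snd.edist measurable_fst).pow_const _
    have h2 : Measurable (fun q : Euc n × Euc n => f q.2) := h.fm.comp measurable_snd
    exact h1.mul h2
  have s1 : ‖⨍ y in ball c r, u y‖ₑ * sigG n d Γ (ball c r) ≤
      A * ∫⁻ z in ball c r, (∫⁻ t in ball c r, edist t z ^ (-((n:ℝ)-1)) * f t) ∂(sigG n d Γ) := by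
    rw [← setLIntegral_const, ← lintegral_const_mul _ hT]
    refine lintegral_mono_ae ?_
    filter_upwards [htr', ae_restrict_mem measurableSet_ball] with z hz hzB
    exact HA d C₀ Γ u v f h c r hr z hzB hz
  have hsw : ∫⁻ z in ball c r, (∫⁻ t in ball c r, edist t z ^ (-((n:ℝ)-1)) * f t) ∂(sigG n d Γ) =
      ∫⁻ t in ball c r, (∫⁻ z in ball c r, edist t z ^ (-((n:ℝ)-1)) * f t ∂(sigG n d Γ)) :=
    lintegral_lintegral_swap hm.aemeasurable
  have s2 : ∫⁻ t in ball c r, (∫⁻ z in ball c r, edist t z ^ (-((n:ℝ)-1)) * f t ∂(sigG n d Γ)) ≤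
      S * ∫⁻ t in ball c r, f t ∂(measW n d Γ) := by
    have hm3 : Measurable (fun t => infEDist t Γ ^ (-((n:ℝ)-1-d)) * f t) := (meas_D Γ _).mul h.fm
    rw [measW_lint h.gr _ _ measurableSet_ball, ← lintegral_const_mul _ hm3]
    refine lintegral_mono_ae (ae_restrict_of_ae ?_)
    filter_upwards [ae_notG h.gr] with t ht
    have e : ∀ y, edist t y = edist y t := fun y => edist_comm _ _
    simp only [e]
    rw [lintegral_mul_const _ (meas_ker' _ t), ← mul_assoc]
    exact mul_le_mul_left ((setLIntegral_le_lintegral _ _).trans (HS Γ h.gr t ht)) _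
  have j := jens ((measW n d Γ).restrict (ball c r)) 1 2 one_pos (by norm_num) f h.fm
    (by rwa [Measure.restrict_apply_univ]) (by rwa [Measure.restrict_apply_univ])
  rw [Measure.restrict_apply_univ] at j
  generalize hGG : ∫⁻ z in ball c r, f z ^ (2:ℝ) ∂(measW n d Γ) = G at *
  simp only [ENNReal.rpow_one, div_one] at j
  rw [ENNReal.div_le_iff m0 mt] at j
  have hMB := HM Γ h.gr c r hr
  have dv : ∀ a b : ℝ≥0∞, a / b = a * b⁻¹ := fun a b => div_eq_mul_inv a b
  have s3 : ∫⁻ t in ball c r, f t ∂(measW n d Γ) ≤ G ^ ((1:ℝ)/2) * (M ^ ((1:ℝ)/2) * ENNReal.ofReal r ^ ((d+1)/2)) := by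
    refine j.trans ?_
    have e1 : (G / measW n d Γ (ball c r)) ^ ((1:ℝ)/2) * measW n d Γ (ball c r) = G ^ ((1:ℝ)/2) * measW n d Γ (ball c r) ^ ((1:ℝ)/2) := by
      rw [dv, ENNReal.mul_rpow_of_nonneg _ _ (by norm_num), mul_assoc]
      congr 1
      rw [← ENNReal.rpow_neg_one, ← ENNReal.rpow_mul]
      nth_rewrite 2 [← ENNReal.rpow_one (measW n d Γ (ball c r))]
      rw [← ENNReal.rpow_add _ _ m0 mt]
      norm_num
    rw [e1]
    refine mul_le_mul_right ((ENNReal.rpow_le_rpow hMB (by norm_num)).trans (le_of_eq ?_)) _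
    rw [ENNReal.mul_rpow_of_nonneg _ _ (by norm_num), ← ENNReal.rpow_mul]
    congr 2; ring
  have s4 := (mul_le_mul_right (sig_lo h.gr c hc r hr) ‖⨍ y in ball c r, u y‖ₑ).trans s1
  rw [hsw] at s4
  have s5 := s4.trans (mul_le_mul_right (s2.trans (mul_le_mul_right s3 S)) A)
  have c1 : ENNReal.ofReal C₀⁻¹ * ENNReal.ofReal C₀ = 1 := by
    rw [← ENNReal.ofReal_mul (by positivity), inv_mul_cancel₀ hC₀.ne', ENNReal.ofReal_one]
  have c2 : ENNReal.ofReal r ^ d * ENNReal.ofReal r ^ (-d) = 1 := by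
    rw [← ENNReal.rpow_add _ _ hρ0 hρt, add_neg_cancel, ENNReal.rpow_zero]
  have c3 : ENNReal.ofReal r ^ ((d+1)/2) * ENNReal.ofReal r ^ (-d) = ENNReal.ofReal r * ((ENNReal.ofReal r ^ (d+1))⁻¹) ^ ((1:ℝ)/2) := by
    rw [← ENNReal.rpow_neg_one, ← ENNReal.rpow_mul, ← ENNReal.rpow_mul]
    nth_rewrite 3 [← ENNReal.rpow_one (ENNReal.ofReal r)]
    rw [← ENNReal.rpow_add _ _ hρ0 hρt, ← ENNReal.rpow_add _ _ hρ0 hρt]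
    congr 1; ring
  calc ‖⨍ y in ball c r, u y‖ₑ = ‖⨍ y in ball c r, u y‖ₑ * (ENNReal.ofReal C₀⁻¹ * ENNReal.ofReal C₀) * (ENNReal.ofReal r ^ d * ENNReal.ofReal r ^ (-d)) := by
        rw [c1, c2, mul_one, mul_one]
    _ = (‖⨍ y in ball c r, u y‖ₑ * (ENNReal.ofReal C₀⁻¹ * ENNReal.ofReal r ^ d)) * (ENNReal.ofReal C₀ * ENNReal.ofReal r ^ (-d)) := by ring
    _ ≤ (A * (S * (G ^ ((1:ℝ)/2) * (M ^ ((1:ℝ)/2) * ENNReal.ofReal r ^ ((d+1)/2))))) * (ENNReal.ofReal C₀ * ENNReal.ofReal r ^ (-d)) :=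
        mul_le_mul_left s5 _
    _ = ENNReal.ofReal C₀ * (A * S) * M ^ ((1:ℝ)/2) * G ^ ((1:ℝ)/2) * (ENNReal.ofReal r ^ ((d+1)/2) * ENNReal.ofReal r ^ (-d)) := by ring
    _ = _ := by
        rw [c3, dv, ENNReal.mul_rpow_of_nonneg _ _ (by norm_num : (0:ℝ) ≤ 1/2)]; ring

lemma bdry (n : ℕ) (hn : 2 ≤ n) (d C₀ p : ℝ) (hd : 0 < d) (hdn : d < (n:ℝ)-1) (hp : 1 ≤ p)
    (hp2 : n = 2 ∨ p ≤ 2 * (n : ℝ) / ((n : ℝ) - 2)) :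
    ∃ C : ℝ≥0∞, C ≠ ⊤ ∧ ∀ (Γ : Set (Euc n))
    (u : Euc n → ℝ) (v : Euc n → Euc n) (f : Euc n → ℝ≥0∞), Dat n d C₀ Γ u v f →
    ∀ (c : Euc n) (r : ℝ), 0 < r → c ∈ Γ →
      (∀ᵐ z ∂(μH[d].restrict (Γ ∩ ball c r)), HasTraceAt u z 0) →
      ((∫⁻ x in ball c r, ‖u x‖ₑ ^ p ∂(measW n d Γ)) / ENNReal.ofReal r ^ (d+1)) ^ (1/p) ≤
      C * ENNReal.ofReal r * ((∫⁻ z in ball c r, f z ^ (2:ℝ) ∂(measW n d Γ)) / ENNReal.ofReal r ^ (d+1)) ^ ((1:ℝ)/2) := by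
  obtain ⟨A, hA, HA⟩ := poin n hn d C₀ p hd hdn hp hp2
  obtain ⟨B, hB, HB⟩ := avg_zero n hn d C₀ hd hdn
  obtain ⟨M, hM, HM⟩ := measW_up n d C₀ hd hdn
  have hV0 := VB_ne_zero n
  have hVt := VB_ne_top n
  refine ⟨(2^(p-1) * M)^(1/p) * (A * (VB n)⁻¹^((1:ℝ)/2) + B), ?_, ?_⟩
  · refine ENNReal.mul_ne_top (ENNReal.rpow_ne_top_of_nonneg (by positivity) (ENNReal.mul_ne_top
      (fin_pow _ (by norm_num) (by norm_num) _) hM)) (ENNReal.add_ne_top.2 ⟨ENNReal.mul_ne_top hA ?_, hB⟩)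
    exact ENNReal.rpow_ne_top_of_nonneg (by norm_num) (ENNReal.inv_ne_top.2 hV0)
  intro Γ u v f h c r hr hc htr
  have hρ0 : ENNReal.ofReal r ≠ 0 := by simpa using hr
  have hρt : ENNReal.ofReal r ≠ ⊤ := ENNReal.ofReal_ne_top
  have hρd0 : ENNReal.ofReal r ^ (d+1) ≠ 0 := (ENNReal.rpow_pos (pos_iff_ne_zero.2 hρ0) hρt).ne'
  have hρdt : ENNReal.ofReal r ^ (d+1) ≠ ⊤ := fin_pow _ hρ0 hρt _
  obtain ⟨m0, mt⟩ := mB_ne h.gr c r hr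
  have hp1 : (0:ℝ) ≤ 1/p := by positivity
  have hp0 : (0:ℝ) < p := by linarith
  have a1 := HA Γ u v f h c r hr
  have a2 := HB Γ u v f h c r hr hc htr
  have a3 := HM Γ h.gr c r hr
  have a4 : VB n * ENNReal.ofReal r ^ (d+1) ≤ measW n d Γ (ball c r) := by
    have := measW_lo h.gr c r r hr (by rw [infDist_zero_of_mem hc, zero_add])
    refine le_trans (le_of_eq ?_) this
    rw [mul_left_comm, ← ENNReal.rpow_add _ _ hρ0 hρt]
    congr 2; ring
  generalize hGG : ∫⁻ z in ball c r, f z ^ (2:ℝ) ∂(measW n d Γ) = G at *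
  have dv : ∀ a b : ℝ≥0∞, a / b = a * b⁻¹ := fun a b => div_eq_mul_inv a b
  generalize hb : (⨍ y in ball c r, u y) = b at *
  have a5 : (G / measW n d Γ (ball c r)) ^ ((1:ℝ)/2) ≤ (VB n)⁻¹^((1:ℝ)/2) * (G / ENNReal.ofReal r ^ (d+1)) ^ ((1:ℝ)/2) := by
    rw [← ENNReal.mul_rpow_of_nonneg _ _ (by norm_num)]
    refine ENNReal.rpow_le_rpow ?_ (by norm_num)
    calc _ ≤ G / (VB n * ENNReal.ofReal r ^ (d+1)) := ENNReal.div_le_div_left a4 _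
      _ = _ := by
        rw [dv, dv, ENNReal.mul_inv (Or.inl hV0) (Or.inl hVt)]; ring
  have s1 : ∫⁻ x in ball c r, ‖u x‖ₑ ^ p ∂(measW n d Γ) ≤
      2^(p-1) * ((∫⁻ x in ball c r, ‖u x - b‖ₑ ^ p ∂(measW n d Γ)) + ‖b‖ₑ^p * measW n d Γ (ball c r)) := by
    rw [← setLIntegral_const, ← lintegral_add_right _ measurable_const,
      ← lintegral_const_mul' _ _ (fin_pow _ (by norm_num) (by norm_num) _)]
    refine lintegral_mono fun x => ?_
    calc ‖u x‖ₑ ^ p ≤ (‖u x - b‖ₑ + ‖b‖ₑ)^p := by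
          refine ENNReal.rpow_le_rpow ?_ hp0.le
          calc ‖u x‖ₑ = ‖(u x - b) + b‖ₑ := by rw [sub_add_cancel]
            _ ≤ _ := enorm_add_le _ _
      _ ≤ _ := ENNReal.rpow_add_le_mul_rpow_add_rpow _ _ hp
  generalize hI : (∫⁻ x in ball c r, ‖u x - b‖ₑ ^ p ∂(measW n d Γ)) = I at *
  generalize hm : measW n d Γ (ball c r) = m at *
  have s2 : I + ‖b‖ₑ^p * m = (I / m + ‖b‖ₑ^p) * m := by
    rw [add_mul, ENNReal.div_mul_cancel m0 mt]
  have s3 : (∫⁻ x in ball c r, ‖u x‖ₑ ^ p ∂(measW n d Γ)) / ENNReal.ofReal r ^ (d+1) ≤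
      (2^(p-1) * M) * (I / m + ‖b‖ₑ^p) := by
    rw [ENNReal.div_le_iff hρd0 hρdt]
    refine s1.trans ?_
    rw [s2]
    calc _ ≤ 2^(p-1) * ((I / m + ‖b‖ₑ^p) * (M * ENNReal.ofReal r ^ (d+1))) := by gcongr
      _ = _ := by ring
  calc _ ≤ ((2^(p-1) * M) * (I / m + ‖b‖ₑ^p)) ^ (1/p) := ENNReal.rpow_le_rpow s3 hp1
    _ = (2^(p-1) * M)^(1/p) * (I / m + ‖b‖ₑ^p)^(1/p) := ENNReal.mul_rpow_of_nonneg _ _ hp1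
    _ ≤ (2^(p-1) * M)^(1/p) * ((I / m)^(1/p) + ‖b‖ₑ) := by
        refine mul_le_mul_right ?_ _
        refine (ENNReal.rpow_add_le_add_rpow _ _ hp1 ?_).trans (le_of_eq ?_)
        · rw [div_le_one hp0]; exact hp
        · rw [← ENNReal.rpow_mul]
          have : p * (1/p) = 1 := by field_simp
          rw [this, ENNReal.rpow_one]
    _ ≤ (2^(p-1) * M)^(1/p) * (A * ENNReal.ofReal r * ((VB n)⁻¹^((1:ℝ)/2) * (G / ENNReal.ofReal r ^ (d+1)) ^ ((1:ℝ)/2)) +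
        B * ENNReal.ofReal r * (G / ENNReal.ofReal r ^ (d+1)) ^ ((1:ℝ)/2)) :=
        mul_le_mul_right (add_le_add (a1.trans (mul_le_mul_right a5 _)) a2) _
    _ = _ := by ring

lemma mk_dat {n : ℕ} {d C₀ : ℝ} {Γ : Set (Euc n)} (h : GR n d C₀ Γ) (hn : 2 ≤ n) {u : Euc n → ℝ} {v : Euc n → Euc n}
    (hu : MemW n d Γ u v) (hl : LocallyIntegrable u volume) : ∃ f, Dat n d C₀ Γ u v f := by
  have h1 : AEStronglyMeasurable v (volume.restrict Γᶜ) :=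
    hu.gradLocInt.aestronglyMeasurable
  have e : (volume : Measure (Euc n)).restrict Γᶜ = volume :=
    Measure.restrict_eq_self_of_ae_mem (ae_notG h)
  rw [e] at h1
  exact ⟨h1.enorm.mk _, h, hn, hu, hl, h1.enorm.measurable_mk, h1.enorm.ae_eq_mk⟩

lemma dat_sq {n : ℕ} {d C₀ : ℝ} {Γ : Set (Euc n)} {u : Euc n → ℝ} {v : Euc n → Euc n}
    {f : Euc n → ℝ≥0∞} (h : Dat n d C₀ Γ u v f) (c : Euc n) (r : ℝ) :
    ∫⁻ y in ball c r, ENNReal.ofReal (‖v y‖ ^ 2) ∂(measW n d Γ) =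
      ∫⁻ z in ball c r, f z ^ (2:ℝ) ∂(measW n d Γ) := by
  refine lintegral_congr_ae (ae_restrict_of_ae ?_)
  have hac : measW n d Γ ≪ volume := withDensity_absolutelyContinuous _ _
  filter_upwards [hac.ae_le h.fv] with z hz
  rw [← hz, ENNReal.ofReal_pow (norm_nonneg _), ofReal_norm_eq_enorm, ENNReal.rpow_two]

lemma abs_p (a p : ℝ) (hp : 1 ≤ p) : ENNReal.ofReal (|a| ^ p) = ‖a‖ₑ ^ p := by
  rw [← ENNReal.ofReal_rpow_of_nonneg (abs_nonneg _) (by linarith), Real.enorm_eq_ofReal_abs]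

/-- Sobolev–Poincaré inequalities, interior and at the boundary. -/
theorem statement7 (n : ℕ) (hn : 2 ≤ n) (d C₀ : ℝ) (hd0 : 0 < d)
    (hdn : d < (n : ℝ) - 1) (hC₀ : 1 ≤ C₀) (p : ℝ) (hp1 : 1 ≤ p)
    (hp2 : n = 2 ∨ p ≤ 2 * (n : ℝ) / ((n : ℝ) - 2)) :
    ∃ C : ℝ, 0 < C ∧
      ∀ Γ : Set (Euc n), Γ.Nonempty → IsClosed Γ → AhlforsRegular n d C₀ Γ →
        ∀ u v, MemW n d Γ u v → LocallyIntegrable u volume →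
          ∀ x : Euc n, ∀ r : ℝ, 0 < r →
            (((∫⁻ y in ball x r,
                  ENNReal.ofReal (|u y - ⨍ z in ball x r, u z| ^ p) ∂(measW n d Γ))
                / measW n d Γ (ball x r)) ^ (1 / p)
              ≤ ENNReal.ofReal (C * r) *
                ((∫⁻ y in ball x r, ENNReal.ofReal (‖v y‖ ^ 2) ∂(measW n d Γ))
                  / measW n d Γ (ball x r)) ^ ((1 : ℝ) / 2)) ∧
            (x ∈ Γ →
              (∀ᵐ z ∂(μH[d].restrict (Γ ∩ ball x r)), HasTraceAt u z 0) →
              ((∫⁻ y in ball x r, ENNReal.ofReal (|u y| ^ p) ∂(measW n d Γ))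
                  / ENNReal.ofReal (r ^ (d + 1))) ^ (1 / p)
                ≤ ENNReal.ofReal (C * r) *
                  ((∫⁻ y in ball x r, ENNReal.ofReal (‖v y‖ ^ 2) ∂(measW n d Γ))
                    / ENNReal.ofReal (r ^ (d + 1))) ^ ((1 : ℝ) / 2)) := by
  obtain ⟨A, hA, HA⟩ := poin n hn d C₀ p hd0 hdn hp1 hp2
  obtain ⟨B, hB, HB⟩ := bdry n hn d C₀ p hd0 hdn hp1 hp2
  refine ⟨(A + B).toReal + 1, by positivity, ?_⟩
  intro Γ hne hcl hah u v hu hl x r hr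
  have h : GR n d C₀ Γ := ⟨hne, hcl, hah, hd0, hdn, hC₀⟩
  obtain ⟨f, hf⟩ := mk_dat h hn hu hl
  have hC : A + B ≤ ENNReal.ofReal ((A + B).toReal + 1) := by
    rw [ENNReal.le_ofReal_iff_toReal_le (ENNReal.add_ne_top.2 ⟨hA, hB⟩) (by positivity)]
    linarith
  have hCA : A ≤ ENNReal.ofReal ((A + B).toReal + 1) := le_self_add.trans hC
  have hCB : B ≤ ENNReal.ofReal ((A + B).toReal + 1) := le_add_self.trans hC
  rw [ENNReal.ofReal_mul (by positivity), dat_sq hf x r]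
  constructor
  · simp only [abs_p _ p hp1]
    refine (HA Γ u v f hf x r hr).trans ?_
    gcongr
  · intro hx htr
    simp only [abs_p _ p hp1]
    rw [← ENNReal.ofReal_rpow_of_pos hr]
    refine (HB Γ u v f hf x r hr hx htr).trans ?_
    gcongr
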